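/- Let d ∈ {1,2}, s ≥ 0 and μ ∈ (0,1]. There is a constant C = C(s,d), independent of μ, such that for all Schwartz functions f, g on ℝ^d, the commutator [J^s T_μ^{−1/2}(D), f] g = J^s T_μ^{−1/2}(D)(f g) − f · (J^s T_μ^{−1/2}(D) g) satisfies ‖[J^s T_μ^{−1/2}(D), f] g‖_{L^2} ≤ C ( ‖∇f‖_{L^∞} ‖J^{s−1} J_μ^{1/2} g‖_{L^2} + ‖J^s J_μ^{1/2} f‖_{L^2} ‖g‖_{L^∞} ). -/

import Mathlib

noncomputable section

open MeasureTheory SchwartzMap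
open scoped FourierTransform ENNReal

/-- The Japanese bracket `⟨x⟩ = (1 + x²)^{1/2}`. -/
def jap (x : ℝ) : ℝ := (1 + x ^ 2) ^ ((1 : ℝ) / 2)

/-- The radial symbol `T_μ(ξ) = tanh(√μ |ξ|)/(√μ |ξ|)` for `ξ ≠ 0`, with value `1` at `0`,
expressed through `r = |ξ|`. -/
def Tsymb (μ r : ℝ) : ℝ :=
  if r = 0 then 1 else Real.tanh (Real.sqrt μ * r) / (Real.sqrt μ * r)

/-- Generic Fourier multiplier `a(D) g = (a(ξ) ĝ(ξ))^∨` with real symbol `a` on `ℝ^d`. -/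
def fmulD (d : ℕ) (a : EuclideanSpace ℝ (Fin d) → ℝ) (g : EuclideanSpace ℝ (Fin d) → ℂ) :
    EuclideanSpace ℝ (Fin d) → ℂ :=
  𝓕⁻ (fun ξ => ((a ξ : ℝ) : ℂ) * 𝓕 g ξ)

/-- The operator `J^s T_μ^{−1/2}(D)`, with symbol `⟨ξ⟩^s T_μ(ξ)^{−1/2}`. -/
def JTinv (d : ℕ) (μ s : ℝ) (g : EuclideanSpace ℝ (Fin d) → ℂ) :
    EuclideanSpace ℝ (Fin d) → ℂ :=
  fmulD d (fun ξ => jap ‖ξ‖ ^ s * Tsymb μ ‖ξ‖ ^ (-(1 : ℝ) / 2)) g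

/-- The operator `J^a J_μ^b`, with symbol `⟨ξ⟩^a ⟨√μ ξ⟩^b`. -/
def JJmu (d : ℕ) (μ a b : ℝ) (g : EuclideanSpace ℝ (Fin d) → ℂ) :
    EuclideanSpace ℝ (Fin d) → ℂ :=
  fmulD d (fun ξ => jap ‖ξ‖ ^ a * jap (Real.sqrt μ * ‖ξ‖) ^ b) g

namespace CJ

section framework
variable {V : Type*} [NormedAddCommGroup V] [InnerProductSpace ℝ V] [FiniteDimensional ℝ V]
  [MeasurableSpace V] [BorelSpace V]

/-- pointwise product of Schwartz functions -/
def pm (f g : 𝓢(V, ℂ)) : 𝓢(V, ℂ) := pairing (ContinuousLinearMap.mul ℂ ℂ) f g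

@[simp] lemma pm_apply (f g : 𝓢(V, ℂ)) (x : V) : pm f g x = f x * g x := rfl

lemma pm_add_left (f g h : 𝓢(V, ℂ)) : pm (f + g) h = pm f h + pm g h := by
  ext x; simp [add_mul]
lemma pm_add_right (f g h : 𝓢(V, ℂ)) : pm f (g + h) = pm f g + pm f h := by
  ext x; simp [mul_add]
lemma pm_sub_right (f g h : 𝓢(V, ℂ)) : pm f (g - h) = pm f g - pm f h := by
  ext x; simp [mul_sub]
lemma pm_comm (f g : 𝓢(V, ℂ)) : pm f g = pm g f := by
  ext x; simp [mul_comm]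
lemma pm_assoc (f g h : 𝓢(V, ℂ)) : pm (pm f g) h = pm f (pm g h) := by
  ext x; simp [mul_assoc]
lemma pm_sum_left {ι : Type*} (s : Finset ι) (f : ι → 𝓢(V, ℂ)) (h : 𝓢(V, ℂ)) :
    pm (∑ i ∈ s, f i) h = ∑ i ∈ s, pm (f i) h := by
  ext x; simp [Finset.sum_mul, sum_apply]
lemma pm_sum_right {ι : Type*} (s : Finset ι) (f : ι → 𝓢(V, ℂ)) (h : 𝓢(V, ℂ)) :
    pm h (∑ i ∈ s, f i) = ∑ i ∈ s, pm h (f i) := by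
  ext x; simp [Finset.mul_sum, sum_apply]

/-- Fourier multiplier with Schwartz symbol -/
def op (a f : 𝓢(V, ℂ)) : 𝓢(V, ℂ) := 𝓕⁻ (pm a (𝓕 f))

lemma fourier_op (a f : 𝓢(V, ℂ)) : 𝓕 (op a f) = pm a (𝓕 f) := by
  simp [op]
lemma fourier_op_apply (a f : 𝓢(V, ℂ)) (x : V) : 𝓕 (op a f) x = a x * 𝓕 f x := by
  rw [fourier_op]; rfl

lemma fourier_inj {f g : 𝓢(V, ℂ)} (h : ∀ x, 𝓕 f x = 𝓕 g x) : f = g := by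
  have : 𝓕 f = 𝓕 g := by ext x; exact h x
  have h2 := congrArg (fun u : 𝓢(V, ℂ) => (𝓕⁻ u : 𝓢(V, ℂ))) this
  simpa using h2

lemma fourier_sum {ι : Type*} (s : Finset ι) (f : ι → 𝓢(V, ℂ)) :
    𝓕 (∑ i ∈ s, f i) = ∑ i ∈ s, 𝓕 (f i) := by
  simpa using map_sum (fourierTransformCLM ℂ (V := V) (E := ℂ)) f s
lemma fourier_add' (f g : 𝓢(V, ℂ)) : 𝓕 (f + g) = 𝓕 f + 𝓕 g := by
  simpa using map_add (fourierTransformCLM ℂ (V := V) (E := ℂ)) f g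
lemma fourier_sub' (f g : 𝓢(V, ℂ)) : 𝓕 (f - g) = 𝓕 f - 𝓕 g := by
  simpa using map_sub (fourierTransformCLM ℂ (V := V) (E := ℂ)) f g

lemma op_op (a b f : 𝓢(V, ℂ)) : op a (op b f) = op (pm a b) f := by
  apply fourier_inj; intro x; simp only [fourier_op_apply, pm_apply]; ring
lemma op_add (a f g : 𝓢(V, ℂ)) : op a (f + g) = op a f + op a g := by
  apply fourier_inj; intro x
  simp only [fourier_op_apply, fourier_add', add_apply]; ring
lemma op_sub (a f g : 𝓢(V, ℂ)) : op a (f - g) = op a f - op a g := by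
  apply fourier_inj; intro x
  simp only [fourier_op_apply, fourier_sub', sub_apply]; ring
lemma op_sum {ι : Type*} (s : Finset ι) (a : 𝓢(V, ℂ)) (f : ι → 𝓢(V, ℂ)) :
    op a (∑ i ∈ s, f i) = ∑ i ∈ s, op a (f i) := by
  apply fourier_inj; intro x
  simp only [fourier_op_apply, fourier_sum, sum_apply, Finset.mul_sum]
lemma op_add_symb (a b f : 𝓢(V, ℂ)) : op (a + b) f = op a f + op b f := by
  apply fourier_inj; intro x
  simp only [fourier_op_apply, fourier_add', add_apply]; ring
lemma op_sub_symb (a b f : 𝓢(V, ℂ)) : op (a - b) f = op a f - op b f := by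
  apply fourier_inj; intro x
  simp only [fourier_op_apply, fourier_sub', sub_apply]; ring
lemma op_sum_symb {ι : Type*} (s : Finset ι) (a : ι → 𝓢(V, ℂ)) (f : 𝓢(V, ℂ)) :
    op (∑ i ∈ s, a i) f = ∑ i ∈ s, op (a i) f := by
  apply fourier_inj; intro x
  simp only [fourier_op_apply, fourier_sum, sum_apply, Finset.sum_mul]

lemma op_eq_conv (a f : 𝓢(V, ℂ)) :
    op a f = convolution (ContinuousLinearMap.mul ℂ ℂ) (𝓕⁻ a) f := by
  apply fourier_inj; intro x
  rw [fourier_op, fourier_convolution]; simp [pm]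

/-- the convolution kernel -/
def ker (a : 𝓢(V, ℂ)) : 𝓢(V, ℂ) := 𝓕⁻ a

lemma op_apply (a f : 𝓢(V, ℂ)) (x : V) : op a f x = ∫ y, ker a y * f (x - y) := by
  rw [op_eq_conv, convolution_apply, convolution_def]; rfl

lemma op_apply_fun (a f : 𝓢(V, ℂ)) : ⇑(op a f) = 𝓕⁻ (fun ξ => a ξ * 𝓕 f ξ) := by
  rw [op, fourierInv_coe]; rfl

lemma fourier_pm (f g : 𝓢(V, ℂ)) (ζ : V) : 𝓕 (pm f g) ζ = ∫ η, 𝓕 f η * 𝓕 g (ζ - η) := by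
  have hneg : ∀ (h : 𝓢(V, ℂ)) (z : V), (𝓕⁻ h : 𝓢(V, ℂ)) z = 𝓕 h (-z) := by
    intro h z; rw [fourierInv_apply_eq]; rfl
  have h1 : op f (𝓕⁻ g) = 𝓕⁻ (pm f g) := by simp [op]
  have h2 := op_apply f (𝓕⁻ g) (-ζ)
  rw [h1, hneg, neg_neg] at h2
  rw [h2, ← integral_neg_eq_self]
  congr 1; ext η
  simp only [ker, hneg]
  congr 2 <;> abel_nf

lemma fourier_pm_zero {f g : 𝓢(V, ℂ)} {ζ : V} (h : ∀ η, 𝓕 f η ≠ 0 → 𝓕 g (ζ - η) ≠ 0 → False) :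
    𝓕 (pm f g) ζ = 0 := by
  rw [fourier_pm, ← integral_zero V ℂ]
  congr 1; ext η
  by_contra hne
  exact h η (left_ne_zero_of_mul hne) (right_ne_zero_of_mul hne)

/-- squared L2 norm -/
def n2 (f : 𝓢(V, ℂ)) : ℝ := ∫ x, ‖f x‖ ^ 2

lemma n2_nonneg (f : 𝓢(V, ℂ)) : 0 ≤ n2 f := integral_nonneg fun _ => by positivity

lemma n2_fourier (f : 𝓢(V, ℂ)) : n2 (𝓕 f) = n2 f := integral_norm_sq_fourier f

lemma integrable_sq (f : 𝓢(V, ℂ)) : Integrable (fun x => ‖f x‖ ^ 2) := by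
  have := f.memLp 2 (μ := (volume : Measure V))
  exact (memLp_two_iff_integrable_sq_norm this.1).1 this

lemma ofReal_n2 (f : 𝓢(V, ℂ)) : ENNReal.ofReal (n2 f) = ∫⁻ x, ‖f x‖ₑ ^ 2 := by
  rw [n2, ofReal_integral_eq_lintegral_ofReal (integrable_sq f) (ae_of_all _ fun _ => by positivity)]
  congr 1; ext x
  rw [ENNReal.ofReal_pow (norm_nonneg _), ofReal_norm]

/-- L¹ norm of kernel and its first moment -/
def k0 (a : 𝓢(V, ℂ)) : ℝ := ∫ y, ‖ker a y‖
def k1 (a : 𝓢(V, ℂ)) : ℝ := ∫ y, ‖y‖ * ‖ker a y‖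

lemma k0_nonneg (a : 𝓢(V, ℂ)) : 0 ≤ k0 a := integral_nonneg fun _ => by positivity
lemma k1_nonneg (a : 𝓢(V, ℂ)) : 0 ≤ k1 a := integral_nonneg fun _ => by positivity

lemma int_k0 (f : 𝓢(V, ℂ)) : Integrable (fun y => ‖f y‖) := f.integrable.norm
lemma int_k1 (f : 𝓢(V, ℂ)) : Integrable (fun y => ‖y‖ * ‖f y‖) := by
  simpa using f.integrable_pow_mul volume 1

lemma ofReal_k0 (a : 𝓢(V, ℂ)) : ENNReal.ofReal (k0 a) = ∫⁻ y, ‖ker a y‖ₑ := by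
  rw [k0, ofReal_integral_eq_lintegral_ofReal (int_k0 _) (ae_of_all _ fun _ => by positivity)]
  simp
lemma ofReal_k1 (a : 𝓢(V, ℂ)) : ENNReal.ofReal (k1 a) = ∫⁻ y, ‖y‖ₑ * ‖ker a y‖ₑ := by
  rw [k1, ofReal_integral_eq_lintegral_ofReal (int_k1 _) (ae_of_all _ fun _ => by positivity)]
  simp [ENNReal.ofReal_mul]

lemma fourier_ker (a : 𝓢(V, ℂ)) : 𝓕 (ker a) = a := by simp [ker]

lemma norm_le_k0 (a : 𝓢(V, ℂ)) (x : V) : ‖a x‖ ≤ k0 a := by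
  conv_lhs => rw [← fourier_ker a]
  rw [fourier_coe]
  exact VectorFourier.norm_fourierIntegral_le_integral_norm _ _ _ _ _

lemma n2_op_le {a : 𝓢(V, ℂ)} {M : ℝ} (h : ∀ x, ‖a x‖ ≤ M) (f : 𝓢(V, ℂ)) :
    n2 (op a f) ≤ M ^ 2 * n2 f := by
  rw [← n2_fourier, ← n2_fourier f, n2, n2, ← integral_const_mul]
  apply integral_mono (integrable_sq _) ((integrable_sq _).const_mul _)
  intro x
  simp only [fourier_op_apply, norm_mul, mul_pow]
  gcongr
  exact h x

lemma n2_pm_le {F : 𝓢(V, ℂ)} {M : ℝ} (h : ∀ x, ‖F x‖ ≤ M) (f : 𝓢(V, ℂ)) :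
    n2 (pm f F) ≤ M ^ 2 * n2 f := by
  rw [n2, n2, ← integral_const_mul]
  apply integral_mono (integrable_sq _) ((integrable_sq _).const_mul _)
  intro x
  simp only [pm_apply, norm_mul, mul_pow]
  rw [mul_comm]
  gcongr
  exact h x

lemma int_conv (k f : 𝓢(V, ℂ)) (x : V) : Integrable (fun y => k y * f (x - y)) := by
  apply k.integrable.mul_bdd (c := SchwartzMap.seminorm ℝ 0 0 f)
  · exact (f.continuous.comp (continuous_const.sub continuous_id)).aestronglyMeasurable
  · exact ae_of_all _ fun y => f.norm_le_seminorm ℝ _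

lemma op_bound {a g : 𝓢(V, ℂ)} {U : ℝ} (h : ∀ x, ‖g x‖ ≤ U) (x : V) :
    ‖op a g x‖ ≤ k0 a * U := by
  rw [op_apply, k0, ← integral_mul_const]
  refine (norm_integral_le_integral_norm _).trans ?_
  apply integral_mono (int_conv _ _ _).norm ((int_k0 _).mul_const _)
  intro y
  simp only [norm_mul]
  gcongr
  exact h _

lemma op_lip {a f : 𝓢(V, ℂ)} {L : ℝ} (h : ∀ x y, ‖f x - f y‖ ≤ L * ‖x - y‖) (x y : V) :
    ‖op a f x - op a f y‖ ≤ k0 a * L * ‖x - y‖ := by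
  rw [op_apply, op_apply, ← integral_sub (int_conv _ _ _) (int_conv _ _ _), mul_assoc, k0,
    ← integral_mul_const]
  refine (norm_integral_le_integral_norm _).trans ?_
  apply integral_mono ((int_conv _ _ _).sub (int_conv _ _ _)).norm ((int_k0 _).mul_const _)
  intro z
  have hz : (ker a) z * f (x - z) - (ker a) z * f (y - z)
      = (ker a) z * (f (x - z) - f (y - z)) := by ring
  show ‖(ker a) z * f (x - z) - (ker a) z * f (y - z)‖ ≤ ‖ker a z‖ * (L * ‖x - y‖)
  rw [hz, norm_mul]
  refine mul_le_mul_of_nonneg_left ?_ (norm_nonneg _)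
  refine (h _ _).trans (le_of_eq ?_)
  congr 2; abel

lemma cs_lintegral {k D : V → ℝ≥0∞} (hk : Measurable k) (hD : Measurable D) :
    (∫⁻ y, k y * D y) ^ 2 ≤ (∫⁻ y, k y) * ∫⁻ y, k y * D y ^ 2 := by
  have h := ENNReal.lintegral_mul_le_Lp_mul_Lq (volume.withDensity k)
    (Real.HolderConjugate.two_two) (f := fun _ => 1) (g := D) aemeasurable_const hD.aemeasurable
  simp only [Pi.mul_apply, one_mul, ENNReal.one_rpow, ENNReal.rpow_two] at h
  rw [lintegral_withDensity_eq_lintegral_mul _ hk hD,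
    lintegral_withDensity_eq_lintegral_mul _ hk measurable_const,
    lintegral_withDensity_eq_lintegral_mul _ hk (hD.pow_const 2)] at h
  simp only [Pi.mul_apply, mul_one] at h
  have h2 := pow_le_pow_left₀ (zero_le) h 2
  refine h2.trans (le_of_eq ?_)
  have key : ∀ z : ℝ≥0∞, (z ^ ((1:ℝ) / 2)) ^ 2 = z := by
    intro z
    rw [← ENNReal.rpow_natCast, ← ENNReal.rpow_mul]; norm_num
  rw [mul_pow, key, key]
  simp

lemma mink {F k : V → ℝ≥0∞} {D : V → V → ℝ≥0∞} (hk : Measurable k)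
    (hD : Measurable (Function.uncurry D)) (hF : ∀ x, F x ≤ ∫⁻ y, k y * D x y)
    {M : V → ℝ≥0∞} (hM : ∀ y, ∫⁻ x, D x y ^ 2 ≤ M y) :
    ∫⁻ x, F x ^ 2 ≤ (∫⁻ y, k y) * ∫⁻ y, k y * M y := by
  have hD1 : ∀ x, Measurable (D x) := fun x => hD.comp (measurable_const.prodMk measurable_id)
  have hD2 : ∀ y, Measurable (fun x => D x y) :=
    fun y => hD.comp (measurable_id.prodMk measurable_const)
  have hm : Measurable (Function.uncurry fun x y => k y * D x y ^ 2) :=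
    (hk.comp measurable_snd).mul (hD.pow_const 2)
  calc ∫⁻ x, F x ^ 2 ≤ ∫⁻ x, (∫⁻ y, k y) * ∫⁻ y, k y * D x y ^ 2 := by
        apply lintegral_mono; intro x
        exact (pow_le_pow_left₀ (zero_le) (hF x) 2).trans (cs_lintegral hk (hD1 x))
    _ = (∫⁻ y, k y) * ∫⁻ x, ∫⁻ y, k y * D x y ^ 2 :=
        lintegral_const_mul _ (Measurable.lintegral_prod_right hm)
    _ = (∫⁻ y, k y) * ∫⁻ y, ∫⁻ x, k y * D x y ^ 2 := by
        rw [lintegral_lintegral_swap hm.aemeasurable]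
    _ ≤ _ := by
        gcongr with y
        rw [lintegral_const_mul _ ((hD2 y).pow_const 2)]
        gcongr
        exact hM y

lemma shift_sq (g : 𝓢(V, ℂ)) (y : V) : ∫⁻ x, ‖g (x - y)‖ₑ ^ 2 = ENNReal.ofReal (n2 g) := by
  rw [ofReal_n2]
  exact lintegral_sub_right_eq_self (fun x => ‖g x‖ₑ ^ 2) y

lemma comm_bound {a F g : 𝓢(V, ℂ)} {L : ℝ} (hL : 0 ≤ L)
    (h : ∀ x y, ‖F x - F y‖ ≤ L * ‖x - y‖) :
    n2 (op a (pm F g) - pm F (op a g)) ≤ (L * k1 a) ^ 2 * n2 g := by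
  have hk1 := k1_nonneg a
  have hng := n2_nonneg g
  rw [← ENNReal.ofReal_le_ofReal_iff (by positivity), ofReal_n2]
  have hmeas : Measurable fun y : V => ‖y‖ₑ * ‖ker a y‖ₑ :=
    (measurable_enorm).mul ((ker a).continuous.measurable.enorm)
  have := mink (F := fun x => ‖(op a (pm F g) - pm F (op a g)) x‖ₑ)
    (k := fun y => ‖y‖ₑ * ‖ker a y‖ₑ) (D := fun x y => ENNReal.ofReal L * ‖g (x - y)‖ₑ)
    (M := fun _ => ENNReal.ofReal L ^ 2 * ENNReal.ofReal (n2 g)) hmeas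
    (by
      have : Continuous fun p : V × V => g (p.1 - p.2) :=
        g.continuous.comp (continuous_fst.sub continuous_snd)
      exact measurable_const.mul this.measurable.enorm)
    (by
      intro x
      simp only [sub_apply, pm_apply, op_apply]
      have hi := int_conv (ker a) (pm F g) x
      simp only [pm_apply] at hi
      rw [← integral_const_mul, ← integral_sub hi ((int_conv _ _ _).const_mul _)]
      refine (enorm_integral_le_lintegral_enorm _).trans ?_
      apply lintegral_mono; intro y
      have : ker a y * (F (x - y) * g (x - y)) - F x * (ker a y * g (x - y))
        = (F (x - y) - F x) * ker a y * g (x - y) := by ring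
      beta_reduce
      rw [this, enorm_mul, enorm_mul]
      have h3 : ‖F (x - y) - F x‖ₑ ≤ ENNReal.ofReal L * ‖y‖ₑ := by
        rw [← ofReal_norm, ← ofReal_norm, ← ENNReal.ofReal_mul hL]
        apply ENNReal.ofReal_le_ofReal
        refine (h _ _).trans (le_of_eq ?_)
        congr 1; rw [← norm_neg]; congr 1; abel
      calc _ ≤ (ENNReal.ofReal L * ‖y‖ₑ) * ‖ker a y‖ₑ * ‖g (x - y)‖ₑ := by gcongr
        _ = _ := by ring)
    (by
      intro y
      simp only [mul_pow]
      rw [lintegral_const_mul', shift_sq]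
      simp)
  refine this.trans (le_of_eq ?_)
  rw [lintegral_mul_const _ hmeas, ← ofReal_k1, ENNReal.ofReal_mul (by positivity),
    ENNReal.ofReal_pow (by positivity), ENNReal.ofReal_mul hL]
  ring

/-- square function type lemma -/
lemma n2_sum_le {ι : Type*} (s : Finset ι) (σ : ι → V → ℝ) (p : ι → 𝓢(V, ℂ)) (h : 𝓢(V, ℂ)) {M : ℝ}
    (hM : ∀ ζ, ∑ i ∈ s, σ i ζ ^ 2 ≤ M)
    (hh : ∀ ζ, ‖𝓕 h ζ‖ ≤ ∑ i ∈ s, σ i ζ * ‖𝓕 (p i) ζ‖) :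
    n2 h ≤ M * ∑ i ∈ s, n2 (p i) := by
  have : ∑ i ∈ s, n2 (p i) = ∫ ζ, ∑ i ∈ s, ‖𝓕 (p i) ζ‖ ^ 2 := by
    rw [integral_finsetSum _ fun i _ => integrable_sq _]
    apply Finset.sum_congr rfl; intro i _; rw [← n2_fourier]; rfl
  rw [this, ← n2_fourier, n2, ← integral_const_mul]
  apply integral_mono (integrable_sq _)
    ((integrable_finsetSum _ fun i _ => integrable_sq _).const_mul _)
  intro ζ
  simp only
  calc ‖𝓕 h ζ‖ ^ 2 ≤ (∑ i ∈ s, σ i ζ * ‖𝓕 (p i) ζ‖) ^ 2 := by gcongr; exact hh ζ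
    _ ≤ (∑ i ∈ s, σ i ζ ^ 2) * ∑ i ∈ s, ‖𝓕 (p i) ζ‖ ^ 2 := Finset.sum_mul_sq_le_sq_mul_sq _ _ _
    _ ≤ _ := by gcongr; exact hM ζ

lemma n2_add_le (f g : 𝓢(V, ℂ)) : n2 (f + g) ≤ 2 * n2 f + 2 * n2 g := by
  rw [n2, n2, n2, ← integral_const_mul, ← integral_const_mul,
    ← integral_add ((integrable_sq _).const_mul _) ((integrable_sq _).const_mul _)]
  apply integral_mono (integrable_sq _)
    (((integrable_sq _).const_mul _).add ((integrable_sq _).const_mul _))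
  intro x
  have := norm_add_le (f x) (g x)
  simp only [add_apply, Pi.add_apply]
  nlinarith [norm_nonneg (f x + g x), sq_nonneg (‖f x‖ - ‖g x‖)]

lemma n2_neg (f : 𝓢(V, ℂ)) : n2 (-f) = n2 f := by simp [n2]

lemma n2_sub_le (f g : 𝓢(V, ℂ)) : n2 (f - g) ≤ 2 * n2 f + 2 * n2 g := by
  rw [sub_eq_add_neg, ← n2_neg g]; exact n2_add_le _ _

lemma n2_sum_le_card {ι : Type*} (s : Finset ι) (p : ι → 𝓢(V, ℂ)) :
    n2 (∑ i ∈ s, p i) ≤ s.card * ∑ i ∈ s, n2 (p i) := by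
  apply n2_sum_le s (fun _ _ => 1) p
  · intro ζ; simp
  · intro ζ
    rw [fourier_sum, sum_apply]
    simpa using norm_sum_le _ _

end framework
end CJ

namespace CJ

section kernels
variable {V : Type*} [NormedAddCommGroup V] [InnerProductSpace ℝ V] [FiniteDimensional ℝ V]
  [MeasurableSpace V] [BorelSpace V]

lemma ker_pm (a b : 𝓢(V, ℂ)) : ker (pm a b) = op a (ker b) := by
  simp [ker, op]

lemma ker_add (a b : 𝓢(V, ℂ)) : ker (a + b) = ker a + ker b := by
  apply fourier_inj; intro x; simp [ker, fourier_add']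
lemma ker_sub (a b : 𝓢(V, ℂ)) : ker (a - b) = ker a - ker b := by
  apply fourier_inj; intro x; simp [ker, fourier_sub']
lemma ker_smul (c : ℂ) (b : 𝓢(V, ℂ)) : ker (c • b) = c • ker b := by
  apply fourier_inj; intro x
  have := map_smul (fourierTransformCLM ℂ (V := V) (E := ℂ)) c (ker b)
  simp only [fourierTransformCLM_apply] at this
  rw [this, fourier_ker, fourier_ker]

lemma k0_add (a b : 𝓢(V, ℂ)) : k0 (a + b) ≤ k0 a + k0 b := by
  rw [k0, k0, k0, ← integral_add (int_k0 _) (int_k0 _), ker_add]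
  exact integral_mono (int_k0 _) ((int_k0 _).add (int_k0 _)) fun y => norm_add_le _ _
lemma k0_sub (a b : 𝓢(V, ℂ)) : k0 (a - b) ≤ k0 a + k0 b := by
  rw [k0, k0, k0, ← integral_add (int_k0 _) (int_k0 _), ker_sub]
  exact integral_mono (int_k0 _) ((int_k0 _).add (int_k0 _)) fun y => norm_sub_le _ _
lemma k1_add (a b : 𝓢(V, ℂ)) : k1 (a + b) ≤ k1 a + k1 b := by
  rw [k1, k1, k1, ← integral_add (int_k1 _) (int_k1 _), ker_add]
  refine integral_mono (int_k1 _) ((int_k1 _).add (int_k1 _)) fun y => ?_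
  simp only [Pi.add_apply, ← mul_add, add_apply]
  gcongr
  exact norm_add_le _ _
lemma k1_sub (a b : 𝓢(V, ℂ)) : k1 (a - b) ≤ k1 a + k1 b := by
  rw [k1, k1, k1, ← integral_add (int_k1 _) (int_k1 _), ker_sub]
  refine integral_mono (int_k1 _) ((int_k1 _).add (int_k1 _)) fun y => ?_
  simp only [Pi.add_apply, ← mul_add, sub_apply]
  gcongr
  exact norm_sub_le _ _
lemma k0_smul (c : ℂ) (b : 𝓢(V, ℂ)) : k0 (c • b) = ‖c‖ * k0 b := by
  rw [k0, k0, ker_smul, ← integral_const_mul]; simp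
lemma k1_smul (c : ℂ) (b : 𝓢(V, ℂ)) : k1 (c • b) = ‖c‖ * k1 b := by
  rw [k1, k1, ker_smul, ← integral_const_mul]; simp; congr 1; ext y; ring
lemma k0_zero : k0 (0 : 𝓢(V, ℂ)) = 0 := by
  simpa using k0_smul 0 (0 : 𝓢(V, ℂ))
lemma k1_zero : k1 (0 : 𝓢(V, ℂ)) = 0 := by
  simpa using k1_smul 0 (0 : 𝓢(V, ℂ))
lemma k0_sum {ι : Type*} (s : Finset ι) (a : ι → 𝓢(V, ℂ)) :
    k0 (∑ i ∈ s, a i) ≤ ∑ i ∈ s, k0 (a i) :=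
  Finset.le_sum_of_subadditive k0 k0_zero.le k0_add s a
lemma k1_sum {ι : Type*} (s : Finset ι) (a : ι → 𝓢(V, ℂ)) :
    k1 (∑ i ∈ s, a i) ≤ ∑ i ∈ s, k1 (a i) :=
  Finset.le_sum_of_subadditive k1 k1_zero.le k1_add s a

lemma lint_conv (w : V → ℝ≥0∞) (hw : Measurable w) (p q : V → ℝ≥0∞) (hp : Measurable p)
    (hq : Measurable q) (hsub : ∀ x y, w x ≤ w y + w (x - y)) :
    ∫⁻ x, w x * ∫⁻ y, p y * q (x - y) ≤
      (∫⁻ y, w y * p y) * (∫⁻ y, q y) + (∫⁻ y, p y) * ∫⁻ y, w y * q y := by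
  have m1 : Measurable (Function.uncurry fun x y : V => w x * (p y * q (x - y))) := by
    apply (hw.comp measurable_fst).mul
    exact (hp.comp measurable_snd).mul (hq.comp (measurable_fst.sub measurable_snd))
  calc ∫⁻ x, w x * ∫⁻ y, p y * q (x - y) = ∫⁻ x, ∫⁻ y, w x * (p y * q (x - y)) := by
        congr 1; ext x
        rw [lintegral_const_mul]
        exact hp.mul (hq.comp (measurable_const.sub measurable_id))
    _ = ∫⁻ y, ∫⁻ x, w x * (p y * q (x - y)) := lintegral_lintegral_swap m1.aemeasurable
    _ ≤ ∫⁻ y, ∫⁻ x, ((w y * p y) * q (x - y) + p y * (w (x - y) * q (x - y))) := by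
        gcongr with y x
        calc w x * (p y * q (x - y)) ≤ (w y + w (x - y)) * (p y * q (x - y)) := by
              gcongr; exact hsub x y
          _ = _ := by ring
    _ = ∫⁻ y, ((w y * p y) * (∫⁻ z, q z) + p y * ∫⁻ z, w z * q z) := by
        congr 1; ext y
        have hq' : Measurable fun x => q (x - y) := hq.comp (measurable_id.sub_const y)
        have hw' : Measurable fun x => w (x - y) := hw.comp (measurable_id.sub_const y)
        have hwq : Measurable fun x => w (x - y) * q (x - y) := hw'.mul hq'
        rw [lintegral_add_left (hq'.const_mul _), lintegral_const_mul _ hq',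
          lintegral_const_mul _ hwq, lintegral_sub_right_eq_self q y,
          lintegral_sub_right_eq_self (fun x => w x * q x) y]
    _ = _ := by
        have hwp : Measurable fun x => w x * p x := hw.mul hp
        rw [lintegral_add_left (hwp.mul_const _), lintegral_mul_const _ hwp,
          lintegral_mul_const _ hp]

lemma enorm_op_le (a f : 𝓢(V, ℂ)) (x : V) :
    ‖op a f x‖ₑ ≤ ∫⁻ y, ‖ker a y‖ₑ * ‖f (x - y)‖ₑ := by
  rw [op_apply]
  refine (enorm_integral_le_lintegral_enorm _).trans (le_of_eq ?_)
  simp only [enorm_mul]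

lemma k1_pm (a b : 𝓢(V, ℂ)) : k1 (pm a b) ≤ k1 a * k0 b + k0 a * k1 b := by
  have ha0 := k0_nonneg a
  have hb0 := k0_nonneg b
  have ha1 := k1_nonneg a
  have hb1 := k1_nonneg b
  rw [← ENNReal.ofReal_le_ofReal_iff (by positivity), ofReal_k1,
    ENNReal.ofReal_add (by positivity) (by positivity), ENNReal.ofReal_mul ha1,
    ENNReal.ofReal_mul ha0, ofReal_k0, ofReal_k0, ofReal_k1, ofReal_k1, ker_pm]
  refine le_trans ?_ (lint_conv (fun y => ‖y‖ₑ) measurable_enorm (fun y => ‖ker a y‖ₑ)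
    (fun y => ‖ker b y‖ₑ) (ker a).continuous.measurable.enorm (ker b).continuous.measurable.enorm
    (fun x y => ?_))
  · gcongr with x
    exact enorm_op_le _ _ _
  · calc ‖x‖ₑ = ‖y + (x - y)‖ₑ := by congr 1; abel
      _ ≤ _ := enorm_add_le _ _

lemma k0_pm (a b : 𝓢(V, ℂ)) : k0 (pm a b) ≤ k0 a * k0 b := by
  rw [k0, ker_pm, ← ENNReal.ofReal_le_ofReal_iff (mul_nonneg (k0_nonneg _) (k0_nonneg _)),
    ENNReal.ofReal_mul (k0_nonneg _), ofReal_k0, ofReal_k0,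
    ofReal_integral_eq_lintegral_ofReal (int_k0 _) (ae_of_all _ fun _ => by positivity)]
  simp only [ofReal_norm]
  have m1 : Measurable (Function.uncurry fun x y : V => ‖ker a y‖ₑ * ‖ker b (x - y)‖ₑ) :=
    ((ker a).continuous.measurable.enorm.comp measurable_snd).mul
      ((ker b).continuous.measurable.enorm.comp (measurable_fst.sub measurable_snd))
  calc ∫⁻ x, ‖op a (ker b) x‖ₑ ≤ ∫⁻ x, ∫⁻ y, ‖ker a y‖ₑ * ‖ker b (x - y)‖ₑ := by
        gcongr with x; exact enorm_op_le _ _ _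
    _ = ∫⁻ y, ∫⁻ x, ‖ker a y‖ₑ * ‖ker b (x - y)‖ₑ := lintegral_lintegral_swap m1.aemeasurable
    _ = ∫⁻ y, ‖ker a y‖ₑ * ∫⁻ x, ‖ker b x‖ₑ := by
        congr 1; ext y
        rw [lintegral_const_mul' _ _ (by simp), lintegral_sub_right_eq_self (fun x => ‖ker b x‖ₑ) y]
    _ = _ := lintegral_mul_const _ (ker a).continuous.measurable.enorm

/-- dilation `a(t ·)` -/
def dil (t : ℝˣ) (a : 𝓢(V, ℂ)) : 𝓢(V, ℂ) :=
  compCLMOfContinuousLinearEquiv ℂ (ContinuousLinearEquiv.smulLeft (R₁ := ℝ) (M₁ := V) t) a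

lemma dil_apply (t : ℝˣ) (a : 𝓢(V, ℂ)) (x : V) : dil t a x = a ((t : ℝ) • x) := rfl

lemma ker_dil (t : ℝˣ) (a : 𝓢(V, ℂ)) (x : V) :
    ker (dil t a) x = |((t : ℝ) ^ Module.finrank ℝ V)⁻¹| • ker a ((t : ℝ)⁻¹ • x) := by
  have ht : (t : ℝ) ≠ 0 := t.ne_zero
  rw [ker, ker, fourierInv_coe, fourierInv_coe, Real.fourierInv_eq', Real.fourierInv_eq',
    ← Measure.integral_comp_smul]
  congr 1; ext v
  simp only [dil_apply, inner_smul_left, inner_smul_right]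
  congr 5
  simp [ht]

lemma k0_dil (t : ℝˣ) (a : 𝓢(V, ℂ)) : k0 (dil t a) = k0 a := by
  have ht : (t : ℝ) ≠ 0 := t.ne_zero
  rw [k0, k0]
  simp only [ker_dil, norm_smul]
  rw [integral_const_mul, Measure.integral_comp_smul (μ := volume) (fun x => ‖ker a x‖)]
  simp only [norm_abs_eq_norm, Real.norm_eq_abs, smul_eq_mul, ← mul_assoc, ← abs_mul]
  rw [← mul_inv, ← mul_pow]; simp [ht]

lemma k1_dil (t : ℝˣ) (a : 𝓢(V, ℂ)) : k1 (dil t a) = |(t : ℝ)| * k1 a := by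
  have ht : (t : ℝ) ≠ 0 := t.ne_zero
  rw [k1, k1]
  have h : ∀ y : V, ‖y‖ * ‖ker (dil t a) y‖ = (|(t : ℝ)| * |((t : ℝ) ^ Module.finrank ℝ V)⁻¹|) *
      (fun x => ‖x‖ * ‖ker a x‖) ((t : ℝ)⁻¹ • y) := by
    intro y
    simp only [ker_dil, norm_smul, norm_abs_eq_norm, Real.norm_eq_abs, norm_inv]
    have : |(t : ℝ)| ≠ 0 := by simpa
    rw [abs_inv]
    field_simp
  simp only [h]
  rw [integral_const_mul, Measure.integral_comp_smul (μ := volume) (fun x => ‖x‖ * ‖ker a x‖)]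
  simp only [smul_eq_mul, ← mul_assoc]
  congr 1
  rw [mul_assoc, ← abs_mul, ← mul_inv, ← mul_pow]; simp [ht]

/-- half derivative energy -/
def Y (v : 𝓢(V, ℂ)) : ℝ := ∫ ξ, ‖ξ‖ * ‖𝓕 v ξ‖ ^ 2

lemma int_Y (v : 𝓢(V, ℂ)) : Integrable (fun ξ => ‖ξ‖ * ‖𝓕 v ξ‖ ^ 2) := by
  have h : Integrable (fun ξ => (‖ξ‖ * ‖𝓕 v ξ‖) * ‖𝓕 v ξ‖) := by
    apply (int_k1 (𝓕 v)).mul_bdd (c := SchwartzMap.seminorm ℝ 0 0 (𝓕 v))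
    · exact (𝓕 v).continuous.norm.aestronglyMeasurable
    · refine ae_of_all _ fun y => ?_
      rw [norm_norm]; exact (𝓕 v).norm_le_seminorm ℝ _
  convert h using 2; ring

lemma Y_nonneg (v : 𝓢(V, ℂ)) : 0 ≤ Y v := integral_nonneg fun _ => by positivity

lemma fourier_shift (v : 𝓢(V, ℂ)) (y ξ : V) :
    𝓕 (v.compSubConstCLM ℂ y) ξ = Complex.exp (Complex.I * (-(2 * Real.pi * inner ℝ y ξ) : ℝ)) * 𝓕 v ξ := by
  have h := VectorFourier.fourierIntegral_comp_add_right Real.fourierChar volume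
    (innerₗ V) (⇑v) (-y)
  have h2 := congrFun h ξ
  have e1 : (⇑v ∘ fun x => x + -y) = ⇑(v.compSubConstCLM ℂ y) := by
    ext x; simp [sub_eq_add_neg]
  rw [e1] at h2
  rw [fourier_coe, fourier_coe]
  refine h2.trans ?_
  rw [Circle.smul_def, Real.fourierChar_apply, smul_eq_mul]
  congr 2
  simp; ring

lemma shift_diff (v : 𝓢(V, ℂ)) (y : V) :
    ∫⁻ x, ‖v x - v (x - y)‖ₑ ^ 2 ≤ ‖y‖ₑ * ENNReal.ofReal (4 * Real.pi * Y v) := by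
  have hY := Y_nonneg v
  have h1 : ∫⁻ x, ‖v x - v (x - y)‖ₑ ^ 2 = ENNReal.ofReal (n2 (v - v.compSubConstCLM ℂ y)) := by
    rw [ofReal_n2]; rfl
  rw [h1, ← ofReal_norm, ← ENNReal.ofReal_mul (norm_nonneg _)]
  apply ENNReal.ofReal_le_ofReal
  rw [← n2_fourier, n2, Y, ← integral_const_mul, ← integral_const_mul]
  apply integral_mono (integrable_sq _) (((int_Y v).const_mul _).const_mul _)
  intro ξ
  simp only [fourier_sub', sub_apply, fourier_shift]
  set θ : ℝ := -(2 * Real.pi * inner ℝ y ξ)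
  have e : 𝓕 v ξ - Complex.exp (Complex.I * (θ : ℝ)) * 𝓕 v ξ
      = -(Complex.exp (Complex.I * (θ : ℝ)) - 1) * 𝓕 v ξ := by ring
  rw [e, norm_mul, norm_neg, mul_pow]
  have b1 : ‖Complex.exp (Complex.I * (θ : ℝ)) - 1‖ ≤ |θ| := Real.norm_exp_I_mul_ofReal_sub_one_le
  have b2 : ‖Complex.exp (Complex.I * (θ : ℝ)) - 1‖ ≤ 2 := by
    refine (norm_sub_le _ _).trans ?_
    rw [mul_comm, Complex.norm_exp_ofReal_mul_I]; norm_num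
  have b3 : |θ| ≤ 2 * Real.pi * (‖y‖ * ‖ξ‖) := by
    simp only [θ, abs_neg, abs_mul, abs_two, abs_of_pos Real.pi_pos]
    gcongr
    exact abs_real_inner_le_norm y ξ
  have b4 : ‖Complex.exp (Complex.I * (θ : ℝ)) - 1‖ ^ 2 ≤ 4 * Real.pi * (‖y‖ * ‖ξ‖) := by
    rw [sq]
    calc _ ≤ |θ| * 2 := by gcongr
      _ ≤ _ := by linarith
  calc _ ≤ 4 * Real.pi * (‖y‖ * ‖ξ‖) * ‖𝓕 v ξ‖ ^ 2 := by gcongr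
    _ = _ := by ring

lemma enn_add_sq (a b : ℝ≥0∞) : (a + b) ^ 2 ≤ 2 * a ^ 2 + 2 * b ^ 2 := by
  induction a with
  | top => simp
  | coe a =>
    induction b with
    | top => simp
    | coe b =>
      norm_cast
      have := add_sq_le (a := (a : ℝ)) (b := b)
      have h : ((a : ℝ) + b) ^ 2 ≤ 2 * a ^ 2 + 2 * b ^ 2 := by linarith
      exact_mod_cast h

lemma transfer {K q v : 𝓢(V, ℂ)} {Q : ℝ} (hQ : ∀ x, ‖q x‖ ≤ Q) :
    n2 (pm (op K q) v) ≤ 2 * k0 K ^ 2 * n2 (pm q v) + 8 * Real.pi * Q ^ 2 * k0 K * k1 K * Y v := by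
  have hQ0 : 0 ≤ Q := (norm_nonneg _).trans (hQ 0)
  have hY := Y_nonneg v
  have h0 := k0_nonneg K
  have h1 := k1_nonneg K
  have hn := n2_nonneg (pm q v)
  have hpi := Real.pi_pos
  rw [← ENNReal.ofReal_le_ofReal_iff (by positivity), ofReal_n2]
  have c1 : Continuous fun p : V × V => pm q v (p.1 - p.2) :=
        (pm q v).continuous.comp (continuous_fst.sub continuous_snd)
  have c2 : Continuous fun p : V × V => v p.1 - v (p.1 - p.2) :=
        (v.continuous.comp continuous_fst).sub (v.continuous.comp (continuous_fst.sub continuous_snd))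
  have hkm : Measurable fun y : V => ‖ker K y‖ₑ := (ker K).continuous.measurable.enorm
  have := mink (F := fun x => ‖pm (op K q) v x‖ₑ)
    (k := fun y => ‖ker K y‖ₑ)
    (D := fun x y => ‖pm q v (x - y)‖ₑ + ENNReal.ofReal Q * ‖v x - v (x - y)‖ₑ)
    (M := fun y => 2 * ENNReal.ofReal (n2 (pm q v)) +
      2 * ENNReal.ofReal Q ^ 2 * (‖y‖ₑ * ENNReal.ofReal (4 * Real.pi * Y v))) hkm
    (by exact c1.measurable.enorm.add (measurable_const.mul c2.measurable.enorm))
    (by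
      intro x
      rw [pm_apply, op_apply, ← integral_mul_const]
      refine (enorm_integral_le_lintegral_enorm _).trans ?_
      gcongr with y
      rw [mul_assoc, enorm_mul]
      gcongr
      have e : q (x - y) * v x = pm q v (x - y) + q (x - y) * (v x - v (x - y)) := by
        simp; ring
      rw [e]
      refine (enorm_add_le _ _).trans ?_
      rw [enorm_mul]
      gcongr
      rw [← ofReal_norm]
      exact ENNReal.ofReal_le_ofReal (hQ _))
    (by
      intro y
      have cx1 : Continuous fun x : V => pm q v (x - y) := by fun_prop
      have cx2 : Continuous fun x : V => v x - v (x - y) := by fun_prop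
      calc _ ≤ ∫⁻ x, (2 * ‖pm q v (x - y)‖ₑ ^ 2 + 2 * ENNReal.ofReal Q ^ 2 * ‖v x - v (x - y)‖ₑ ^ 2) := by
            gcongr with x
            refine (enn_add_sq _ _).trans (le_of_eq ?_)
            ring
        _ = 2 * (∫⁻ x, ‖pm q v (x - y)‖ₑ ^ 2) + 2 * ENNReal.ofReal Q ^ 2 * ∫⁻ x, ‖v x - v (x - y)‖ₑ ^ 2 := by
            rw [lintegral_add_left ((cx1.measurable.enorm.pow_const 2).const_mul _),
              lintegral_const_mul _ (cx1.measurable.enorm.pow_const 2),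
              lintegral_const_mul _ (cx2.measurable.enorm.pow_const 2)]
        _ ≤ _ := by
            rw [shift_sq]
            gcongr
            exact shift_diff v y)
  refine this.trans (le_of_eq ?_)
  have e : ∀ y : V, ‖ker K y‖ₑ * (2 * ENNReal.ofReal (n2 (pm q v)) +
      2 * ENNReal.ofReal Q ^ 2 * (‖y‖ₑ * ENNReal.ofReal (4 * Real.pi * Y v)))
     = ‖ker K y‖ₑ * (2 * ENNReal.ofReal (n2 (pm q v))) + (‖y‖ₑ * ‖ker K y‖ₑ) *
      (2 * ENNReal.ofReal Q ^ 2 * ENNReal.ofReal (4 * Real.pi * Y v)) := by intro y; ring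
  simp only [e]
  have hkm1 : Measurable fun y : V => ‖y‖ₑ * ‖ker K y‖ₑ := measurable_enorm.mul hkm
  rw [lintegral_add_left (hkm.mul_const _), lintegral_mul_const _ hkm,
    lintegral_mul_const _ hkm1, ← ofReal_k0, ← ofReal_k1]
  rw [show (2 : ℝ≥0∞) = ENNReal.ofReal 2 by simp, ← ENNReal.ofReal_pow hQ0,
    ← ENNReal.ofReal_mul (by positivity), ← ENNReal.ofReal_mul (by positivity),
    ← ENNReal.ofReal_mul (by positivity), ← ENNReal.ofReal_mul (by positivity),
    ← ENNReal.ofReal_mul (by positivity),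
    ← ENNReal.ofReal_add (by positivity) (by positivity), ← ENNReal.ofReal_mul (by positivity)]
  congr 1; ring
end kernels
end CJ

namespace CJ

section gaussian
variable {V : Type*} [NormedAddCommGroup V] [InnerProductSpace ℝ V]

lemma gauss_decay {c : ℝ} (hc : 0 < c) (m : ℕ) {r : ℝ} (hr : 0 ≤ r) :
    (1 + r) ^ m * Real.exp (-c * r ^ 2) ≤ (2 / c) ^ m * m.factorial * Real.exp c := by
  have h1 : (1 + r) ^ m ≤ (2 / c) ^ m * (c + c * r ^ 2) ^ m := by
    rw [← mul_pow]
    apply pow_le_pow_left₀ (by positivity)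
    have : 2 / c * (c + c * r ^ 2) = 2 * (1 + r ^ 2) := by field_simp
    rw [this]; nlinarith [sq_nonneg (r - 1)]
  have h2 : (c + c * r ^ 2) ^ m ≤ m.factorial * Real.exp (c + c * r ^ 2) := by
    have := Real.pow_div_factorial_le_exp (c + c * r ^ 2) (by positivity) m
    rwa [div_le_iff₀' (by positivity)] at this
  calc (1 + r) ^ m * Real.exp (-c * r ^ 2)
      ≤ (2 / c) ^ m * (m.factorial * Real.exp (c + c * r ^ 2)) * Real.exp (-c * r ^ 2) := by
        gcongr
        exact h1.trans (by gcongr)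
    _ = (2 / c) ^ m * m.factorial * (Real.exp (c + c * r ^ 2) * Real.exp (-c * r ^ 2)) := by ring
    _ = _ := by rw [← Real.exp_add]; congr 2; ring

/-- real Gaussian as a Schwartz function -/
def gsR (c : ℝ) (hc : 0 < c) : 𝓢(V, ℝ) where
  toFun x := Real.exp (-c * ‖x‖ ^ 2)
  smooth' := by
    apply Real.contDiff_exp.comp
    exact contDiff_const.mul (contDiff_norm_sq ℝ)
  decay' := by
    intro k n
    have hT : (fun x : V => -c * ‖x‖ ^ 2).HasTemperateGrowth :=
      (Function.HasTemperateGrowth.const (-c)).mul (Function.hasTemperateGrowth_norm_sq V)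
    obtain ⟨m, C, hC, hb⟩ := hT.norm_iteratedFDeriv_le_uniform n
    set C' := max C 1
    refine ⟨n.factorial * C' ^ n * ((2 / c) ^ (k + m * n) * (k + m * n).factorial * Real.exp c), ?_⟩
    intro x
    have h := norm_iteratedFDeriv_comp_le (𝕜 := ℝ) (g := Real.exp) (f := fun x : V => -c * ‖x‖ ^ 2)
      (n := n) (N := ⊤) Real.contDiff_exp (contDiff_const.mul (contDiff_norm_sq ℝ))
      (by exact_mod_cast le_top) x
      (C := Real.exp (-c * ‖x‖ ^ 2)) (D := C' * (1 + ‖x‖) ^ m)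
      (by
        intro i _
        rw [norm_iteratedFDeriv_eq_norm_iteratedDeriv]
        have := congrFun (iteratedDeriv_exp_const_mul i 1) (-c * ‖x‖ ^ 2)
        simp only [one_mul, one_pow] at this
        rw [this]; simp)
      (by
        intro i hi hin
        have h1 : 1 ≤ C' * (1 + ‖x‖) ^ m :=
          one_le_mul_of_one_le_of_one_le (le_max_right _ _)
            (one_le_pow₀ (by linarith [norm_nonneg x]))
        calc _ ≤ C * (1 + ‖x‖) ^ m := hb i hin x
          _ ≤ C' * (1 + ‖x‖) ^ m := by gcongr; exact le_max_left _ _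
          _ ≤ _ := le_self_pow₀ h1 (by omega))
    have hx := norm_nonneg x
    calc ‖x‖ ^ k * ‖iteratedFDeriv ℝ n (fun x : V => Real.exp (-c * ‖x‖ ^ 2)) x‖
        ≤ (1 + ‖x‖) ^ k * (n.factorial * Real.exp (-c * ‖x‖ ^ 2) * (C' * (1 + ‖x‖) ^ m) ^ n) := by
          gcongr
          · linarith
          · exact h
      _ = n.factorial * C' ^ n * ((1 + ‖x‖) ^ (k + m * n) * Real.exp (-c * ‖x‖ ^ 2)) := by
          rw [mul_pow, ← pow_mul, pow_add]; ring
      _ ≤ _ := mul_le_mul_of_nonneg_left (gauss_decay hc _ hx) (by positivity)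

/-- complex Gaussian as a Schwartz function -/
def gs (c : ℝ) (hc : 0 < c) : 𝓢(V, ℂ) := postcompCLM Complex.ofRealCLM (gsR c hc)

lemma gs_apply (c : ℝ) (hc : 0 < c) (x : V) :
    (gs c hc : 𝓢(V, ℂ)) x = ((Real.exp (-c * ‖x‖ ^ 2) : ℝ) : ℂ) := rfl

variable [FiniteDimensional ℝ V] [MeasurableSpace V] [BorelSpace V]

/-- heat kernel -/
def hk (V : Type*) [NormedAddCommGroup V] [InnerProductSpace ℝ V] (c : ℝ) (y : V) : ℝ :=
  (Real.pi / c) ^ (Module.finrank ℝ V / 2 : ℝ) * Real.exp (-Real.pi ^ 2 * ‖y‖ ^ 2 / c)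

lemma hk_pos {c : ℝ} (hc : 0 < c) (y : V) : 0 < hk V c y := by
  unfold hk; have := Real.pi_pos; positivity

lemma ker_gs (c : ℝ) (hc : 0 < c) (y : V) : ker (gs c hc : 𝓢(V, ℂ)) y = (hk V c y : ℂ) := by
  have h := fourier_gaussian_innerProductSpace (V := V) (b := (c : ℂ)) (by simpa using hc) (-y)
  rw [ker, fourierInv_coe, Real.fourierInv_eq_fourier_neg]
  have e : (⇑(gs c hc : 𝓢(V, ℂ))) = fun v : V => Complex.exp (-(c : ℂ) * ‖v‖ ^ 2) := by
    ext v; rw [gs_apply]; push_cast; rfl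
  rw [e, h, hk]
  push_cast
  rw [Complex.ofReal_cpow (by have := Real.pi_pos; positivity)]
  push_cast
  rw [norm_neg]

lemma k0_gs (c : ℝ) (hc : 0 < c) : k0 (gs c hc : 𝓢(V, ℂ)) = 1 := by
  have h1 : ∫ y, ker (gs c hc : 𝓢(V, ℂ)) y = 1 := by
    have : 𝓕 (ker (gs c hc : 𝓢(V, ℂ))) 0 = 1 := by
      rw [fourier_ker, gs_apply]; simp
    rw [fourier_coe, Real.fourier_eq'] at this
    simpa using this
  have h2 : (k0 (gs c hc : 𝓢(V, ℂ)) : ℂ) = 1 := by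
    rw [← h1, k0, ← integral_complex_ofReal]
    congr 1; ext y
    rw [ker_gs, Complex.norm_real, Real.norm_of_nonneg (hk_pos hc y).le]
  exact_mod_cast h2

/-- heat probability measure -/
def hP (V : Type*) [NormedAddCommGroup V] [InnerProductSpace ℝ V] [FiniteDimensional ℝ V]
    [MeasurableSpace V] [BorelSpace V] (c : ℝ) : Measure V :=
  volume.withDensity fun y => ENNReal.ofReal (hk V c y)

lemma hk_cont (c : ℝ) : Continuous (hk V c) := by
  unfold hk; fun_prop

lemma hP_prob {c : ℝ} (hc : 0 < c) : IsProbabilityMeasure (hP V c) := by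
  constructor
  rw [hP, withDensity_apply _ MeasurableSet.univ, Measure.restrict_univ]
  have h : ∀ y : V, ENNReal.ofReal (hk V c y) = ‖ker (gs c hc : 𝓢(V, ℂ)) y‖ₑ := by
    intro y
    rw [ker_gs, ← ofReal_norm, Complex.norm_real, Real.norm_of_nonneg (hk_pos hc y).le]
  simp only [h]
  rw [← ofReal_k0, k0_gs]; simp

lemma integral_hP {E : Type*} [NormedAddCommGroup E] [NormedSpace ℝ E] {c : ℝ} (hc : 0 < c)
    (F : V → E) : ∫ y, F y ∂(hP V c) = ∫ y, hk V c y • F y := by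
  rw [hP, integral_withDensity_eq_integral_toReal_smul]
  · congr 1; ext y; rw [ENNReal.toReal_ofReal (hk_pos hc y).le]
  · exact (hk_cont c).measurable.ennreal_ofReal
  · exact ae_of_all _ fun y => by simp

lemma op_gs (c : ℝ) (hc : 0 < c) (u : 𝓢(V, ℂ)) (x : V) :
    op (gs c hc) u x = ∫ y, u (x - y) ∂(hP V c) := by
  rw [op_apply, integral_hP hc]
  congr 1; ext y; rw [ker_gs]; simp

end gaussian

section energy
variable {Ω : Type*} [MeasurableSpace Ω] (P : Measure Ω) [IsProbabilityMeasure P]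

lemma bdd_int {E : Type*} [NormedAddCommGroup E] {u : Ω → E} {C : ℝ} (hu : AEStronglyMeasurable u P)
    (hC : ∀ y, ‖u y‖ ≤ C) : Integrable u P :=
  Integrable.of_bound hu C (ae_of_all _ hC)

lemma var_eq {u : Ω → ℂ} {U : ℝ} (hu : AEStronglyMeasurable u P) (hU : ∀ y, ‖u y‖ ≤ U) :
    ∫ y, ‖u y - ∫ z, u z ∂P‖ ^ 2 ∂P = (∫ y, ‖u y‖ ^ 2 ∂P) - ‖∫ z, u z ∂P‖ ^ 2 := by
  set m := ∫ z, u z ∂P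
  have iu : Integrable u P := bdd_int P hu hU
  have iu2 : Integrable (fun y => ‖u y‖ ^ 2) P :=
    bdd_int P (hu.norm.pow 2) (C := U ^ 2) (fun y => by
      rw [Real.norm_of_nonneg (by positivity)]
      exact pow_le_pow_left₀ (norm_nonneg _) (hU y) 2)
  have ii : Integrable (fun y => inner ℝ m (u y)) P := iu.const_inner m
  have e : ∀ y, ‖u y - m‖ ^ 2 = ‖u y‖ ^ 2 - 2 * inner ℝ m (u y) + ‖m‖ ^ 2 := by
    intro y; rw [norm_sub_sq_real, real_inner_comm]
  simp only [e]
  have i12 : Integrable (fun y => ‖u y‖ ^ 2 - 2 * inner ℝ m (u y)) P := iu2.sub (ii.const_mul 2)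
  rw [integral_add i12 (integrable_const _),
    integral_sub iu2 (ii.const_mul 2), integral_const_mul, integral_inner iu m]
  have : inner ℝ m m = ‖m‖ ^ 2 := real_inner_self_eq_norm_sq m
  rw [show (∫ x, u x ∂P) = m from rfl, this]
  simp; ring

lemma mean_bound {u : Ω → ℂ} {U : ℝ} (hU : ∀ y, ‖u y‖ ≤ U) : ‖∫ z, u z ∂P‖ ≤ U := by
  refine (norm_integral_le_of_norm_le_const (ae_of_all P hU)).trans ?_
  simp

lemma var_pt {u κ : Ω → ℂ} {U C : ℝ} (hu : AEStronglyMeasurable u P) (hU : ∀ y, ‖u y‖ ≤ U)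
    (hκ : AEStronglyMeasurable κ P) (hC : ∀ y, ‖κ y‖ ≤ C) (h0 : ∫ y, κ y ∂P = 0) :
    ‖∫ y, κ y * u y ∂P‖ ^ 2 ≤ C ^ 2 * ((∫ y, ‖u y‖ ^ 2 ∂P) - ‖∫ z, u z ∂P‖ ^ 2) := by
  rw [← var_eq P hu hU]
  set m := ∫ z, u z ∂P with hm
  have hmU : ‖m‖ ≤ U := mean_bound P hU
  have iu : Integrable u P := bdd_int P hu hU
  have iκ : Integrable κ P := bdd_int P hκ hC
  have iκu : Integrable (fun y => κ y * u y) P := iu.bdd_mul hκ (ae_of_all _ hC)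
  have hp : AEStronglyMeasurable (fun y => u y - m) P := hu.sub aestronglyMeasurable_const
  have hpb : ∀ y, ‖u y - m‖ ≤ 2 * U := fun y => (norm_sub_le _ _).trans (by linarith [hU y])
  have ip : Integrable (fun y => u y - m) P := bdd_int P hp hpb
  have ip2 : Integrable (fun y => ‖u y - m‖ ^ 2) P :=
    bdd_int P (hp.norm.pow 2) (C := (2 * U) ^ 2) (fun y => by
      rw [Real.norm_of_nonneg (by positivity)]
      exact pow_le_pow_left₀ (norm_nonneg _) (hpb y) 2)
  have e1 : ∫ y, κ y * u y ∂P = ∫ y, κ y * (u y - m) ∂P := by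
    simp only [mul_sub]
    rw [integral_sub iκu (iκ.mul_const m), integral_mul_const, h0]; simp
  have hΩ : Nonempty Ω := by
    by_contra hne
    rw [not_nonempty_iff] at hne
    have := measure_univ (μ := P)
    rw [Set.univ_eq_empty_iff.2 hne] at this; simp at this
  have hC0 : 0 ≤ C := (norm_nonneg _).trans (hC hΩ.some)
  have e2 : ‖∫ y, κ y * (u y - m) ∂P‖ ≤ C * ∫ y, ‖u y - m‖ ∂P := by
    rw [← integral_const_mul]
    refine norm_integral_le_of_norm_le (ip.norm.const_mul C) (ae_of_all _ fun y => ?_)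
    rw [norm_mul]; gcongr; exact hC y
  have e3 : (∫ y, ‖u y - m‖ ∂P) ^ 2 ≤ ∫ y, ‖u y - m‖ ^ 2 ∂P := by
    set q := ∫ y, ‖u y - m‖ ∂P
    have : 0 ≤ ∫ y, (‖u y - m‖ - q) ^ 2 ∂P := integral_nonneg fun y => by positivity
    have ex : ∀ y, (‖u y - m‖ - q) ^ 2 = ‖u y - m‖ ^ 2 - 2 * q * ‖u y - m‖ + q ^ 2 := by
      intro y; ring
    simp only [ex] at this
    have i12 : Integrable (fun y => ‖u y - m‖ ^ 2 - 2 * q * ‖u y - m‖) P :=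
      ip2.sub (ip.norm.const_mul _)
    rw [integral_add i12 (integrable_const _),
      integral_sub ip2 (ip.norm.const_mul _), integral_const_mul] at this
    simp only [integral_const, probReal_univ, one_smul] at this
    change 0 ≤ _ - 2 * q * q + q ^ 2 at this
    nlinarith
  rw [e1]
  calc _ ≤ (C * ∫ y, ‖u y - m‖ ∂P) ^ 2 := by gcongr
    _ = C ^ 2 * (∫ y, ‖u y - m‖ ∂P) ^ 2 := by ring
    _ ≤ _ := by gcongr

lemma energy_alg (u v m n : ℂ) (U : ℝ) (hu : ‖u‖ ≤ U) (hm : ‖m‖ ≤ U) :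
    ‖n‖ ^ 2 * ‖u‖ ^ 2 + ‖m‖ ^ 2 * (2 * (inner ℝ n v - ‖n‖ ^ 2)) - 1 / 2 * ‖n‖ ^ 2 * ‖u - m‖ ^ 2
      - 8 * U ^ 2 * ‖v - n‖ ^ 2 ≤ ‖u‖ ^ 2 * ‖v‖ ^ 2 := by
  have hv : ‖v‖ ^ 2 = ‖n‖ ^ 2 + 2 * inner ℝ n (v - n) + ‖v - n‖ ^ 2 := by
    have := norm_add_sq_real n (v - n); simpa using this
  have hi : inner ℝ n v - ‖n‖ ^ 2 = inner ℝ n (v - n) := by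
    rw [inner_sub_right, real_inner_self_eq_norm_sq]
  rw [hv, hi]
  have h1 : |inner ℝ n (v - n)| ≤ ‖n‖ * ‖v - n‖ := abs_real_inner_le_norm _ _
  have h2 : |‖u‖ ^ 2 - ‖m‖ ^ 2| ≤ 2 * U * ‖u - m‖ := by
    have e : ‖u‖ ^ 2 - ‖m‖ ^ 2 = (‖u‖ - ‖m‖) * (‖u‖ + ‖m‖) := by ring
    rw [e, abs_mul]
    have h3 := abs_norm_sub_norm_le u m
    rw [abs_of_nonneg (a := ‖u‖ + ‖m‖) (by positivity)]
    nlinarith [norm_nonneg u, norm_nonneg m, norm_nonneg (u - m)]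
  have hU : 0 ≤ U := (norm_nonneg _).trans hu
  have h3 : |(‖u‖ ^ 2 - ‖m‖ ^ 2) * inner ℝ n (v - n)| ≤ 2 * U * ‖u - m‖ * (‖n‖ * ‖v - n‖) := by
    rw [abs_mul]; gcongr
  have h4 := (abs_le.1 h3).1
  nlinarith [sq_nonneg (‖n‖ * ‖u - m‖ - 4 * U * ‖v - n‖), mul_nonneg (sq_nonneg ‖u‖) (sq_nonneg ‖v - n‖)]

lemma energy_pt {u v : Ω → ℂ} {U C : ℝ} (hu : AEStronglyMeasurable u P) (hU : ∀ y, ‖u y‖ ≤ U)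
    (hv : AEStronglyMeasurable v P) (hC : ∀ y, ‖v y‖ ≤ C) :
    ‖∫ z, u z ∂P‖ ^ 2 * ‖∫ z, v z ∂P‖ ^ 2 +
      1 / 2 * (‖∫ z, v z ∂P‖ ^ 2 * ((∫ y, ‖u y‖ ^ 2 ∂P) - ‖∫ z, u z ∂P‖ ^ 2)) ≤
    (∫ y, ‖u y‖ ^ 2 * ‖v y‖ ^ 2 ∂P) + 8 * U ^ 2 * ((∫ y, ‖v y‖ ^ 2 ∂P) - ‖∫ z, v z ∂P‖ ^ 2) := by
  have hvu := var_eq P hu hU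
  have hvv := var_eq P hv hC
  set m := ∫ z, u z ∂P with hm
  set n := ∫ z, v z ∂P with hn
  have hmU : ‖m‖ ≤ U := mean_bound P hU
  have hnC : ‖n‖ ≤ C := mean_bound P hC
  have isq : ∀ (w : Ω → ℂ) (D : ℝ), AEStronglyMeasurable w P → (∀ y, ‖w y‖ ≤ D) →
      Integrable (fun y => ‖w y‖ ^ 2) P := fun w D hw hD =>
    bdd_int P (hw.norm.pow 2) (C := D ^ 2) (fun y => by
      rw [Real.norm_of_nonneg (by positivity)]
      exact pow_le_pow_left₀ (norm_nonneg _) (hD y) 2)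
  have iv : Integrable v P := bdd_int P hv hC
  have iu2 := isq u U hu hU
  have iv2 := isq v C hv hC
  have ip := isq (fun y => u y - m) (2 * U) (hu.sub aestronglyMeasurable_const)
    (fun y => (norm_sub_le _ _).trans (by linarith [hU y]))
  have ir := isq (fun y => v y - n) (2 * C) (hv.sub aestronglyMeasurable_const)
    (fun y => (norm_sub_le _ _).trans (by linarith [hC y]))
  have iuv : Integrable (fun y => ‖u y‖ ^ 2 * ‖v y‖ ^ 2) P := by
    refine iv2.bdd_mul (c := U ^ 2) (hu.norm.pow 2) (ae_of_all _ fun y => ?_)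
    rw [Real.norm_of_nonneg (by positivity)]
    exact pow_le_pow_left₀ (norm_nonneg _) (hU y) 2
  have ii : Integrable (fun y => inner ℝ n (v y)) P := iv.const_inner n
  have i1 := iu2.const_mul (‖n‖ ^ 2)
  have i20 : Integrable (fun y => inner ℝ n (v y) - ‖n‖ ^ 2) P := ii.sub (integrable_const (‖n‖ ^ 2))
  have i2 : Integrable (fun y => ‖m‖ ^ 2 * (2 * (inner ℝ n (v y) - ‖n‖ ^ 2))) P :=
    (i20.const_mul 2).const_mul (‖m‖ ^ 2)
  have i3 := ip.const_mul (1 / 2 * ‖n‖ ^ 2)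
  have i4 := ir.const_mul (8 * U ^ 2)
  have i12 : Integrable (fun y => ‖n‖ ^ 2 * ‖u y‖ ^ 2 +
      ‖m‖ ^ 2 * (2 * (inner ℝ n (v y) - ‖n‖ ^ 2))) P := i1.add i2
  have i123 : Integrable (fun y => ‖n‖ ^ 2 * ‖u y‖ ^ 2 +
      ‖m‖ ^ 2 * (2 * (inner ℝ n (v y) - ‖n‖ ^ 2)) - 1 / 2 * ‖n‖ ^ 2 * ‖u y - m‖ ^ 2) P := i12.sub i3
  have i1234 : Integrable (fun y => ‖n‖ ^ 2 * ‖u y‖ ^ 2 +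
      ‖m‖ ^ 2 * (2 * (inner ℝ n (v y) - ‖n‖ ^ 2)) - 1 / 2 * ‖n‖ ^ 2 * ‖u y - m‖ ^ 2
      - 8 * U ^ 2 * ‖v y - n‖ ^ 2) P := i123.sub i4
  have key := integral_mono i1234 iuv
    (fun y => energy_alg (u y) (v y) m n U (hU y) hmU)
  rw [integral_sub i123 i4, integral_sub i12 i3, integral_add i1 i2] at key
  simp only [integral_const_mul] at key
  rw [integral_sub ii (integrable_const _)] at key
  simp only [integral_const, probReal_univ, one_smul] at key
  have ei : ∫ y, inner ℝ n (v y) ∂P = ‖n‖ ^ 2 := by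
    rw [integral_inner iv n, ← hn, real_inner_self_eq_norm_sq]
  rw [ei, hvu, hvv] at key
  nlinarith
end energy
end CJ

namespace CJ

section carl
variable {V : Type*} [NormedAddCommGroup V] [InnerProductSpace ℝ V]
  [FiniteDimensional ℝ V] [MeasurableSpace V] [BorelSpace V]

lemma int_prod (P : Measure V) [IsProbabilityMeasure P] {F : V → ℝ} (hc : Continuous F)
    (hi : Integrable F) : Integrable (fun z : V × V => F (z.1 - z.2)) (volume.prod P) := by
  rw [integrable_prod_iff' (by
    exact (hc.comp (continuous_fst.sub continuous_snd)).aestronglyMeasurable)]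
  constructor
  · exact ae_of_all _ fun y => hi.comp_sub_right y
  · have : (fun y => ∫ x, ‖F (x - y)‖) = fun _ : V => ∫ x, ‖F x‖ := by
      ext y; exact integral_sub_right_eq_self (fun x => ‖F x‖) y
    simp only [this]
    exact integrable_const _

lemma int_avg (P : Measure V) [IsProbabilityMeasure P] {F : V → ℝ} (hc : Continuous F)
    (hi : Integrable F) : Integrable (fun x => ∫ y, F (x - y) ∂P) :=
  (int_prod P hc hi).integral_prod_left

lemma integral_avg (P : Measure V) [IsProbabilityMeasure P] {F : V → ℝ} (hc : Continuous F)
    (hi : Integrable F) : ∫ x, ∫ y, F (x - y) ∂P = ∫ x, F x := by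
  rw [integral_integral_swap (int_prod P hc hi)]
  have : (fun y => ∫ x, F (x - y)) = fun _ : V => ∫ x, F x := by
    ext y; exact integral_sub_right_eq_self (fun x => F x) y
  simp [this]

lemma op_eq_hP {c : ℝ} (hc : 0 < c) (a u : 𝓢(V, ℂ)) (x : V) :
    op a u x = ∫ y, (ker a y / hk V c y) * u (x - y) ∂(hP V c) := by
  rw [op_apply, integral_hP hc]
  congr 1; ext y
  have : (hk V c y : ℂ) ≠ 0 := by exact_mod_cast (hk_pos hc y).ne'
  rw [Complex.real_smul]; field_simp

lemma hk_ratio {c c' : ℝ} (hc' : 0 < c') (h : c' ≤ c) (y : V) :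
    hk V c' y ≤ (c / c') ^ (Module.finrank ℝ V / 2 : ℝ) * hk V c y := by
  unfold hk
  have hc : 0 < c := by linarith
  have hpi := Real.pi_pos
  rw [← mul_assoc, ← Real.mul_rpow (by positivity) (by positivity)]
  have e : c / c' * (Real.pi / c) = Real.pi / c' := by field_simp
  rw [e]
  gcongr ?_ * Real.exp ?_
  rw [div_le_div_iff₀ hc' hc]
  have : 0 ≤ Real.pi ^ 2 * ‖y‖ ^ 2 := by positivity
  nlinarith

/-- dimension constant -/
def kC (V : Type*) [NormedAddCommGroup V] [InnerProductSpace ℝ V] : ℝ :=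
  1 + (3 / 2) ^ (Module.finrank ℝ V / 2 : ℝ)

lemma kC_pos : 0 < kC V := by unfold kC; positivity

lemma energy_step {c c' : ℝ} (hc : 0 < c) (hc' : 0 < c') (hcc : 2 * c = 3 * c') (u v : 𝓢(V, ℂ))
    {U : ℝ} (hU : ∀ x, ‖u x‖ ≤ U) :
    n2 (pm (op (gs c hc) u) (op (gs c hc) v)) +
      1 / (2 * kC V ^ 2) * n2 (pm (op (gs c' hc' - gs c hc) u) (op (gs c hc) v)) ≤
    n2 (pm u v) + 8 * U ^ 2 * (n2 v - n2 (op (gs c hc) v)) := by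
  haveI := hP_prob (V := V) hc
  set P := hP V c
  set u' := op (gs c hc) u
  set v' := op (gs c hc) v
  set q := op (gs c' hc' - gs c hc) u
  obtain ⟨Cv, hCv⟩ : ∃ C, ∀ x, ‖v x‖ ≤ C := ⟨_, fun x => v.norm_le_seminorm ℝ x⟩
  set κ : V → ℂ := fun y => ker (gs c' hc' - gs c hc : 𝓢(V, ℂ)) y / hk V c y
  have hκc : Continuous κ := by
    refine (ker (gs c' hc' - gs c hc : 𝓢(V, ℂ))).continuous.div
      (Complex.continuous_ofReal.comp (hk_cont c)) fun y => ?_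
    exact_mod_cast (hk_pos hc y).ne'
  have hκb : ∀ y, ‖κ y‖ ≤ kC V := by
    intro y
    have hp := hk_pos (V := V) hc y
    simp only [κ]
    rw [norm_div, div_le_iff₀ (by rw [Complex.norm_real]; simpa using hp.ne'), Complex.norm_real,
      Real.norm_of_nonneg hp.le, ker_sub, sub_apply, ker_gs, ker_gs]
    refine (norm_sub_le _ _).trans ?_
    rw [Complex.norm_real, Complex.norm_real, Real.norm_of_nonneg hp.le,
      Real.norm_of_nonneg (hk_pos hc' y).le]
    have h := hk_ratio (V := V) hc' (c := c) (by linarith) y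
    have e : c / c' = 3 / 2 := by field_simp; linarith
    rw [e] at h
    unfold kC; nlinarith
  have hκ0 : ∫ y, κ y ∂P = 0 := by
    rw [integral_hP hc]
    have e : ∀ y, hk V c y • κ y = ker (gs c' hc' - gs c hc : 𝓢(V, ℂ)) y := by
      intro y
      have : (hk V c y : ℂ) ≠ 0 := by exact_mod_cast (hk_pos hc y).ne'
      simp only [κ]
      rw [Complex.real_smul]; field_simp
    simp only [e]
    have : 𝓕 (ker (gs c' hc' - gs c hc : 𝓢(V, ℂ))) 0 = 0 := by
      rw [fourier_ker, sub_apply, gs_apply, gs_apply]; simp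
    rw [fourier_coe, Real.fourier_eq'] at this
    simpa using this
  have msub : ∀ w : 𝓢(V, ℂ), ∀ x, AEStronglyMeasurable (fun y => w (x - y)) P := fun w x =>
    (w.continuous.comp (continuous_const.sub continuous_id)).aestronglyMeasurable
  have pt : ∀ x, ‖(pm u' v') x‖ ^ 2 + 1 / (2 * kC V ^ 2) * ‖(pm q v') x‖ ^ 2 ≤
      (∫ y, ‖(pm u v) (x - y)‖ ^ 2 ∂P) + 8 * U ^ 2 * ((∫ y, ‖v (x - y)‖ ^ 2 ∂P) - ‖v' x‖ ^ 2) := by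
    intro x
    have h1 := energy_pt P (msub u x) (fun y => hU (x - y)) (msub v x) (fun y => hCv (x - y))
    have h2 := var_pt P (msub u x) (fun y => hU (x - y)) hκc.aestronglyMeasurable hκb hκ0
    rw [← op_gs c hc u x, ← op_gs c hc v x] at h1
    rw [← op_gs c hc u x, ← op_eq_hP hc] at h2
    simp only [pm_apply, norm_mul, mul_pow]
    refine le_trans ?_ h1
    have hk := kC_pos (V := V)
    have : 1 / (2 * kC V ^ 2) * (‖q x‖ ^ 2 * ‖v' x‖ ^ 2) ≤
        1 / (2 * kC V ^ 2) * ((kC V ^ 2 * ((∫ y, ‖u (x - y)‖ ^ 2 ∂P) - ‖u' x‖ ^ 2)) * ‖v' x‖ ^ 2) := by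
      gcongr
    refine (add_le_add_right this _).trans (le_of_eq ?_)
    change _ = ‖u' x‖ ^ 2 * ‖v' x‖ ^ 2 + 1 / 2 * (‖v' x‖ ^ 2 * ((∫ y, ‖u (x - y)‖ ^ 2 ∂P) - ‖u' x‖ ^ 2))
    field_simp
  have cs : ∀ w : 𝓢(V, ℂ), Continuous fun x => ‖w x‖ ^ 2 := fun w => w.continuous.norm.pow 2
  have ia := fun w : 𝓢(V, ℂ) => int_avg P (cs w) (integrable_sq w)
  have ea := fun w : 𝓢(V, ℂ) => integral_avg P (cs w) (integrable_sq w)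
  have iL : Integrable fun x => ‖(pm u' v') x‖ ^ 2 + 1 / (2 * kC V ^ 2) * ‖(pm q v') x‖ ^ 2 :=
    (integrable_sq _).add ((integrable_sq _).const_mul _)
  have iR1 : Integrable fun x => (∫ y, ‖v (x - y)‖ ^ 2 ∂P) - ‖v' x‖ ^ 2 :=
    (ia v).sub (integrable_sq _)
  have iR : Integrable fun x => (∫ y, ‖(pm u v) (x - y)‖ ^ 2 ∂P) +
      8 * U ^ 2 * ((∫ y, ‖v (x - y)‖ ^ 2 ∂P) - ‖v' x‖ ^ 2) := (ia _).add (iR1.const_mul _)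
  have key := integral_mono iL iR pt
  rw [integral_add (integrable_sq _) ((integrable_sq _).const_mul _), integral_const_mul,
    integral_add (ia _) (iR1.const_mul _), integral_const_mul, integral_sub (ia v) (integrable_sq _),
    ea, ea] at key
  exact key

lemma four_pos (j : ℕ) : (0 : ℝ) < (4 : ℝ)⁻¹ ^ j := by positivity
lemma b_pos (j : ℕ) : (0 : ℝ) < 3 / 4 * (4 : ℝ)⁻¹ ^ j := by positivity
lemma b'_pos (j : ℕ) : (0 : ℝ) < 1 / 2 * (4 : ℝ)⁻¹ ^ j := by positivity

/-- Gaussian at scale `2^j` -/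
def gam (V : Type*) [NormedAddCommGroup V] [InnerProductSpace ℝ V] (j : ℕ) : 𝓢(V, ℂ) :=
  gs _ (four_pos j)
/-- difference of Gaussians -/
def kap (V : Type*) [NormedAddCommGroup V] [InnerProductSpace ℝ V] (j : ℕ) : 𝓢(V, ℂ) :=
  gs _ (b'_pos j) - gs _ (b_pos j)

lemma gam_step (j : ℕ) (u : 𝓢(V, ℂ)) :
    op (gs _ (b_pos j)) (op (gam V (j + 1)) u) = op (gam V j) u := by
  rw [op_op]; congr 1
  ext x
  rw [pm_apply, gam, gam, gs_apply, gs_apply, gs_apply, ← Complex.ofReal_mul, ← Real.exp_add]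
  congr 2; rw [pow_succ]; ring

lemma k0_gam (j : ℕ) : k0 (gam V j) = 1 := k0_gs _ _

/-- discrete Carleson estimate -/
lemma carl0 (u h : 𝓢(V, ℂ)) {U : ℝ} (hU : ∀ x, ‖u x‖ ≤ U) (N : ℕ) :
    ∑ j ∈ Finset.range N, n2 (pm (op (kap V j) (op (gam V (j + 1)) u)) (op (gam V j) h)) ≤
      2 * kC V ^ 2 * (9 * U ^ 2) * n2 h := by
  have hk := kC_pos (V := V)
  have key : ∀ N : ℕ, n2 (pm (op (gam V 0) u) (op (gam V 0) h)) + 1 / (2 * kC V ^ 2) *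
      ∑ j ∈ Finset.range N, n2 (pm (op (kap V j) (op (gam V (j + 1)) u)) (op (gam V j) h)) ≤
      n2 (pm (op (gam V N) u) (op (gam V N) h)) +
        8 * U ^ 2 * (n2 (op (gam V N) h) - n2 (op (gam V 0) h)) := by
    intro N
    induction N with
    | zero => simp
    | succ N ih =>
      have hU' : ∀ x, ‖op (gam V (N + 1)) u x‖ ≤ U := fun x => by
        have := op_bound (a := gam V (N + 1)) hU x
        rwa [k0_gam, one_mul] at this
      have hh := energy_step (b_pos N) (b'_pos N) (by ring) (op (gam V (N + 1)) u)
        (op (gam V (N + 1)) h) hU'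
      rw [gam_step, gam_step] at hh
      rw [Finset.sum_range_succ, mul_add]
      change _ + 1 / (2 * kC V ^ 2) * n2 (pm (op (kap V N) (op (gam V (N + 1)) u)) (op (gam V N) h)) ≤ _ at hh
      linarith
  have hh := key N
  have a1 : n2 (op (gam V N) h) ≤ n2 h := by
    have := n2_op_le (a := gam V N) (M := 1) (fun x => by
      have := norm_le_k0 (gam V N) x; rwa [k0_gam] at this) h
    simpa using this
  have a2 : n2 (pm (op (gam V N) u) (op (gam V N) h)) ≤ U ^ 2 * n2 h := by
    rw [pm_comm]
    refine (n2_pm_le (M := U) (fun x => ?_) _).trans (by gcongr)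
    have := op_bound (a := gam V N) hU x
    rwa [k0_gam, one_mul] at this
  have a3 := n2_nonneg (pm (op (gam V 0) u) (op (gam V 0) h))
  have a4 := n2_nonneg (op (gam V 0) h)
  set S := ∑ j ∈ Finset.range N, n2 (pm (op (kap V j) (op (gam V (j + 1)) u)) (op (gam V j) h))
  have a5 : 1 / (2 * kC V ^ 2) * S ≤ 9 * U ^ 2 * n2 h := by
    have := sq_nonneg U
    nlinarith
  rw [div_mul_eq_mul_div, one_mul, div_le_iff₀ (by positivity)] at a5
  linarith

end carl
end CJ

namespace CJ

section bump
variable {V : Type*} [NormedAddCommGroup V] [InnerProductSpace ℝ V]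
  [FiniteDimensional ℝ V]

/-- basic bump -/
def chiB (V : Type*) [NormedAddCommGroup V] : ContDiffBump (0 : V) := ⟨1, 2, one_pos, one_lt_two⟩

lemma chiB_one {x : V} (h : ‖x‖ ≤ 1) : chiB V x = 1 :=
  (chiB V).one_of_mem_closedBall (by simpa [chiB] using h)
lemma chiB_zero {x : V} (h : 2 ≤ ‖x‖) : chiB V x = 0 :=
  (chiB V).zero_of_le_dist (by simpa [chiB] using h)

lemma cpt_of_bdd {f : V → ℂ} (R : ℝ) (h : ∀ x, R ≤ ‖x‖ → f x = 0) : HasCompactSupport f := by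
  refine HasCompactSupport.intro (isCompact_closedBall (0 : V) R) fun x hx => h x ?_
  simp at hx; exact hx.le

lemma chiC_contDiff : ContDiff ℝ ((⊤ : ℕ∞) : WithTop ℕ∞) (fun x : V => ((chiB V x : ℝ) : ℂ)) :=
  Complex.ofRealCLM.contDiff.comp (chiB V).contDiff

/-- basic bump as Schwartz function -/
def chi (V : Type*) [NormedAddCommGroup V] [InnerProductSpace ℝ V] [FiniteDimensional ℝ V] :
    𝓢(V, ℂ) :=
  (cpt_of_bdd (V := V) (f := fun x : V => ((chiB V x : ℝ) : ℂ)) 2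
    (fun x h => by rw [chiB_zero h]; simp)).toSchwartzMap chiC_contDiff

lemma chi_apply (x : V) : chi V x = ((chiB V x : ℝ) : ℂ) := rfl

lemma norm_ut_smul (k : ℕ) (x : V) : ‖((2 : ℝ)⁻¹ ^ k) • x‖ = ‖x‖ / 2 ^ k := by
  rw [norm_smul, Real.norm_of_nonneg (by positivity), inv_pow]; field_simp

/-- scalar gaussian difference -/
def eeR (r2 : ℝ) : ℝ := Real.exp (-(1 / 4) * r2) * (Real.exp (-(1 / 2) * r2) - Real.exp (-(3 / 4) * r2))

lemma eeR_pos {r : ℝ} (h : 0 < r) : 0 < eeR r := by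
  unfold eeR
  have : Real.exp (-(3 / 4) * r) < Real.exp (-(1 / 2) * r) := Real.exp_lt_exp.2 (by linarith)
  exact mul_pos (Real.exp_pos _) (by linarith)

/-- raw theta -/
def thR (V : Type*) [NormedAddCommGroup V] [InnerProductSpace ℝ V] [FiniteDimensional ℝ V] (x : V) : ℝ :=
  chiB V ((2 : ℝ)⁻¹ ^ 7 • x) * (1 - chiB V ((2 : ℝ) • x)) / eeR (‖x‖ ^ 2)

lemma thR_contDiff : ContDiff ℝ ((⊤ : ℕ∞) : WithTop ℕ∞) (thR V) := by
  rw [contDiff_iff_contDiffAt]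
  intro x
  have hsc : ∀ t : ℝ, ContDiff ℝ ((⊤ : ℕ∞) : WithTop ℕ∞) fun x : V => chiB V (t • x) := fun t =>
    (chiB V).contDiff.comp (contDiff_const_smul t)
  by_cases hx : ‖x‖ < 1 / 2
  · have : thR V =ᶠ[nhds x] fun _ => 0 := by
      filter_upwards [(isOpen_lt continuous_norm continuous_const).mem_nhds hx] with y hy
      rw [thR, chiB_one (x := (2 : ℝ) • y)]
      · simp
      · rw [norm_smul]; simp at hy ⊢; linarith
    exact contDiffAt_const.congr_of_eventuallyEq this
  · have hp : 0 < ‖x‖ ^ 2 := by push Not at hx; positivity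
    unfold thR
    refine ContDiffAt.div ((hsc _).contDiffAt.mul (contDiffAt_const.sub (hsc _).contDiffAt)) ?_
      (eeR_pos hp).ne'
    have hn : ContDiff ℝ ((⊤ : ℕ∞) : WithTop ℕ∞) fun x : V => ‖x‖ ^ 2 := contDiff_norm_sq ℝ
    have : ContDiff ℝ ((⊤ : ℕ∞) : WithTop ℕ∞) fun x : V => eeR (‖x‖ ^ 2) := by
      unfold eeR; fun_prop
    exact this.contDiffAt

/-- theta -/
def theta (V : Type*) [NormedAddCommGroup V] [InnerProductSpace ℝ V] [FiniteDimensional ℝ V] :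
    𝓢(V, ℂ) :=
  (cpt_of_bdd (V := V) (f := fun x : V => ((thR V x : ℝ) : ℂ)) (2 ^ 8)
    (fun x h => by
      rw [thR, chiB_zero (x := (2 : ℝ)⁻¹ ^ 7 • x)]
      · simp
      · rw [norm_ut_smul, le_div_iff₀ (by positivity)]; linarith)).toSchwartzMap
    (Complex.ofRealCLM.contDiff.comp thR_contDiff)

lemma theta_apply {x : V} (h1 : 1 ≤ ‖x‖) (h2 : ‖x‖ ≤ 2 ^ 7) :
    theta V x * ((eeR (‖x‖ ^ 2) : ℝ) : ℂ) = 1 := by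
  change ((thR V x : ℝ) : ℂ) * _ = 1
  rw [thR, chiB_one (x := (2 : ℝ)⁻¹ ^ 7 • x), chiB_zero (x := (2 : ℝ) • x)]
  · rw [← Complex.ofReal_mul, sub_zero, one_mul, div_mul_cancel₀ _ (eeR_pos (by positivity)).ne']; simp
  · rw [norm_smul]; simp; linarith
  · rw [norm_ut_smul, div_le_one (by positivity)]; exact h2

variable [MeasurableSpace V] [BorelSpace V]

/-- unit `2^{-k}` -/
def ut (k : ℕ) : ℝˣ := Units.mk0 ((2 : ℝ)⁻¹ ^ k) (by positivity)

@[simp] lemma ut_val (k : ℕ) : ((ut k : ℝˣ) : ℝ) = (2 : ℝ)⁻¹ ^ k := rfl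

/-- dilated bump -/
def chk (V : Type*) [NormedAddCommGroup V] [InnerProductSpace ℝ V] [FiniteDimensional ℝ V]
    (k : ℕ) : 𝓢(V, ℂ) := dil (ut k) (chi V)

lemma chk_one {k : ℕ} {x : V} (h : ‖x‖ ≤ 2 ^ k) : chk V k x = 1 := by
  rw [chk, dil_apply, chi_apply, ut_val, chiB_one]
  · simp
  · rw [norm_ut_smul, div_le_one (by positivity)]; exact h

lemma chk_zero {k : ℕ} {x : V} (h : 2 ^ (k + 1) ≤ ‖x‖) : chk V k x = 0 := by
  rw [chk, dil_apply, chi_apply, ut_val, chiB_zero]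
  · simp
  · rw [norm_ut_smul, le_div_iff₀ (by positivity), ← pow_succ']; exact h

lemma chk_norm (k : ℕ) (x : V) : ‖chk V k x‖ ≤ 1 := by
  rw [chk, dil_apply, chi_apply, Complex.norm_real, Real.norm_of_nonneg (chiB V).nonneg]
  exact (chiB V).le_one

lemma k0_chk (k : ℕ) : k0 (chk V k) = k0 (chi V) := k0_dil _ _

/-- LP symbol -/
def psi (V : Type*) [NormedAddCommGroup V] [InnerProductSpace ℝ V] [FiniteDimensional ℝ V] :
    ℕ → 𝓢(V, ℂ)
  | 0 => chk V 0
  | k + 1 => chk V (k + 1) - chk V k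

lemma psi_succ (k : ℕ) : psi V (k + 1) = chk V (k + 1) - chk V k := rfl

lemma psi_zero_low {k : ℕ} {x : V} (h : ‖x‖ ≤ 2 ^ k) : psi V (k + 1) x = 0 := by
  rw [psi_succ, sub_apply, chk_one h, chk_one (h.trans (by gcongr <;> simp)), sub_self]

lemma psi_zero_high {k : ℕ} {x : V} (h : 2 ^ (k + 1) ≤ ‖x‖) : psi V k x = 0 := by
  cases k with
  | zero => exact chk_zero h
  | succ k =>
    rw [psi_succ, sub_apply, chk_zero h, chk_zero (le_trans (by gcongr <;> simp) h), sub_self]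

lemma psi_sum (n : ℕ) : ∑ k ∈ Finset.range (n + 1), psi V k = chk V n := by
  induction n with
  | zero => simp [psi]
  | succ n ih => rw [Finset.sum_range_succ, ih, psi_succ]; abel

lemma psi_norm (k : ℕ) (x : V) : ‖psi V k x‖ ≤ 1 := by
  cases k with
  | zero => exact chk_norm 0 x
  | succ k =>
    rw [psi_succ, sub_apply, chk, dil_apply, chi_apply, chk, dil_apply, chi_apply,
      ← Complex.ofReal_sub, Complex.norm_real, Real.norm_eq_abs, abs_sub_le_iff]
    have a := (chiB V).nonneg' ((ut (k + 1) : ℝ) • x)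
    have b := (chiB V).le_one (x := ((ut (k + 1) : ℝ) • x))
    have c := (chiB V).nonneg' ((ut k : ℝ) • x)
    have d := (chiB V).le_one (x := ((ut k : ℝ) • x))
    constructor <;> linarith

lemma Y_term {t : ℝ} (ht : 0 ≤ t) :
    t * Real.exp (-2 * t ^ 2) ≤ 4 * (t / (1 + t) - (t / 2) / (1 + t / 2)) := by
  have e : t / (1 + t) - (t / 2) / (1 + t / 2) = t / ((1 + t) * (2 + t)) := by
    field_simp; ring
  rw [e, neg_mul, Real.exp_neg, ← div_eq_mul_inv, ← mul_div_assoc,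
    div_le_div_iff₀ (Real.exp_pos _) (by positivity)]
  have := Real.add_one_le_exp (2 * t ^ 2)
  have h2 : (1 + t) * (2 + t) ≤ 4 * Real.exp (2 * t ^ 2) := by nlinarith [sq_nonneg (t - 3 / 14)]
  calc _ ≤ t * (4 * Real.exp (2 * t ^ 2)) := by gcongr
    _ = _ := by ring

lemma Y_sum (h : 𝓢(V, ℂ)) (N : ℕ) :
    ∑ j ∈ Finset.range N, (2 : ℝ)⁻¹ ^ j * Y (op (gam V j) h) ≤ 4 * n2 h := by
  simp only [Y, ← integral_const_mul]
  rw [← integral_finset_sum _ (fun j _ => (int_Y _).const_mul _), ← n2_fourier h, n2,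
    ← integral_const_mul]
  refine integral_mono (integrable_finset_sum _ fun j _ => (int_Y _).const_mul _)
    ((integrable_sq _).const_mul _) fun ξ => ?_
  have e : ∀ j, (2 : ℝ)⁻¹ ^ j * (‖ξ‖ * ‖𝓕 (op (gam V j) h) ξ‖ ^ 2) =
      (‖ξ‖ / 2 ^ j) * Real.exp (-2 * (‖ξ‖ / 2 ^ j) ^ 2) * ‖𝓕 h ξ‖ ^ 2 := by
    intro j
    rw [fourier_op_apply, norm_mul, gam, gs_apply, Complex.norm_real,
      Real.norm_of_nonneg (Real.exp_pos _).le, mul_pow, ← Real.exp_nat_mul]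
    have : ((2 : ℕ) : ℝ) * (-4⁻¹ ^ j * ‖ξ‖ ^ 2) = -2 * (‖ξ‖ / 2 ^ j) ^ 2 := by
      rw [div_pow, ← pow_mul, mul_comm j 2, pow_mul, inv_pow]; norm_num; field_simp
    rw [this, inv_pow]; field_simp
  simp only [e, ← Finset.sum_mul]
  gcongr
  have t : ∀ j ∈ Finset.range N, (‖ξ‖ / 2 ^ j) * Real.exp (-2 * (‖ξ‖ / 2 ^ j) ^ 2) ≤
      4 * ((‖ξ‖ / 2 ^ j) / (1 + ‖ξ‖ / 2 ^ j) - (‖ξ‖ / 2 ^ (j + 1)) / (1 + ‖ξ‖ / 2 ^ (j + 1))) := by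
    intro j _
    have := Y_term (t := ‖ξ‖ / 2 ^ j) (by positivity)
    rwa [div_div ‖ξ‖ (2 ^ j) 2, ← pow_succ] at this
  refine (Finset.sum_le_sum t).trans ?_
  rw [← Finset.mul_sum, Finset.sum_range_sub']
  have h1 : ‖ξ‖ / 2 ^ 0 / (1 + ‖ξ‖ / 2 ^ 0) ≤ 1 := by
    rw [div_le_one (by positivity)]; linarith
  have h2 : 0 ≤ ‖ξ‖ / 2 ^ N / (1 + ‖ξ‖ / 2 ^ N) := by positivity
  linarith

lemma kap_gam_theta {j : ℕ} {ξ : V} (h1 : 2 ^ j ≤ ‖ξ‖) (h2 : ‖ξ‖ ≤ 2 ^ (j + 7)) :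
    dil (ut j) (theta V) ξ * (kap V j ξ * gam V (j + 1) ξ) = 1 := by
  have := theta_apply (x := (2 : ℝ)⁻¹ ^ j • ξ) (by rwa [norm_ut_smul, le_div_iff₀ (by positivity), one_mul])
    (by rwa [norm_ut_smul, div_le_iff₀ (by positivity), ← pow_add, add_comm 7])
  rw [← this, dil_apply, ut_val]
  congr 1
  rw [norm_ut_smul, kap, gam, sub_apply, gs_apply, gs_apply, gs_apply, ← Complex.ofReal_sub,
    ← Complex.ofReal_mul, eeR, mul_comm]
  have : (‖ξ‖ / 2 ^ j) ^ 2 = (4 : ℝ)⁻¹ ^ j * ‖ξ‖ ^ 2 := by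
    rw [div_pow, ← pow_mul, mul_comm j 2, pow_mul, inv_pow]; norm_num; field_simp
  rw [this, pow_succ]
  rw [show -(4⁻¹ ^ j * 4⁻¹) * ‖ξ‖ ^ 2 = -(1 / 4) * (4⁻¹ ^ j * ‖ξ‖ ^ 2) by ring,
    show -(1 / 2 * 4⁻¹ ^ j) * ‖ξ‖ ^ 2 = -(1 / 2) * (4⁻¹ ^ j * ‖ξ‖ ^ 2) by ring,
    show -(3 / 4 * 4⁻¹ ^ j) * ‖ξ‖ ^ 2 = -(3 / 4) * (4⁻¹ ^ j * ‖ξ‖ ^ 2) by ring]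

/-- Carleson constant -/
def carC (V : Type*) [NormedAddCommGroup V] [InnerProductSpace ℝ V] [FiniteDimensional ℝ V]
    [MeasurableSpace V] [BorelSpace V] : ℝ :=
  2 * k0 (theta V) ^ 2 * (2 * kC V ^ 2 * 9) +
    8 * Real.pi * 4 * k0 (theta V) * (k0 (theta V) + k1 (theta V)) * 4

lemma carl1 (m : ℕ → 𝓢(V, ℂ)) (u h : 𝓢(V, ℂ)) {U A : ℝ} (hU : ∀ x, ‖u x‖ ≤ U)
    (hm : ∀ j ξ, m j ξ ≠ 0 → 2 ^ j ≤ ‖ξ‖ ∧ ‖ξ‖ ≤ 2 ^ (j + 7))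
    (h0 : ∀ j, k0 (m j) ≤ A) (h1 : ∀ j, k1 (m j) ≤ A * (2 : ℝ)⁻¹ ^ j) (N : ℕ) :
    ∑ j ∈ Finset.range N, n2 (pm (op (m j) u) (op (gam V j) h)) ≤
      carC V * (A ^ 2 * U ^ 2) * n2 h := by
  have hA : 0 ≤ A := (k0_nonneg _).trans (h0 0)
  have hU0 : 0 ≤ U := (norm_nonneg _).trans (hU 0)
  set T0 := k0 (theta V) with hT0
  set T1 := k1 (theta V)
  have hT0n : 0 ≤ T0 := k0_nonneg _
  have hT1n : 0 ≤ T1 := k1_nonneg _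
  have hpi := Real.pi_pos
  set q := fun j => op (kap V j) (op (gam V (j + 1)) u)
  have term : ∀ j ∈ Finset.range N, n2 (pm (op (m j) u) (op (gam V j) h)) ≤
      2 * (A * T0) ^ 2 * n2 (pm (q j) (op (gam V j) h)) +
        8 * Real.pi * (2 * U) ^ 2 * (A * T0) * (A * (T0 + T1)) *
          ((2 : ℝ)⁻¹ ^ j * Y (op (gam V j) h)) := by
    intro j _
    set K := pm (m j) (dil (ut j) (theta V))
    have e : op (m j) u = op K (q j) := by
      simp only [q]
      rw [op_op, op_op]
      congr 1; ext ξ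
      simp only [K, pm_apply]
      by_cases hz : m j ξ = 0
      · rw [hz]; ring
      · obtain ⟨ha, hb⟩ := hm j ξ hz
        have := kap_gam_theta ha hb
        calc m j ξ = m j ξ * (dil (ut j) (theta V) ξ * (kap V j ξ * gam V (j + 1) ξ)) := by
              rw [this, mul_one]
          _ = _ := by ring
    have hK0 : k0 K ≤ A * T0 := by
      refine (k0_pm _ _).trans ?_
      rw [k0_dil]; exact mul_le_mul_of_nonneg_right (h0 j) hT0n
    have hK1 : k1 K ≤ A * (T0 + T1) * (2 : ℝ)⁻¹ ^ j := by
      refine (k1_pm _ _).trans ?_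
      rw [k0_dil, k1_dil, ut_val, abs_of_nonneg (by positivity)]
      calc _ ≤ (A * (2 : ℝ)⁻¹ ^ j) * T0 + A * ((2 : ℝ)⁻¹ ^ j * T1) := by
            gcongr
            · exact h1 j
            · exact h0 j
        _ = _ := by ring
    have hq : ∀ x, ‖q j x‖ ≤ 2 * U := by
      intro x
      have a1 : ∀ x, ‖op (gam V (j + 1)) u x‖ ≤ U := fun x => by
        have := op_bound (a := gam V (j + 1)) hU x
        rwa [k0_gam, one_mul] at this
      refine (op_bound (a := kap V j) a1 x).trans ?_
      gcongr
      refine (k0_sub _ _).trans ?_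
      rw [k0_gs, k0_gs]; norm_num
    rw [e]
    refine (transfer (K := K) (v := op (gam V j) h) hq).trans ?_
    have hY := Y_nonneg (op (gam V j) h)
    have hn := n2_nonneg (pm (q j) (op (gam V j) h))
    have hk0 := k0_nonneg K
    have hk1 := k1_nonneg K
    calc _ ≤ 2 * (A * T0) ^ 2 * n2 (pm (q j) (op (gam V j) h)) +
        8 * Real.pi * (2 * U) ^ 2 * (A * T0) * (A * (T0 + T1) * (2 : ℝ)⁻¹ ^ j) * Y (op (gam V j) h) := by
          gcongr
      _ = _ := by ring
  refine (Finset.sum_le_sum term).trans ?_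
  rw [Finset.sum_add_distrib, ← Finset.mul_sum, ← Finset.mul_sum]
  have s1 := carl0 u h hU N
  have s2 := Y_sum h N
  calc _ ≤ 2 * (A * T0) ^ 2 * (2 * kC V ^ 2 * (9 * U ^ 2) * n2 h) +
      8 * Real.pi * (2 * U) ^ 2 * (A * T0) * (A * (T0 + T1)) * (4 * n2 h) := by gcongr
    _ = _ := by unfold carC; ring

end bump
end CJ

namespace CJ

section dual
variable {V : Type*} [NormedAddCommGroup V] [InnerProductSpace ℝ V]
  [FiniteDimensional ℝ V] [MeasurableSpace V] [BorelSpace V]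

/-- real inner product -/
def ip (a b : 𝓢(V, ℂ)) : ℝ := ∫ x, inner ℝ (a x) (b x)

lemma inner_polar (z w : ℂ) : (inner ℝ z w : ℝ) = (1 / 4) * (‖z + w‖ ^ 2 - ‖z - w‖ ^ 2) := by
  rw [norm_add_sq_real, norm_sub_sq_real]; ring

lemma int_ip (a b : 𝓢(V, ℂ)) : Integrable fun x => (inner ℝ (a x) (b x) : ℝ) := by
  simp only [inner_polar]
  exact ((integrable_sq (a + b)).sub (integrable_sq (a - b))).const_mul _

lemma ip_eq (a b : 𝓢(V, ℂ)) : ip a b = (1 / 4) * (n2 (a + b) - n2 (a - b)) := by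
  rw [ip, n2, n2, ← integral_sub (integrable_sq _) (integrable_sq _), ← integral_const_mul]
  congr 1; ext x; rw [inner_polar]; rfl

lemma ip_fourier (a b : 𝓢(V, ℂ)) : ip (𝓕 a) (𝓕 b) = ip a b := by
  rw [ip_eq, ip_eq, ← fourier_add', ← fourier_sub', n2_fourier, n2_fourier]

lemma ip_self (a : 𝓢(V, ℂ)) : ip a a = n2 a := by
  rw [ip, n2]; congr 1; ext x; exact real_inner_self_eq_norm_sq _

lemma ip_sum {ι : Type*} (s : Finset ι) (p : ι → 𝓢(V, ℂ)) (h : 𝓢(V, ℂ)) :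
    ip (∑ i ∈ s, p i) h = ∑ i ∈ s, ip (p i) h := by
  simp only [ip]
  rw [← integral_finsetSum _ fun i _ => int_ip _ _]
  congr 1; ext x; rw [sum_apply, sum_inner]

lemma ip_adj {r : V → ℝ} {a : 𝓢(V, ℂ)} (ha : ∀ x, a x = (r x : ℂ)) (p h : 𝓢(V, ℂ)) :
    ip (op a p) h = ip p (op a h) := by
  rw [← ip_fourier, ← ip_fourier p, ip, ip]
  congr 1; ext x
  rw [fourier_op_apply, fourier_op_apply, ha, ← Complex.real_smul, ← Complex.real_smul,
    real_inner_smul_left, real_inner_smul_right]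

lemma ip_pm_le (F G v : 𝓢(V, ℂ)) {ε : ℝ} (hε : 0 < ε) :
    ip (pm F G) v ≤ ε / 2 * n2 F + 1 / (2 * ε) * n2 (pm G v) := by
  rw [ip, n2, n2, ← integral_const_mul, ← integral_const_mul,
    ← integral_add ((integrable_sq _).const_mul _) ((integrable_sq _).const_mul _)]
  refine integral_mono (int_ip _ _)
    (((integrable_sq _).const_mul _).add ((integrable_sq _).const_mul _)) fun x => ?_
  refine (real_inner_le_norm _ _).trans ?_
  simp only [pm_apply, norm_mul]
  set a := ‖F x‖
  set b := ‖G x‖ * ‖v x‖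
  have e : a * ‖G x‖ * ‖v x‖ = a * b := by simp only [b]; ring
  rw [e]
  have : 0 ≤ (ε * a - b) ^ 2 / (2 * ε) := by positivity
  have e2 : (ε * a - b) ^ 2 / (2 * ε) = ε / 2 * a ^ 2 + 1 / (2 * ε) * b ^ 2 - a * b := by
    field_simp; ring
  linarith

lemma phi_tele {r : ℝ} (hr : 0 ≤ r) (N : ℕ) :
    ∑ j ∈ Finset.range N, (r / 2 ^ j) / ((1 + r / 2 ^ j) * (2 + r / 2 ^ j)) ≤ 1 := by
  have e : ∀ j : ℕ, (r / 2 ^ j) / ((1 + r / 2 ^ j) * (2 + r / 2 ^ j)) =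
      (r / 2 ^ j) / (1 + r / 2 ^ j) - (r / 2 ^ (j + 1)) / (1 + r / 2 ^ (j + 1)) := by
    intro j
    rw [pow_succ, ← div_div r]
    have : 0 ≤ r / 2 ^ j := by positivity
    set t := r / 2 ^ j
    field_simp; ring
  simp only [e]
  rw [Finset.sum_range_sub']
  have h1 : r / 2 ^ 0 / (1 + r / 2 ^ 0) ≤ 1 := by
    rw [div_le_one (by positivity)]; linarith
  have h2 : 0 ≤ r / 2 ^ N / (1 + r / 2 ^ N) := by positivity
  linarith

/-- the Carleson duality constant -/
def car2 (V : Type*) [NormedAddCommGroup V] [InnerProductSpace ℝ V] [FiniteDimensional ℝ V]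
    [MeasurableSpace V] [BorelSpace V] (c : ℕ) : ℝ :=
  2 * (carC V + 1) + 2 * ((2 : ℝ) ^ c * (1 + 2 ^ c) * (2 + 2 ^ c))

lemma carC_nonneg : 0 ≤ carC V := by
  have := k0_nonneg (theta V); have := k1_nonneg (theta V); have := Real.pi_pos
  unfold carC; positivity

lemma gam_apply (j : ℕ) (ξ : V) : gam V j ξ = ((Real.exp (-(‖ξ‖ / 2 ^ j) ^ 2) : ℝ) : ℂ) := by
  rw [gam, gs_apply]
  congr 2
  rw [div_pow, ← pow_mul, mul_comm j 2, pow_mul, inv_pow]; norm_num; field_simp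

lemma carl2 (c : ℕ) (m F : ℕ → 𝓢(V, ℂ)) (u : 𝓢(V, ℂ)) {U A : ℝ} (hU0 : 0 < U) (hA : 0 < A)
    (hU : ∀ x, ‖u x‖ ≤ U)
    (hm : ∀ j ξ, m j ξ ≠ 0 → 2 ^ j ≤ ‖ξ‖ ∧ ‖ξ‖ ≤ 2 ^ (j + 7))
    (h0 : ∀ j, k0 (m j) ≤ A) (h1 : ∀ j, k1 (m j) ≤ A * (2 : ℝ)⁻¹ ^ j)
    (hp : ∀ j ξ, 𝓕 (pm (F j) (op (m j) u)) ξ ≠ 0 → ‖ξ‖ ≤ 2 ^ (j + c)) (N : ℕ) :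
    n2 (∑ j ∈ Finset.range N, pm (F j) (op (m j) u)) ≤
      car2 V c * (A ^ 2 * U ^ 2) * ∑ j ∈ Finset.range N, n2 (F j) := by
  set p := fun j => pm (F j) (op (m j) u)
  set S1 := ∑ j ∈ Finset.range N, op (gam V j) (p j) with hS1
  set S2 := ∑ j ∈ Finset.range N, (p j - op (gam V j) (p j)) with hS2
  set SF := ∑ j ∈ Finset.range N, n2 (F j) with hSF
  have e : ∑ j ∈ Finset.range N, p j = S1 + S2 := by
    rw [hS1, hS2, ← Finset.sum_add_distrib]; congr 1; ext j; simp
  set M : ℝ := (2 : ℝ) ^ c * (1 + 2 ^ c) * (2 + 2 ^ c)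
  have hM : 0 ≤ M := by positivity
  have b2 : n2 S2 ≤ M * (A ^ 2 * U ^ 2 * SF) := by
    refine (n2_sum_le (Finset.range N) (M := M)
      (fun j ζ => if ‖ζ‖ ≤ 2 ^ (j + c) then 1 - Real.exp (-(‖ζ‖ / 2 ^ j) ^ 2) else 0) p S2 ?_ ?_).trans ?_
    · intro ζ
      have := phi_tele (norm_nonneg ζ) N
      calc _ ≤ ∑ j ∈ Finset.range N, M * ((‖ζ‖ / 2 ^ j) / ((1 + ‖ζ‖ / 2 ^ j) * (2 + ‖ζ‖ / 2 ^ j))) := by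
            refine Finset.sum_le_sum fun j _ => ?_
            split_ifs with h
            · have ht : ‖ζ‖ / 2 ^ j ≤ 2 ^ c := by
                rw [div_le_iff₀ (by positivity), ← pow_add, add_comm c]; exact h
              have ht0 : 0 ≤ ‖ζ‖ / 2 ^ j := by positivity
              set t := ‖ζ‖ / 2 ^ j
              have q1 : Real.exp (-t ^ 2) ≤ 1 := Real.exp_le_one_iff.2 (by nlinarith)
              have q2 : 1 - Real.exp (-t ^ 2) ≤ t ^ 2 := by
                have := Real.add_one_le_exp (-t ^ 2); linarith
              have q3 := Real.exp_pos (-t ^ 2)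
              calc (1 - Real.exp (-t ^ 2)) ^ 2 ≤ t ^ 2 := by nlinarith
                _ ≤ 2 ^ c * t := by nlinarith
                _ = 2 ^ c * ((1 + t) * (2 + t)) * (t / ((1 + t) * (2 + t))) := by field_simp
                _ ≤ 2 ^ c * ((1 + 2 ^ c) * (2 + 2 ^ c)) * (t / ((1 + t) * (2 + t))) := by gcongr
                _ = _ := by simp only [M]; ring
            · have : 0 ≤ M * ((‖ζ‖ / 2 ^ j) / ((1 + ‖ζ‖ / 2 ^ j) * (2 + ‖ζ‖ / 2 ^ j))) := by positivity
              simpa using this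
        _ ≤ M := by
            rw [← Finset.mul_sum]
            calc _ ≤ M * 1 := by gcongr
              _ = M := mul_one _
    · intro ζ
      rw [hS2, fourier_sum, sum_apply]
      refine (norm_sum_le _ _).trans (Finset.sum_le_sum fun j _ => ?_)
      rw [fourier_sub', sub_apply, fourier_op_apply, gam_apply]
      by_cases hz : 𝓕 (p j) ζ = 0
      · simp [hz]
      · rw [if_pos (hp j ζ hz)]
        have : 𝓕 (p j) ζ - ((Real.exp (-(‖ζ‖ / 2 ^ j) ^ 2) : ℝ) : ℂ) * 𝓕 (p j) ζ =
            ((1 - Real.exp (-(‖ζ‖ / 2 ^ j) ^ 2) : ℝ) : ℂ) * 𝓕 (p j) ζ := by push_cast; ring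
        rw [this, norm_mul, Complex.norm_real, Real.norm_of_nonneg]
        have : Real.exp (-(‖ζ‖ / 2 ^ j) ^ 2) ≤ 1 :=
          Real.exp_le_one_iff.2 (by have := sq_nonneg (‖ζ‖ / 2 ^ j); linarith)
        linarith
    · gcongr
      rw [hSF, Finset.mul_sum]
      refine Finset.sum_le_sum fun j _ => ?_
      rw [← mul_pow]
      refine n2_pm_le (fun x => (op_bound hU x).trans ?_) _
      gcongr; exact h0 j
  have b1 : n2 S1 ≤ (carC V + 1) * (A ^ 2 * U ^ 2) * SF := by
    set K := (carC V + 1) * (A ^ 2 * U ^ 2) with hK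
    have hcc := carC_nonneg (V := V)
    have hKp : 0 < K := by positivity
    have h2 : n2 S1 ≤ K / 2 * SF + 1 / (2 * K) *
        ∑ j ∈ Finset.range N, n2 (pm (op (m j) u) (op (gam V j) S1)) := by
      conv_lhs => rw [← ip_self]
      rw [show ip S1 S1 = ip (∑ j ∈ Finset.range N, op (gam V j) (p j)) S1 from rfl, ip_sum,
        hSF, Finset.mul_sum, Finset.mul_sum, ← Finset.sum_add_distrib]
      refine Finset.sum_le_sum fun j _ => ?_
      rw [ip_adj (fun x => gam_apply j x)]
      exact ip_pm_le _ _ _ hKp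
    have h3 := carl1 m u S1 hU hm h0 h1 N
    have h4 : ∑ j ∈ Finset.range N, n2 (pm (op (m j) u) (op (gam V j) S1)) ≤ K * n2 S1 := by
      refine h3.trans ?_
      have := n2_nonneg S1
      rw [hK]; gcongr; linarith
    have h5 : 1 / (2 * K) * ∑ j ∈ Finset.range N, n2 (pm (op (m j) u) (op (gam V j) S1)) ≤
        n2 S1 / 2 := by
      calc _ ≤ 1 / (2 * K) * (K * n2 S1) := by gcongr
        _ = _ := by field_simp
    linarith
  change n2 (∑ j ∈ Finset.range N, p j) ≤ _
  rw [e]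
  refine (n2_add_le _ _).trans ?_
  calc _ ≤ 2 * ((carC V + 1) * (A ^ 2 * U ^ 2) * SF) + 2 * (M * (A ^ 2 * U ^ 2 * SF)) := by gcongr
    _ = _ := by unfold car2; simp only [M]; ring

end dual
end CJ

namespace CJ

section para
variable {V : Type*} [NormedAddCommGroup V] [InnerProductSpace ℝ V]
  [FiniteDimensional ℝ V] [MeasurableSpace V] [BorelSpace V]

lemma fourier_smul' (c : ℂ) (f : 𝓢(V, ℂ)) : 𝓕 (c • f) = c • 𝓕 f := by
  simpa using map_smul (fourierTransformCLM ℂ (V := V) (E := ℂ)) c f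

lemma n2_smul (c : ℂ) (f : 𝓢(V, ℂ)) : n2 (c • f) = ‖c‖ ^ 2 * n2 f := by
  rw [n2, n2, ← integral_const_mul]; congr 1; ext x
  rw [smul_apply, norm_smul, mul_pow]

/-- bilinear commutator -/
def Rc (a f g : 𝓢(V, ℂ)) : 𝓢(V, ℂ) := op a (pm f g) - pm f (op a g)

lemma Rc_add_left (a f f' g : 𝓢(V, ℂ)) : Rc a (f + f') g = Rc a f g + Rc a f' g := by
  simp only [Rc, pm_add_left, op_add]; abel
lemma Rc_add_right (a f g g' : 𝓢(V, ℂ)) : Rc a f (g + g') = Rc a f g + Rc a f g' := by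
  simp only [Rc, pm_add_right, op_add]; abel

lemma decomp (a f g : 𝓢(V, ℂ)) (N : ℕ) :
    Rc a (op (chk V N) f) (op (chk V (N + 2)) g) =
      ∑ k ∈ Finset.range N, Rc a (op (chk V k) f) (op (psi V (k + 3)) g) +
      ∑ k ∈ Finset.range (N + 1), Rc a (op (psi V k) f) (op (chk V (k + 2)) g) := by
  have hc : ∀ k, ∀ h : 𝓢(V, ℂ), op (chk V (k + 1)) h = op (chk V k) h + op (psi V (k + 1)) h := by
    intro k h; rw [← op_add_symb, psi_succ]; congr 1; abel
  induction N with
  | zero => simp [psi]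
  | succ N ih =>
    rw [Finset.sum_range_succ, Finset.sum_range_succ _ (N + 1)]
    conv_lhs => rw [hc N f, Rc_add_left, show N + 1 + 2 = (N + 2) + 1 from rfl, hc (N + 2) g,
      Rc_add_right, ← hc (N + 2) g]
    rw [ih]
    simp only [show N + 1 + 2 = (N + 2) + 1 from rfl, show N + 3 = (N + 2) + 1 from rfl]
    abel

/-- general almost orthogonality on annuli -/
def annC (a b : ℕ) : ℝ := (1 + 2 ^ b) * (2 + 2 ^ b) / 2 ^ a

lemma ann_sum (a b N : ℕ) (ζ : V) [∀ j : ℕ, Decidable (2 ^ (j + a) ≤ ‖ζ‖ ∧ ‖ζ‖ ≤ 2 ^ (j + b))] :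
    ∑ j ∈ Finset.range N, (if 2 ^ (j + a) ≤ ‖ζ‖ ∧ ‖ζ‖ ≤ 2 ^ (j + b) then (1 : ℝ) else 0) ^ 2 ≤ annC a b := by
  have := phi_tele (norm_nonneg ζ) N
  have hC : 0 ≤ annC a b := by unfold annC; positivity
  calc _ ≤ ∑ j ∈ Finset.range N, annC a b * ((‖ζ‖ / 2 ^ j) / ((1 + ‖ζ‖ / 2 ^ j) * (2 + ‖ζ‖ / 2 ^ j))) := by
        refine Finset.sum_le_sum fun j _ => ?_
        split_ifs with h
        · have ht : ‖ζ‖ / 2 ^ j ≤ 2 ^ b := by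
            rw [div_le_iff₀ (by positivity), ← pow_add, add_comm b]; exact h.2
          have ht1 : 2 ^ a ≤ ‖ζ‖ / 2 ^ j := by
            rw [le_div_iff₀ (by positivity), ← pow_add, add_comm a]; exact h.1
          have ht0 : 0 < ‖ζ‖ / 2 ^ j := lt_of_lt_of_le (by positivity) ht1
          set t := ‖ζ‖ / 2 ^ j
          rw [annC, div_mul_div_comm, one_pow, le_div_iff₀ (by positivity), one_mul]
          calc 2 ^ a * ((1 + t) * (2 + t)) ≤ t * ((1 + 2 ^ b) * (2 + 2 ^ b)) := by gcongr
            _ = _ := by ring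
        · have : 0 ≤ annC a b * ((‖ζ‖ / 2 ^ j) / ((1 + ‖ζ‖ / 2 ^ j) * (2 + ‖ζ‖ / 2 ^ j))) := by positivity
          simpa using this
    _ ≤ annC a b * 1 := by rw [← Finset.mul_sum]; gcongr
    _ = _ := mul_one _

lemma ann_orth (a b N : ℕ) (p : ℕ → 𝓢(V, ℂ))
    (hp : ∀ j ζ, 𝓕 (p j) ζ ≠ 0 → 2 ^ (j + a) ≤ ‖ζ‖ ∧ ‖ζ‖ ≤ 2 ^ (j + b)) :
    n2 (∑ j ∈ Finset.range N, p j) ≤ annC a b * ∑ j ∈ Finset.range N, n2 (p j) := by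
  classical
  refine n2_sum_le (Finset.range N)
    (fun j ζ => if 2 ^ (j + a) ≤ ‖ζ‖ ∧ ‖ζ‖ ≤ 2 ^ (j + b) then (1 : ℝ) else 0) p _
    (fun ζ => ann_sum a b N ζ) fun ζ => ?_
  rw [fourier_sum, sum_apply]
  refine (norm_sum_le _ _).trans (Finset.sum_le_sum fun j _ => ?_)
  by_cases hz : 𝓕 (p j) ζ = 0
  · simp [hz]
  · rw [if_pos (hp j ζ hz), one_mul]

lemma psi_supp {k : ℕ} {ξ : V} (h : psi V (k + 1) ξ ≠ 0) : 2 ^ k ≤ ‖ξ‖ ∧ ‖ξ‖ ≤ 2 ^ (k + 2) := by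
  constructor
  · by_contra h'; push Not at h'; exact h (psi_zero_low h'.le)
  · by_contra h'; push Not at h'; exact h (psi_zero_high h'.le)
lemma psi_supp_high {k : ℕ} {ξ : V} (h : psi V k ξ ≠ 0) : ‖ξ‖ ≤ 2 ^ (k + 1) := by
  by_contra h'; push Not at h'; exact h (psi_zero_high h'.le)
lemma chk_supp {k : ℕ} {ξ : V} (h : chk V k ξ ≠ 0) : ‖ξ‖ ≤ 2 ^ (k + 1) := by
  by_contra h'; push Not at h'; exact h (chk_zero h'.le)

lemma op_supp {a f : 𝓢(V, ℂ)} {ξ : V} (h : 𝓕 (op a f) ξ ≠ 0) : a ξ ≠ 0 := by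
  rw [fourier_op_apply] at h; exact left_ne_zero_of_mul h

lemma pm_supp_ball {f g : 𝓢(V, ℂ)} {R1 R2 : ℝ} (hf : ∀ ξ, 𝓕 f ξ ≠ 0 → ‖ξ‖ ≤ R1)
    (hg : ∀ ξ, 𝓕 g ξ ≠ 0 → ‖ξ‖ ≤ R2) (ζ : V) (h : 𝓕 (pm f g) ζ ≠ 0) : ‖ζ‖ ≤ R1 + R2 := by
  by_contra hc
  refine h (fourier_pm_zero fun η h1 h2 => hc ?_)
  have e : ζ = η + (ζ - η) := by abel
  rw [e]; exact (norm_add_le _ _).trans (add_le_add (hf _ h1) (hg _ h2))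

lemma pm_supp_ann {f g : 𝓢(V, ℂ)} {R1 R2 : ℝ} (hf : ∀ ξ, 𝓕 f ξ ≠ 0 → ‖ξ‖ ≤ R1)
    (hg : ∀ ξ, 𝓕 g ξ ≠ 0 → R2 ≤ ‖ξ‖) (ζ : V) (h : 𝓕 (pm f g) ζ ≠ 0) : R2 - R1 ≤ ‖ζ‖ := by
  by_contra hc
  refine h (fourier_pm_zero fun η h1 h2 => hc ?_)
  have := norm_sub_le ζ η
  linarith [hf _ h1, hg _ h2]

/-- hypotheses on the symbol -/
structure Hyp (a : 𝓢(V, ℂ)) (W : ℕ → ℝ) (A B q : ℝ) : Prop where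
  A0 : 0 < A
  B1 : 1 ≤ B
  q0 : 0 < q
  q1 : q < 1
  W0 : ∀ k, 0 < W k
  K0 : ∀ j, k0 (pm a (psi V j)) ≤ A * W j
  K1 : ∀ j, k1 (pm a (psi V j)) ≤ A * (2 : ℝ)⁻¹ ^ j * W j
  G1 : ∀ j k, j ≤ k + 2 → W j ≤ B * W k
  G2 : ∀ j k, j ≤ k → W j ≤ B * q ^ (k - j) * W k

variable {a : 𝓢(V, ℂ)} {W : ℕ → ℝ} {A B q : ℝ}

/-- localized symbol equals the symbol on an annulus -/
lemma loc_symb (a : 𝓢(V, ℂ)) (k : ℕ) {ξ : V} (h1 : 2 ^ (k + 1) ≤ ‖ξ‖) (h2 : ‖ξ‖ ≤ 2 ^ (k + 5)) :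
    (∑ i ∈ Finset.range 5, pm a (psi V (k + 1 + i))) ξ = a ξ := by
  rw [← pm_sum_right]
  have : ∑ i ∈ Finset.range 5, psi V (k + 1 + i) = chk V (k + 5) - chk V k := by
    simp only [Finset.sum_range_succ, Finset.sum_range_zero, show ∀ i, k + 1 + i = (k + i) + 1 from
      fun i => by omega, psi_succ, show k + 0 = k from rfl]
    abel
  rw [this, pm_apply, sub_apply, chk_one h2, chk_zero h1]; ring

lemma op_congr {a b f : 𝓢(V, ℂ)} (h : ∀ ξ, 𝓕 f ξ ≠ 0 → a ξ = b ξ) : op a f = op b f := by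
  apply fourier_inj; intro ξ
  rw [fourier_op_apply, fourier_op_apply]
  by_cases hz : 𝓕 f ξ = 0
  · simp [hz]
  · rw [h ξ hz]

/-- constant of term I -/
def cI (V : Type*) [NormedAddCommGroup V] [InnerProductSpace ℝ V] [FiniteDimensional ℝ V]
    [MeasurableSpace V] [BorelSpace V] (A B : ℝ) : ℝ := annC 1 5 * (k0 (chi V) * (20 * A * B)) ^ 2

lemma termI (H : Hyp a W A B q) (f g : 𝓢(V, ℂ)) {L Eg : ℝ} (hL : 0 ≤ L)
    (hf : ∀ x y, ‖f x - f y‖ ≤ L * ‖x - y‖)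
    (hE : ∀ N, ∑ k ∈ Finset.range N, ((2 : ℝ)⁻¹ ^ k * W k) ^ 2 * n2 (op (psi V k) g) ≤ Eg) (N : ℕ) :
    n2 (∑ k ∈ Finset.range N, Rc a (op (chk V k) f) (op (psi V (k + 3)) g)) ≤
      cI V A B * (L ^ 2 * Eg) := by
  set T := fun k => Rc a (op (chk V k) f) (op (psi V (k + 3)) g)
  have hfs : ∀ k ξ, 𝓕 (op (chk V k) f) ξ ≠ 0 → ‖ξ‖ ≤ 2 ^ (k + 1) := fun k ξ h => chk_supp (op_supp h)
  have hgs : ∀ k ξ, 𝓕 (op (psi V (k + 3)) g) ξ ≠ 0 → 2 ^ (k + 2) ≤ ‖ξ‖ ∧ ‖ξ‖ ≤ 2 ^ (k + 4) :=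
    fun k ξ h => psi_supp (op_supp h)
  have hann : ∀ k (g' : 𝓢(V, ℂ)), (∀ ξ, 𝓕 g' ξ ≠ 0 → 2 ^ (k + 2) ≤ ‖ξ‖ ∧ ‖ξ‖ ≤ 2 ^ (k + 4)) →
      ∀ ξ, 𝓕 (pm (op (chk V k) f) g') ξ ≠ 0 → 2 ^ (k + 1) ≤ ‖ξ‖ ∧ ‖ξ‖ ≤ 2 ^ (k + 5) := by
    intro k g' hg' ξ h
    have p1 := pm_supp_ann (hfs k) (fun ξ h => (hg' ξ h).1) ξ h
    have p2 := pm_supp_ball (hfs k) (fun ξ h => (hg' ξ h).2) ξ h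
    have : (0 : ℝ) < 2 ^ k := by positivity
    rw [pow_add] at p1 p2 ⊢
    rw [pow_add] at p1 p2 ⊢
    constructor <;> nlinarith
  set at' := fun k => ∑ i ∈ Finset.range 5, pm a (psi V (k + 1 + i))
  have eT : ∀ k, T k = op (at' k) (pm (op (chk V k) f) (op (psi V (k + 3)) g)) -
      pm (op (chk V k) f) (op (at' k) (op (psi V (k + 3)) g)) := by
    intro k
    simp only [T, Rc]
    congr 1
    · refine op_congr fun ξ h => ?_
      obtain ⟨h1, h2⟩ := hann k _ (hgs k) ξ h
      exact (loc_symb a k h1 h2).symm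
    · congr 1
      refine op_congr fun ξ h => ?_
      obtain ⟨h1, h2⟩ := hgs k ξ h
      exact (loc_symb a k (le_trans (by gcongr <;> norm_num) h1) (h2.trans (by gcongr <;> norm_num))).symm
  have hS : ∀ k ξ, 𝓕 (T k) ξ ≠ 0 → 2 ^ (k + 1) ≤ ‖ξ‖ ∧ ‖ξ‖ ≤ 2 ^ (k + 5) := by
    intro k ξ h
    simp only [T, Rc] at h
    rw [fourier_sub', sub_apply] at h
    by_cases hz : 𝓕 (pm (op (chk V k) f) (op a (op (psi V (k + 3)) g))) ξ = 0
    · rw [hz, sub_zero, fourier_op_apply] at h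
      exact hann k _ (hgs k) ξ (right_ne_zero_of_mul h)
    · refine hann k _ (fun ξ h => hgs k ξ ?_) ξ hz
      rw [fourier_op_apply] at h; exact right_ne_zero_of_mul h
  refine (ann_orth 1 5 N T hS).trans ?_
  have hA := H.A0
  have hB := H.B1
  have hc0 := k0_nonneg (chi V)
  have hann0 : 0 ≤ annC 1 5 := by unfold annC; positivity
  rw [cI, mul_assoc]
  gcongr
  have hk : ∀ k, n2 (T k) ≤ (k0 (chi V) * (20 * A * B)) ^ 2 * L ^ 2 *
      (((2 : ℝ)⁻¹ ^ (k + 3) * W (k + 3)) ^ 2 * n2 (op (psi V (k + 3)) g)) := by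
    intro k
    have hW := H.W0 (k + 3)
    have k1b : k1 (at' k) ≤ 20 * A * B * ((2 : ℝ)⁻¹ ^ (k + 3) * W (k + 3)) := by
      refine (k1_sum _ _).trans ?_
      have : ∀ i ∈ Finset.range 5, k1 (pm a (psi V (k + 1 + i))) ≤
          A * (2 : ℝ)⁻¹ ^ (k + 1) * (B * W (k + 3)) := by
        intro i hi
        have hi := Finset.mem_range.1 hi
        refine (H.K1 _).trans ?_
        have h1 := H.G1 (k + 1 + i) (k + 3) (by omega)
        have h2 : (2 : ℝ)⁻¹ ^ (k + 1 + i) ≤ (2 : ℝ)⁻¹ ^ (k + 1) :=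
          pow_le_pow_of_le_one (by norm_num) (by norm_num) (by omega)
        have := H.W0 (k + 1 + i)
        gcongr
      refine (Finset.sum_le_sum this).trans (le_of_eq ?_)
      simp [pow_succ]; ring
    rw [eT]
    refine (comm_bound (L := k0 (chi V) * L) (by positivity) (fun x y => ?_)).trans ?_
    · have := op_lip (a := chk V k) hf x y
      rwa [k0_chk] at this
    · have := n2_nonneg (op (psi V (k + 3)) g)
      have hk1 := k1_nonneg (at' k)
      calc _ ≤ (k0 (chi V) * L * (20 * A * B * ((2 : ℝ)⁻¹ ^ (k + 3) * W (k + 3)))) ^ 2 *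
            n2 (op (psi V (k + 3)) g) := by gcongr
        _ = _ := by ring
  calc ∑ k ∈ Finset.range N, n2 (T k) ≤ ∑ k ∈ Finset.range N, (k0 (chi V) * (20 * A * B)) ^ 2 * L ^ 2 *
      (((2 : ℝ)⁻¹ ^ (k + 3) * W (k + 3)) ^ 2 * n2 (op (psi V (k + 3)) g)) := Finset.sum_le_sum fun k _ => hk k
    _ = (k0 (chi V) * (20 * A * B)) ^ 2 * L ^ 2 * ∑ k ∈ Finset.range N,
      (((2 : ℝ)⁻¹ ^ (k + 3) * W (k + 3)) ^ 2 * n2 (op (psi V (k + 3)) g)) := by rw [← Finset.mul_sum]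
    _ ≤ (k0 (chi V) * (20 * A * B)) ^ 2 * L ^ 2 * Eg := by
        gcongr
        refine le_trans ?_ (hE (N + 3))
        rw [add_comm N 3, Finset.sum_range_add]
        simp only [add_comm 3]
        refine le_add_of_nonneg_left (Finset.sum_nonneg fun i _ => ?_)
        have := n2_nonneg (op (psi V i) g); positivity
    _ = _ := by ring

end para
end CJ

namespace CJ

lemma geo_le {q : ℝ} (q0 : 0 < q) (q1 : q < 1) (n : ℕ) : ∑ j ∈ Finset.range n, q ^ j ≤ (1 - q)⁻¹ := by
  rw [← tsum_geometric_of_lt_one q0.le q1]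
  exact (summable_geometric_of_lt_one q0.le q1).sum_le_tsum _ fun i _ => by positivity

lemma geo_shift {q : ℝ} (q0 : 0 < q) (q1 : q < 1) (m n : ℕ) :
    ∑ j ∈ Finset.range n, (if m ≤ j then q ^ (j - m) else 0) ≤ (1 - q)⁻¹ := by
  refine le_trans ?_ (geo_le q0 q1 n)
  calc _ ≤ ∑ j ∈ Finset.range (m + n), (if m ≤ j then q ^ (j - m) else 0) := by
        refine Finset.sum_le_sum_of_subset_of_nonneg ?_ fun i _ _ => by split_ifs <;> positivity
        intro x hx; simp at hx ⊢; omega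
    _ = _ := by
        rw [Finset.sum_range_add, Finset.sum_eq_zero, zero_add]
        · simp
        · intro i hi
          rw [if_neg (by have := Finset.mem_range.1 hi; omega)]

section para
variable {V : Type*} [NormedAddCommGroup V] [InnerProductSpace ℝ V]
  [FiniteDimensional ℝ V] [MeasurableSpace V] [BorelSpace V]
variable {a : 𝓢(V, ℂ)} {W : ℕ → ℝ} {A B q : ℝ}

/-- constant D -/
def cD (A B q : ℝ) : ℝ := A * B * (1 - q)⁻¹

lemma Hyp.D0 (H : Hyp a W A B q) : 0 < cD A B q := by
  have := H.A0; have := H.B1; have := H.q1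
  have : 0 < (1 - q)⁻¹ := inv_pos.2 (by linarith)
  unfold cD; positivity

lemma Hyp.k0chk (H : Hyp a W A B q) (k : ℕ) : k0 (pm a (chk V k)) ≤ cD A B q * W k := by
  have hA := H.A0; have hB := H.B1; have hW := H.W0 k
  rw [← psi_sum, pm_sum_right]
  refine (k0_sum _ _).trans ?_
  calc _ ≤ ∑ j ∈ Finset.range (k + 1), A * B * W k * q ^ (k - j) := by
        refine Finset.sum_le_sum fun j hj => ?_
        refine (H.K0 j).trans ?_
        have := H.G2 j k (by have := Finset.mem_range.1 hj; omega)
        calc A * W j ≤ A * (B * q ^ (k - j) * W k) := by gcongr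
          _ = _ := by ring
    _ = A * B * W k * ∑ j ∈ Finset.range (k + 1), q ^ j := by
        rw [← Finset.mul_sum]; congr 1
        have := Finset.sum_range_reflect (fun j => q ^ j) (k + 1)
        rw [← this]; simp
    _ ≤ A * B * W k * (1 - q)⁻¹ := by
        have := geo_le H.q0 H.q1 (k + 1); gcongr
    _ = _ := by unfold cD; ring

lemma Hyp.abound (H : Hyp a W A B q) {k : ℕ} {ζ : V} (h : ‖ζ‖ ≤ 2 ^ k) : ‖a ζ‖ ≤ cD A B q * W k := by
  have := norm_le_k0 (pm a (chk V k)) ζ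
  rw [pm_apply, chk_one h, mul_one] at this
  exact this.trans (H.k0chk k)

lemma termIIa (H : Hyp a W A B q) (f g : 𝓢(V, ℂ)) {U Ef : ℝ} (hU : 0 ≤ U)
    (hg : ∀ x, ‖g x‖ ≤ U)
    (hE : ∀ N, ∑ k ∈ Finset.range N, (W k) ^ 2 * n2 (op (psi V k) f) ≤ Ef) (M : ℕ) :
    n2 (op a (∑ k ∈ Finset.range M, pm (op (psi V k) f) (op (chk V (k + 2)) g))) ≤
      (cD A B q * B ^ 3) ^ 2 * (1 - q)⁻¹ * k0 (chi V) ^ 2 * (U ^ 2 * Ef) := by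
  classical
  have hA := H.A0; have hB := H.B1; have hD := H.D0
  set F := fun k => pm (op (psi V k) f) (op (chk V (k + 2)) g)
  have hF : ∀ k ζ, 𝓕 (F k) ζ ≠ 0 → ‖ζ‖ ≤ 2 ^ (k + 4) := by
    intro k ζ h
    refine (pm_supp_ball (fun ξ h => psi_supp_high (op_supp h)) (fun ξ h => chk_supp (op_supp h)) ζ h).trans ?_
    have : (0 : ℝ) < 2 ^ k := by positivity
    simp only [pow_add]; nlinarith
  have key := n2_sum_le (Finset.range M)
    (fun k ζ => if ‖ζ‖ ≤ 2 ^ (k + 4) then ‖a ζ‖ / W k else 0) (fun k => (W k : ℂ) • F k)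
    (op a (∑ k ∈ Finset.range M, F k)) (M := (cD A B q * B ^ 3) ^ 2 * (1 - q)⁻¹) ?_ ?_
  · refine key.trans ?_
    have q' : 0 < (1 - q)⁻¹ := inv_pos.2 (by linarith [H.q1])
    rw [mul_assoc _ (k0 (chi V) ^ 2)]
    gcongr
    have hk : ∀ k, n2 ((W k : ℂ) • F k) ≤ k0 (chi V) ^ 2 * U ^ 2 * ((W k) ^ 2 * n2 (op (psi V k) f)) := by
      intro k
      rw [n2_smul]
      have := n2_pm_le (F := op (chk V (k + 2)) g) (M := k0 (chi V) * U)
        (fun x => by have := op_bound (a := chk V (k + 2)) hg x; rwa [k0_chk] at this) (op (psi V k) f)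
      have hW := H.W0 k
      rw [Complex.norm_real, Real.norm_of_nonneg hW.le]
      calc _ ≤ (W k) ^ 2 * ((k0 (chi V) * U) ^ 2 * n2 (op (psi V k) f)) := by gcongr
        _ = _ := by ring
    refine (Finset.sum_le_sum fun k _ => hk k).trans ?_
    rw [← Finset.mul_sum, mul_assoc]
    gcongr
    exact hE M
  · intro ζ
    have hex : ∃ k : ℕ, ‖ζ‖ ≤ 2 ^ (k + 4) := by
      obtain ⟨n, hn⟩ := pow_unbounded_of_one_lt ‖ζ‖ (one_lt_two)
      exact ⟨n, hn.le.trans (by gcongr <;> norm_num)⟩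
    set m := Nat.find hex
    have hm : ‖ζ‖ ≤ 2 ^ (m + 4) := Nat.find_spec hex
    have ha := H.abound hm
    have g1 := H.G1 (m + 4) (m + 2) (by omega)
    have g2 := H.G1 (m + 2) m (by omega)
    calc _ ≤ ∑ k ∈ Finset.range M, (cD A B q * B ^ 3) ^ 2 * (if m ≤ k then q ^ (k - m) else 0) := by
          refine Finset.sum_le_sum fun k _ => ?_
          split_ifs with h1 h2 h2
          · have g3 := H.G2 m k h2
            have hW := H.W0 k
            have hq : 0 < q ^ (k - m) := pow_pos H.q0 _
            have : ‖a ζ‖ / W k ≤ cD A B q * B ^ 3 * q ^ (k - m) := by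
              rw [div_le_iff₀ hW]
              calc ‖a ζ‖ ≤ cD A B q * (B * (B * (B * q ^ (k - m) * W k))) := by
                    refine ha.trans ?_
                    gcongr
                    refine g1.trans ?_
                    gcongr
                    refine g2.trans ?_
                    gcongr
                _ = _ := by ring
            calc _ ≤ (cD A B q * B ^ 3 * q ^ (k - m)) ^ 2 := by gcongr
              _ = (cD A B q * B ^ 3) ^ 2 * (q ^ (k - m) * q ^ (k - m)) := by ring
              _ ≤ (cD A B q * B ^ 3) ^ 2 * (q ^ (k - m) * 1) := by
                  gcongr; exact pow_le_one₀ H.q0.le H.q1.le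
              _ = _ := by ring
          · exact absurd (Nat.find_min' hex h1) h2
          · have := H.q0; rw [zero_pow two_ne_zero]; positivity
          · simp
      _ ≤ _ := by
          rw [← Finset.mul_sum]; gcongr; exact geo_shift H.q0 H.q1 _ _
  · intro ζ
    rw [fourier_op_apply, fourier_sum, sum_apply, norm_mul]
    refine (mul_le_mul_of_nonneg_left (norm_sum_le _ _) (norm_nonneg _)).trans ?_
    rw [Finset.mul_sum]
    refine Finset.sum_le_sum fun k _ => ?_
    have hW := H.W0 k
    by_cases hz : 𝓕 (F k) ζ = 0
    · rw [hz]; simp only [norm_zero, mul_zero]; split_ifs <;> positivity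
    · rw [if_pos (hF k ζ hz), fourier_smul', smul_apply, norm_smul, Complex.norm_real,
        Real.norm_of_nonneg hW.le]
      apply le_of_eq; field_simp

lemma termIIb_low (H : Hyp a W A B q) (f g : 𝓢(V, ℂ)) {U Ef : ℝ} (hU : 0 ≤ U)
    (hg : ∀ x, ‖g x‖ ≤ U)
    (hE : ∀ N, ∑ k ∈ Finset.range N, (W k) ^ 2 * n2 (op (psi V k) f) ≤ Ef) (M : ℕ) :
    n2 (∑ k ∈ Finset.range M, pm (op (psi V (k + 3)) f) (op (pm a (chk V k)) g)) ≤
      annC 1 5 * (cD A B q * B) ^ 2 * (U ^ 2 * Ef) := by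
  have hA := H.A0; have hB := H.B1; have hD := H.D0
  refine (ann_orth 1 5 M _ fun k ξ h => ?_).trans ?_
  · have hgs : ∀ ξ, 𝓕 (op (psi V (k + 3)) f) ξ ≠ 0 → 2 ^ (k + 2) ≤ ‖ξ‖ ∧ ‖ξ‖ ≤ 2 ^ (k + 4) :=
      fun ξ h => psi_supp (op_supp h)
    have hfs : ∀ ξ, 𝓕 (op (pm a (chk V k)) g) ξ ≠ 0 → ‖ξ‖ ≤ 2 ^ (k + 1) := by
      intro ξ h
      have := op_supp h
      rw [pm_apply] at this
      exact chk_supp (right_ne_zero_of_mul this)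
    rw [pm_comm] at h
    have p1 := pm_supp_ann hfs (fun ξ h => (hgs ξ h).1) ξ h
    have p2 := pm_supp_ball hfs (fun ξ h => (hgs ξ h).2) ξ h
    have : (0 : ℝ) < 2 ^ k := by positivity
    rw [pow_add] at p1 p2 ⊢
    rw [pow_add] at p1 p2 ⊢
    constructor <;> nlinarith
  · have hann0 : 0 ≤ annC 1 5 := by unfold annC; positivity
    rw [mul_assoc]; gcongr
    have hk : ∀ k, n2 (pm (op (psi V (k + 3)) f) (op (pm a (chk V k)) g)) ≤
        (cD A B q * B) ^ 2 * U ^ 2 * ((W (k + 3)) ^ 2 * n2 (op (psi V (k + 3)) f)) := by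
      intro k
      have hW := H.W0 (k + 3)
      refine (n2_pm_le (M := cD A B q * (B * W (k + 3)) * U) (fun x => ?_) _).trans (le_of_eq (by ring))
      refine (op_bound hg x).trans ?_
      gcongr
      refine (H.k0chk k).trans ?_
      gcongr
      exact H.G1 _ _ (by omega)
    refine (Finset.sum_le_sum fun k _ => hk k).trans ?_
    rw [← Finset.mul_sum, mul_assoc]
    gcongr
    refine le_trans ?_ (hE (3 + M))
    rw [Finset.sum_range_add]
    simp only [add_comm 3]
    refine le_add_of_nonneg_left (Finset.sum_nonneg fun i _ => ?_)
    have := n2_nonneg (op (psi V i) f); positivity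

lemma termIIb_first (H : Hyp a W A B q) (f g : 𝓢(V, ℂ)) {U Ef : ℝ} (hU : 0 ≤ U)
    (hg : ∀ x, ‖g x‖ ≤ U)
    (hE : ∀ N, ∑ k ∈ Finset.range N, (W k) ^ 2 * n2 (op (psi V k) f) ≤ Ef) :
    n2 (∑ k ∈ Finset.range 3, pm (op (psi V k) f) (op (pm a (chk V (k + 2))) g)) ≤
      3 * (cD A B q * B) ^ 2 * (U ^ 2 * Ef) := by
  have hA := H.A0; have hB := H.B1; have hD := H.D0
  refine (n2_sum_le_card _ _).trans ?_
  rw [Finset.card_range, mul_assoc]; push_cast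
  gcongr
  have hk : ∀ k, n2 (pm (op (psi V k) f) (op (pm a (chk V (k + 2))) g)) ≤
      (cD A B q * B) ^ 2 * U ^ 2 * ((W k) ^ 2 * n2 (op (psi V k) f)) := by
    intro k
    have hW := H.W0 k
    refine (n2_pm_le (M := cD A B q * (B * W k) * U) (fun x => ?_) _).trans (le_of_eq (by ring))
    refine (op_bound hg x).trans ?_
    gcongr
    refine (H.k0chk _).trans ?_
    gcongr
    exact H.G1 _ _ (by omega)
  refine (Finset.sum_le_sum fun k _ => hk k).trans ?_
  rw [← Finset.mul_sum, mul_assoc]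
  gcongr
  exact hE 3

lemma termIIb_car (H : Hyp a W A B q) (f g : 𝓢(V, ℂ)) {U Ef : ℝ} (hU : 0 < U)
    (hg : ∀ x, ‖g x‖ ≤ U)
    (hE : ∀ N, ∑ k ∈ Finset.range N, (W k) ^ 2 * n2 (op (psi V k) f) ≤ Ef) (i : ℕ) (hi : i < 5) (M : ℕ) :
    n2 (∑ k ∈ Finset.range M, pm (op (psi V (k + 3)) f) (op (pm a (psi V (k + 1 + i))) g)) ≤
      car2 V 7 * (A * B) ^ 2 * (U ^ 2 * Ef) := by
  have hA := H.A0; have hB := H.B1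
  have hcar : 0 ≤ car2 V 7 := by
    have := carC_nonneg (V := V); unfold car2; positivity
  set m : ℕ → 𝓢(V, ℂ) := fun k => ((W (k + 3))⁻¹ : ℂ) • pm a (psi V (k + 1 + i))
  set F : ℕ → 𝓢(V, ℂ) := fun k => (W (k + 3) : ℂ) • op (psi V (k + 3)) f
  have e : ∀ k, pm (op (psi V (k + 3)) f) (op (pm a (psi V (k + 1 + i))) g) = pm (F k) (op (m k) g) := by
    intro k
    have hW : (W (k + 3) : ℂ) ≠ 0 := by exact_mod_cast (H.W0 (k + 3)).ne'
    have : op (m k) g = ((W (k + 3))⁻¹ : ℂ) • op (pm a (psi V (k + 1 + i))) g := by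
      apply fourier_inj; intro x
      simp only [fourier_op_apply, fourier_smul', smul_apply, m, smul_eq_mul, pm_apply]; ring
    rw [this]
    ext x
    simp only [pm_apply, F, smul_apply, smul_eq_mul]
    field_simp
  have ms : ∀ j ξ, m j ξ ≠ 0 → psi V (j + i + 1) ξ ≠ 0 := by
    intro j ξ h
    simp only [m, smul_apply, pm_apply, smul_eq_mul] at h
    have := right_ne_zero_of_mul (right_ne_zero_of_mul h)
    rwa [show j + 1 + i = j + i + 1 by omega] at this
  have ms' : ∀ j ξ, m j ξ ≠ 0 → 2 ^ j ≤ ‖ξ‖ ∧ ‖ξ‖ ≤ 2 ^ (j + 6) := by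
    intro j ξ h
    obtain ⟨h1, h2⟩ := psi_supp (ms j ξ h)
    exact ⟨le_trans (pow_le_pow_right₀ (by norm_num) (by omega)) h1,
      h2.trans (pow_le_pow_right₀ (by norm_num) (by omega))⟩
  simp only [e]
  have hW := fun k => H.W0 k
  have hn : ∀ k, ‖((W (k + 3))⁻¹ : ℂ)‖ = (W (k + 3))⁻¹ := fun k => by
    rw [norm_inv, Complex.norm_real, Real.norm_of_nonneg (hW _).le]
  refine (carl2 7 m F g hU (A := A * B) (by positivity) hg (fun j ξ h => ?_) (fun j => ?_) (fun j => ?_)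
    (fun j ξ h => ?_) M).trans ?_
  · obtain ⟨h1, h2⟩ := ms' j ξ h
    exact ⟨h1, h2.trans (by gcongr <;> norm_num)⟩
  · rw [k0_smul, hn]
    have := hW (j + 3)
    rw [inv_mul_le_iff₀ (hW _)]
    have g1 := H.G1 (j + 1 + i) (j + 3) (by omega)
    calc _ ≤ A * W (j + 1 + i) := H.K0 _
      _ ≤ A * (B * W (j + 3)) := by gcongr
      _ = _ := by ring
  · rw [k1_smul, hn]
    have := hW (j + 3)
    rw [inv_mul_le_iff₀ (hW _)]
    have g1 := H.G1 (j + 1 + i) (j + 3) (by omega)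
    have h2 : (2 : ℝ)⁻¹ ^ (j + 1 + i) ≤ (2 : ℝ)⁻¹ ^ j :=
      pow_le_pow_of_le_one (by norm_num) (by norm_num) (by omega)
    have := hW (j + 1 + i)
    calc _ ≤ A * (2 : ℝ)⁻¹ ^ (j + 1 + i) * W (j + 1 + i) := H.K1 _
      _ ≤ A * (2 : ℝ)⁻¹ ^ j * (B * W (j + 3)) := by gcongr
      _ = _ := by ring
  · have hfs : ∀ ξ, 𝓕 (F j) ξ ≠ 0 → ‖ξ‖ ≤ 2 ^ (j + 4) := by
      intro ξ h
      simp only [F, fourier_smul', smul_apply, smul_eq_mul] at h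
      exact psi_supp_high (op_supp (right_ne_zero_of_mul h))
    refine (pm_supp_ball hfs (fun ξ h => (ms' j ξ (op_supp h)).2) ξ h).trans ?_
    have : (0 : ℝ) < 2 ^ j := by positivity
    simp only [pow_add]; nlinarith
  · calc _ = car2 V 7 * ((A * B) ^ 2 * U ^ 2) * ∑ j ∈ Finset.range M,
          (W (j + 3)) ^ 2 * n2 (op (psi V (j + 3)) f) := by
          congr 1; refine Finset.sum_congr rfl fun j _ => ?_
          simp only [F]
          rw [n2_smul, Complex.norm_real, Real.norm_of_nonneg (hW _).le]
      _ ≤ car2 V 7 * ((A * B) ^ 2 * U ^ 2) * Ef := by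
          gcongr
          refine le_trans ?_ (hE (3 + M))
          rw [Finset.sum_range_add]
          simp only [add_comm 3]
          refine le_add_of_nonneg_left (Finset.sum_nonneg fun i _ => ?_)
          have := n2_nonneg (op (psi V i) f); positivity
      _ = _ := by ring

/-- constants for II -/
def cIIb (V : Type*) [NormedAddCommGroup V] [InnerProductSpace ℝ V] [FiniteDimensional ℝ V]
    [MeasurableSpace V] [BorelSpace V] (A B q : ℝ) : ℝ :=
  2 * (3 * (cD A B q * B) ^ 2) + 4 * (annC 1 5 * (cD A B q * B) ^ 2) +
    4 * (25 * (car2 V 7 * (A * B) ^ 2))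

lemma termIIb (H : Hyp a W A B q) (f g : 𝓢(V, ℂ)) {U Ef : ℝ} (hU : 0 < U)
    (hg : ∀ x, ‖g x‖ ≤ U)
    (hE : ∀ N, ∑ k ∈ Finset.range N, (W k) ^ 2 * n2 (op (psi V k) f) ≤ Ef) (M : ℕ) :
    n2 (∑ k ∈ Finset.range (3 + M), pm (op (psi V k) f) (op a (op (chk V (k + 2)) g))) ≤
      cIIb V A B q * (U ^ 2 * Ef) := by
  have ek : ∀ k, op (pm a (chk V (k + 5))) g = op (pm a (chk V k)) g +
      ∑ i ∈ Finset.range 5, op (pm a (psi V (k + 1 + i))) g := by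
    intro k
    rw [← op_sum_symb, ← op_add_symb, ← pm_sum_right, ← pm_add_right]
    congr 2
    simp only [Finset.sum_range_succ, Finset.sum_range_zero, show ∀ i, k + 1 + i = (k + i) + 1 from
      fun i => by omega, psi_succ, show k + 0 = k from rfl]
    abel
  have e : ∑ k ∈ Finset.range (3 + M), pm (op (psi V k) f) (op a (op (chk V (k + 2)) g)) =
      ∑ k ∈ Finset.range 3, pm (op (psi V k) f) (op (pm a (chk V (k + 2))) g) +
      (∑ k ∈ Finset.range M, pm (op (psi V (k + 3)) f) (op (pm a (chk V k)) g) +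
      ∑ i ∈ Finset.range 5, ∑ k ∈ Finset.range M,
        pm (op (psi V (k + 3)) f) (op (pm a (psi V (k + 1 + i))) g)) := by
    simp only [op_op]
    rw [Finset.sum_range_add]
    congr 1
    rw [Finset.sum_comm, ← Finset.sum_add_distrib]
    refine Finset.sum_congr rfl fun k _ => ?_
    rw [show 3 + k + 2 = k + 5 by omega, ek, pm_add_right, pm_sum_right, add_comm 3 k]
  rw [e]
  have h1 := termIIb_first H f g hU.le hg hE
  have h2 := termIIb_low H f g hU.le hg hE M
  have h3 : n2 (∑ i ∈ Finset.range 5, ∑ k ∈ Finset.range M,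
        pm (op (psi V (k + 3)) f) (op (pm a (psi V (k + 1 + i))) g)) ≤
      25 * (car2 V 7 * (A * B) ^ 2 * (U ^ 2 * Ef)) := by
    refine (n2_sum_le_card _ _).trans ?_
    calc _ ≤ ((Finset.range 5).card : ℝ) * ∑ i ∈ Finset.range 5, car2 V 7 * (A * B) ^ 2 * (U ^ 2 * Ef) := by
          gcongr with i hi
          exact termIIb_car H f g hU hg hE i (Finset.mem_range.1 hi) M
      _ = _ := by simp; ring
  refine (n2_add_le _ _).trans ?_
  have h4 := n2_add_le (∑ k ∈ Finset.range M, pm (op (psi V (k + 3)) f) (op (pm a (chk V k)) g))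
    (∑ i ∈ Finset.range 5, ∑ k ∈ Finset.range M,
        pm (op (psi V (k + 3)) f) (op (pm a (psi V (k + 1 + i))) g))
  unfold cIIb
  linarith

/-- constant of the abstract theorem -/
def cAbs (V : Type*) [NormedAddCommGroup V] [InnerProductSpace ℝ V] [FiniteDimensional ℝ V]
    [MeasurableSpace V] [BorelSpace V] (A B q : ℝ) : ℝ :=
  2 * cI V A B + 4 * ((cD A B q * B ^ 3) ^ 2 * (1 - q)⁻¹ * k0 (chi V) ^ 2) + 4 * cIIb V A B q

theorem abstract_thm (H : Hyp a W A B q) (f g : 𝓢(V, ℂ)) {U Ef L Eg : ℝ} (hU : 0 < U)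
    (hg : ∀ x, ‖g x‖ ≤ U) (hL : 0 ≤ L)
    (hf : ∀ x y, ‖f x - f y‖ ≤ L * ‖x - y‖)
    (hEg : ∀ N, ∑ k ∈ Finset.range N, ((2 : ℝ)⁻¹ ^ k * W k) ^ 2 * n2 (op (psi V k) g) ≤ Eg)
    (hEf : ∀ N, ∑ k ∈ Finset.range N, (W k) ^ 2 * n2 (op (psi V k) f) ≤ Ef) (N : ℕ) :
    n2 (Rc a (op (chk V (N + 2)) f) (op (chk V (N + 4)) g)) ≤
      cAbs V A B q * (L ^ 2 * Eg + U ^ 2 * Ef) := by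
  have hA := H.A0; have hB := H.B1
  have q' : 0 < (1 - q)⁻¹ := inv_pos.2 (by linarith [H.q1])
  have hcar : 0 ≤ car2 V 7 := by
    have := carC_nonneg (V := V); unfold car2; positivity
  have hann0 : 0 ≤ annC 1 5 := by unfold annC; positivity
  have c1 : 0 ≤ cI V A B := by unfold cI; positivity
  have c2 : 0 ≤ cIIb V A B q := by unfold cIIb; positivity
  have hEg0 : 0 ≤ Eg := by simpa using hEg 0
  have hEf0 : 0 ≤ Ef := by simpa using hEf 0
  rw [decomp]
  have e : ∑ k ∈ Finset.range (N + 2 + 1), Rc a (op (psi V k) f) (op (chk V (k + 2)) g) =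
      op a (∑ k ∈ Finset.range (N + 2 + 1), pm (op (psi V k) f) (op (chk V (k + 2)) g)) -
      ∑ k ∈ Finset.range (3 + N), pm (op (psi V k) f) (op a (op (chk V (k + 2)) g)) := by
    rw [op_sum, show 3 + N = N + 2 + 1 by omega, ← Finset.sum_sub_distrib]; rfl
  rw [e]
  have t1 := termI H f g hL hf hEg (N + 2)
  have t2 := termIIa H f g hU.le hg hEf (N + 2 + 1)
  have t3 := termIIb H f g hU hg hEf N
  have t4 := n2_sub_le (op a (∑ k ∈ Finset.range (N + 2 + 1), pm (op (psi V k) f) (op (chk V (k + 2)) g)))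
      (∑ k ∈ Finset.range (3 + N), pm (op (psi V k) f) (op a (op (chk V (k + 2)) g)))
  refine (n2_add_le _ _).trans ?_
  have x1 : 0 ≤ L ^ 2 * Eg := by positivity
  have x2 : 0 ≤ U ^ 2 * Ef := by positivity
  set c3 := (cD A B q * B ^ 3) ^ 2 * (1 - q)⁻¹ * k0 (chi V) ^ 2
  have c3' : 0 ≤ c3 := by positivity
  unfold cAbs
  nlinarith [mul_nonneg c1 x2, mul_nonneg c3' x1, mul_nonneg c2 x1]

end para
end CJ

namespace CJ
open Filter Topology

section lim
variable {V : Type*} [NormedAddCommGroup V] [InnerProductSpace ℝ V]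
  [FiniteDimensional ℝ V] [MeasurableSpace V] [BorelSpace V]

lemma chk_tendsto (ξ : V) (c : ℕ) : Tendsto (fun n : ℕ => chk V (n + c) ξ) atTop (𝓝 1) := by
  obtain ⟨n, hn⟩ := pow_unbounded_of_one_lt ‖ξ‖ (one_lt_two)
  refine tendsto_const_nhds.congr' ?_
  filter_upwards [eventually_ge_atTop n] with m hm
  exact (chk_one (hn.le.trans (pow_le_pow_right₀ (by norm_num) (by omega)))).symm

lemma finv_tendsto {F : ℕ → V → ℂ} {G : V → ℂ} {bd : V → ℝ} (hc : ∀ n, Continuous (F n))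
    (hb : Integrable bd) (hF : ∀ n, ∀ᵐ ξ, ‖F n ξ‖ ≤ bd ξ)
    (hl : ∀ ξ, Tendsto (fun n => F n ξ) atTop (𝓝 (G ξ))) (x : V) :
    Tendsto (fun n => 𝓕⁻ (F n) x) atTop (𝓝 (𝓕⁻ G x)) := by
  simp only [Real.fourierInv_eq']
  refine tendsto_integral_of_dominated_convergence bd (fun n => ?_) hb (fun n => ?_) ?_
  · refine Continuous.aestronglyMeasurable ?_
    have := hc n
    fun_prop
  · filter_upwards [hF n] with ξ h
    rw [norm_smul]
    have : ‖Complex.exp (((2 * Real.pi * inner ℝ ξ x : ℝ) : ℂ) * Complex.I)‖ = 1 :=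
      Complex.norm_exp_ofReal_mul_I _
    rw [this, one_mul]; exact h
  · filter_upwards with ξ
    exact (hl ξ).const_smul _

lemma int_poly (p : ℕ) (g : 𝓢(V, ℂ)) : Integrable (fun ξ => (1 + ‖ξ‖) ^ p * ‖g ξ‖) := by
  have h0 := g.integrable.norm (μ := volume)
  have h1 := g.integrable_pow_mul volume p
  refine ((h0.add h1).const_mul (2 ^ (p - 1))).mono' ?_ ?_
  · exact Continuous.aestronglyMeasurable (by have := g.continuous; fun_prop)
  · filter_upwards with ξ
    rw [Real.norm_of_nonneg (by positivity)]
    have := add_pow_le (zero_le_one (α := ℝ)) (norm_nonneg ξ) p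
    calc _ ≤ (2 ^ (p - 1) * (1 ^ p + ‖ξ‖ ^ p)) * ‖g ξ‖ := by gcongr
      _ = _ := by simp [one_pow]; ring

lemma chk_norm' (k : ℕ) (ξ : V) : ‖chk V k ξ‖ ≤ 1 := chk_norm ..

variable {w : V → ℂ} {p : ℕ} {Cw : ℝ} {b : ℕ → 𝓢(V, ℂ)}

lemma aN_apply (hb : ∀ j ξ, b j ξ = w ξ * psi V j ξ) (M : ℕ) (ξ : V) :
    (∑ j ∈ Finset.range (M + 1), b j) ξ = w ξ * chk V M ξ := by
  rw [← psi_sum, sum_apply, sum_apply, Finset.mul_sum]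
  exact Finset.sum_congr rfl fun j _ => hb j ξ

lemma Rc_tendsto (hgr : ∀ ξ, ‖w ξ‖ ≤ Cw * (1 + ‖ξ‖) ^ p)
    (hb : ∀ j ξ, b j ξ = w ξ * psi V j ξ) (f g : 𝓢(V, ℂ)) (x : V) :
    Tendsto (fun n => Rc (∑ j ∈ Finset.range (n + 1), b j) (op (chk V (n + 2)) f) (op (chk V (n + 4)) g) x)
      atTop (𝓝 (𝓕⁻ (fun ξ => w ξ * 𝓕 (fun y => f y * g y) ξ) x -
        f x * 𝓕⁻ (fun ξ => w ξ * 𝓕 (⇑g) ξ) x)) := by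
  have hCw : 0 ≤ Cw := by
    have := (norm_nonneg _).trans (hgr 0); simpa using this
  have ha : ∀ n ξ, ‖(∑ j ∈ Finset.range (n + 1), b j) ξ‖ ≤ Cw * (1 + ‖ξ‖) ^ p := by
    intro n ξ
    rw [aN_apply hb, norm_mul]
    calc _ ≤ Cw * (1 + ‖ξ‖) ^ p * 1 := by
          have := hgr ξ; have := chk_norm' n ξ; gcongr
      _ = _ := mul_one _
  have hal : ∀ ξ, Tendsto (fun n => (∑ j ∈ Finset.range (n + 1), b j) ξ) atTop (𝓝 (w ξ)) := by
    intro ξ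
    simp only [aN_apply hb]
    simpa using (chk_tendsto ξ 0).const_mul (w ξ)
  have hop : ∀ (c : ℕ) (h : 𝓢(V, ℂ)) (ξ : V), Tendsto (fun n => 𝓕 (op (chk V (n + c)) h) ξ) atTop (𝓝 (𝓕 h ξ)) := by
    intro c h ξ
    simp only [fourier_op_apply]
    simpa using (chk_tendsto ξ c).mul_const (𝓕 h ξ)
  have hopb : ∀ (c : ℕ) (h : 𝓢(V, ℂ)) (ξ : V), ‖𝓕 (op (chk V c) h) ξ‖ ≤ ‖𝓕 h ξ‖ := by
    intro c h ξ
    rw [fourier_op_apply, norm_mul]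
    exact mul_le_of_le_one_left (norm_nonneg _) (chk_norm' _ _)
  simp only [Rc, sub_apply, pm_apply]
  refine Tendsto.sub ?_ (Tendsto.mul ?_ ?_)
  · simp only [op_apply_fun]
    have e : (𝓕 (fun y => f y * g y)) = ⇑(𝓕 (pm f g) : 𝓢(V, ℂ)) := by
      rw [fourier_coe]; rfl
    rw [e]
    set L := ContinuousLinearMap.mul ℝ ℝ
    have i1 := int_poly p (𝓕 f)
    have i2 := int_poly p (𝓕 g)
    refine finv_tendsto (fun n => ((SchwartzMap.continuous _).mul (SchwartzMap.continuous _)))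
      ((i1.integrable_convolution L i2).const_mul Cw) (fun n => ?_) (fun ξ => ?_) x
    · filter_upwards [i1.ae_convolution_exists L i2] with ζ hζ
      rw [Pi.mul_apply, norm_mul, fourier_pm]
      have hi : Integrable (fun η => (1 + ‖η‖) ^ p * ‖𝓕 f η‖ * ((1 + ‖ζ - η‖) ^ p * ‖𝓕 g (ζ - η)‖)) := hζ
      calc _ ≤ (Cw * (1 + ‖ζ‖) ^ p) * ∫ η, ‖𝓕 (op (chk V (n + 2)) f) η * 𝓕 (op (chk V (n + 4)) g) (ζ - η)‖ := by
            have := ha n ζ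
            gcongr
            exact norm_integral_le_integral_norm _
        _ = Cw * ∫ η, (1 + ‖ζ‖) ^ p * ‖𝓕 (op (chk V (n + 2)) f) η * 𝓕 (op (chk V (n + 4)) g) (ζ - η)‖ := by
            rw [integral_const_mul]; ring
        _ ≤ Cw * ∫ η, (1 + ‖η‖) ^ p * ‖𝓕 f η‖ * ((1 + ‖ζ - η‖) ^ p * ‖𝓕 g (ζ - η)‖) := by
            refine mul_le_mul_of_nonneg_left ?_ hCw
            refine integral_mono_of_nonneg (ae_of_all _ fun η => by positivity) hi (ae_of_all _ fun η => ?_)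
            simp only [norm_mul]
            have h1 := hopb (n + 2) f η
            have h2 := hopb (n + 4) g (ζ - η)
            have h3 : 1 + ‖ζ‖ ≤ (1 + ‖η‖) * (1 + ‖ζ - η‖) := by
              have : ‖ζ‖ ≤ ‖η‖ + ‖ζ - η‖ := by
                have := norm_add_le η (ζ - η); simpa using this
              nlinarith [norm_nonneg η, norm_nonneg (ζ - η)]
            calc _ ≤ ((1 + ‖η‖) * (1 + ‖ζ - η‖)) ^ p * (‖𝓕 f η‖ * ‖𝓕 g (ζ - η)‖) := by gcongr
              _ = _ := by rw [mul_pow]; ring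
        _ = _ := rfl
    · refine (hal ξ).mul ?_
      simp only [fourier_pm]
      obtain ⟨M, hM⟩ : ∃ M, ∀ z, ‖𝓕 g z‖ ≤ M := ⟨_, fun z => SchwartzMap.norm_le_seminorm ℝ (𝓕 g) z⟩
      refine tendsto_integral_of_dominated_convergence (fun η => ‖𝓕 f η‖ * M) (fun n => ?_)
        ((𝓕 f).integrable.norm.mul_const _) (fun n => ?_) ?_
      · refine Continuous.aestronglyMeasurable ?_
        exact (SchwartzMap.continuous _).mul ((SchwartzMap.continuous _).comp (by fun_prop))
      · filter_upwards with η
        rw [norm_mul]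
        have h1 := hopb (n + 2) f η
        have h2 := (hopb (n + 4) g (ξ - η)).trans (hM _)
        gcongr
      · filter_upwards with η
        exact (hop 2 f η).mul (hop 4 g _)
  · have e : f x = 𝓕⁻ (⇑(𝓕 f : 𝓢(V, ℂ))) x := by
      rw [← fourierInv_coe]; simp
    rw [e]
    have e2 : ∀ n, op (chk V (n + 2)) f x = 𝓕⁻ (⇑(𝓕 (op (chk V (n + 2)) f) : 𝓢(V, ℂ))) x := by
      intro n; rw [← fourierInv_coe]; simp
    simp only [e2]
    exact finv_tendsto (fun n => SchwartzMap.continuous _) (𝓕 f).integrable.norm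
      (fun n => ae_of_all _ fun ξ => hopb _ _ _) (fun ξ => hop 2 f ξ) x
  · simp only [op_apply_fun]
    have e : (𝓕 (⇑g)) = ⇑(𝓕 g : 𝓢(V, ℂ)) := by rw [fourier_coe]
    rw [e]
    refine finv_tendsto (fun n => ((SchwartzMap.continuous _).mul (SchwartzMap.continuous _)))
      ((int_poly p (𝓕 g)).const_mul Cw) (fun n => ae_of_all _ fun ξ => ?_)
      (fun ξ => (hal ξ).mul (hop 4 g ξ)) x
    rw [Pi.mul_apply, norm_mul, ← mul_assoc]
    have := ha n ξ
    have := hopb (n + 4) g ξ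
    gcongr

/-- symbol hypotheses in localized form -/
structure SH (b : ℕ → 𝓢(V, ℂ)) (W : ℕ → ℝ) (A B q : ℝ) : Prop where
  A0 : 0 < A
  B1 : 1 ≤ B
  q0 : 0 < q
  q1 : q < 1
  W0 : ∀ k, 0 < W k
  K0 : ∀ j, k0 (b j) ≤ A * W j
  K1 : ∀ j, k1 (b j) ≤ A * (2 : ℝ)⁻¹ ^ j * W j
  G1 : ∀ j k, j ≤ k + 2 → W j ≤ B * W k
  G2 : ∀ j k, j ≤ k → W j ≤ B * q ^ (k - j) * W k

/-- enlarged constant -/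
def cA (V : Type*) [NormedAddCommGroup V] [InnerProductSpace ℝ V] [FiniteDimensional ℝ V]
    [MeasurableSpace V] [BorelSpace V] (A : ℝ) : ℝ := A * (k0 (chi V) + 2 * k1 (chi V) + 1)

variable {W : ℕ → ℝ} {A B q : ℝ}

lemma SH.hyp (S : SH b W A B q) (hb : ∀ j ξ, b j ξ = w ξ * psi V j ξ) (M : ℕ) :
    Hyp (∑ j ∈ Finset.range (M + 1), b j) W (cA V A) B q := by
  have hA := S.A0
  have h0 := k0_nonneg (chi V)
  have h1 := k1_nonneg (chi V)
  have e : ∀ j, pm (∑ j ∈ Finset.range (M + 1), b j) (psi V j) = pm (b j) (chk V M) := by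
    intro j; ext ξ; rw [pm_apply, pm_apply, aN_apply hb, hb]; ring
  have c1 : A * k0 (chi V) ≤ cA V A := by unfold cA; gcongr; linarith
  refine ⟨by unfold cA; positivity, S.B1, S.q0, S.q1, S.W0, fun j => ?_, fun j => ?_, S.G1, S.G2⟩
  · have hW := S.W0 j
    rw [e]
    refine (k0_pm _ _).trans ?_
    rw [k0_chk]
    calc _ ≤ A * W j * k0 (chi V) := by have := S.K0 j; gcongr
      _ = A * k0 (chi V) * W j := by ring
      _ ≤ _ := by gcongr
  · have hW := S.W0 j
    rw [e]
    by_cases hj : j ≤ M + 1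
    · refine (k1_pm _ _).trans ?_
      rw [k0_chk]
      have hk : k1 (chk V M) ≤ 2 * (2 : ℝ)⁻¹ ^ j * k1 (chi V) := by
        rw [chk, k1_dil, ut_val, abs_of_nonneg (by positivity)]
        gcongr
        have : (2 : ℝ)⁻¹ ^ (M + 1) ≤ 2⁻¹ ^ j := pow_le_pow_of_le_one (by norm_num) (by norm_num) hj
        rw [pow_succ] at this; linarith
      have K0 := S.K0 j
      have K1 := S.K1 j
      have := k0_nonneg (b j)
      have := k1_nonneg (chk V M)
      calc _ ≤ A * (2 : ℝ)⁻¹ ^ j * W j * k0 (chi V) + A * W j * (2 * (2 : ℝ)⁻¹ ^ j * k1 (chi V)) := by gcongr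
        _ = A * (k0 (chi V) + 2 * k1 (chi V)) * (2 : ℝ)⁻¹ ^ j * W j := by ring
        _ ≤ _ := by
            have c2 : A * (k0 (chi V) + 2 * k1 (chi V)) ≤ cA V A := by
              unfold cA; exact mul_le_mul_of_nonneg_left (by linarith) hA.le
            gcongr
    · have : pm (b j) (chk V M) = 0 := by
        ext ξ
        rw [pm_apply, hb]
        by_contra hne
        have n1 := right_ne_zero_of_mul (left_ne_zero_of_mul hne)
        obtain ⟨i, rfl⟩ : ∃ i, j = (M + 1 + i) + 1 := ⟨j - (M + 2), by omega⟩
        have n2 := (psi_supp n1).1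
        refine right_ne_zero_of_mul hne (chk_zero (le_trans ?_ n2))
        exact pow_le_pow_right₀ (by norm_num) (by omega)
      rw [this, k1_zero]
      unfold cA; positivity

lemma eLp_n2 (f : 𝓢(V, ℂ)) : eLpNorm f 2 volume = ENNReal.ofReal (Real.sqrt (n2 f)) := by
  rw [eLpNorm_eq_lintegral_rpow_enorm_toReal (by norm_num) (by norm_num)]
  simp only [ENNReal.toReal_ofNat]
  have : ∫⁻ x, ‖f x‖ₑ ^ (2 : ℝ) = ENNReal.ofReal (n2 f) := by
    rw [ofReal_n2]; simp
  rw [this, ENNReal.ofReal_rpow_of_nonneg (n2_nonneg f) (by norm_num), Real.sqrt_eq_rpow]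

theorem lim_thm (S : SH b W A B q) (hgr : ∀ ξ, ‖w ξ‖ ≤ Cw * (1 + ‖ξ‖) ^ p)
    (hb : ∀ j ξ, b j ξ = w ξ * psi V j ξ) (f g : 𝓢(V, ℂ))
    {U Ef L Eg : ℝ} (hU : 0 ≤ U)
    (hg : ∀ x, ‖g x‖ ≤ U) (hL : 0 ≤ L)
    (hf : ∀ x y, ‖f x - f y‖ ≤ L * ‖x - y‖)
    (hEg : ∀ N, ∑ k ∈ Finset.range N, ((2 : ℝ)⁻¹ ^ k * W k) ^ 2 * n2 (op (psi V k) g) ≤ Eg)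
    (hEf : ∀ N, ∑ k ∈ Finset.range N, (W k) ^ 2 * n2 (op (psi V k) f) ≤ Ef) :
    eLpNorm (fun x => 𝓕⁻ (fun ξ => w ξ * 𝓕 (fun y => f y * g y) ξ) x -
        f x * 𝓕⁻ (fun ξ => w ξ * 𝓕 (⇑g) ξ) x) 2 volume ≤
      ENNReal.ofReal (Real.sqrt (cAbs V (cA V A) B q * (L ^ 2 * Eg + U ^ 2 * Ef))) := by
  refine (Lp.eLpNorm_lim_le_liminf_eLpNorm
    (f := fun n => ⇑(Rc (∑ j ∈ Finset.range (n + 1), b j) (op (chk V (n + 2)) f) (op (chk V (n + 4)) g)))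
    (fun n => (SchwartzMap.continuous _).aestronglyMeasurable) _
    (ae_of_all _ fun x => Rc_tendsto hgr hb f g x)).trans ?_
  have : ∀ n, eLpNorm (⇑(Rc (∑ j ∈ Finset.range (n + 1), b j) (op (chk V (n + 2)) f) (op (chk V (n + 4)) g)))
      2 volume ≤ ENNReal.ofReal (Real.sqrt (cAbs V (cA V A) B q * (L ^ 2 * Eg + U ^ 2 * Ef))) := by
    intro n
    rw [eLp_n2]
    refine ENNReal.ofReal_le_ofReal (Real.sqrt_le_sqrt ?_)
    have ht : Tendsto (fun t : ℝ => cAbs V (cA V A) B q * (L ^ 2 * Eg + (U + t) ^ 2 * Ef)) (𝓝[>] 0)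
        (𝓝 (cAbs V (cA V A) B q * (L ^ 2 * Eg + (U + 0) ^ 2 * Ef))) := by
      refine Tendsto.mono_left ?_ nhdsWithin_le_nhds
      refine Continuous.tendsto ?_ 0
      fun_prop
    rw [add_zero] at ht
    refine ge_of_tendsto ht ?_
    filter_upwards [self_mem_nhdsWithin] with t (ht : 0 < t)
    exact abstract_thm (S.hyp hb n) f g (by positivity) (fun x => (hg x).trans (by linarith)) hL hf hEg hEf n
  refine liminf_le_of_frequently_le' ?_
  exact Frequently.of_forall this

end lim
end CJ

namespace CJ
open Filter Topology

section unif
variable {V : Type*} [NormedAddCommGroup V] [InnerProductSpace ℝ V]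
  [FiniteDimensional ℝ V] [MeasurableSpace V] [BorelSpace V]

lemma ker_semi (k n : ℕ) : ∃ (s : Finset (ℕ × ℕ)) (C : ℝ), 0 ≤ C ∧ ∀ b : 𝓢(V, ℂ),
    SchwartzMap.seminorm ℂ k n (ker b) ≤ C * (s.sup (schwartzSeminormFamily ℂ V ℂ)) b := by
  set q : Seminorm ℂ 𝓢(V, ℂ) := (SchwartzMap.seminorm ℂ k n).comp
    ((FourierTransform.fourierInvCLM ℂ 𝓢(V, ℂ) : 𝓢(V, ℂ) →L[ℂ] 𝓢(V, ℂ)) : 𝓢(V, ℂ) →ₗ[ℂ] 𝓢(V, ℂ))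
  have hq : Continuous q := by
    have h1 : Continuous (SchwartzMap.seminorm ℂ k n (E := V) (F := ℂ)) :=
      (schwartz_withSeminorms ℂ V ℂ).continuous_seminorm (k, n)
    exact h1.comp (FourierTransform.fourierInvCLM ℂ 𝓢(V, ℂ) : 𝓢(V, ℂ) →L[ℂ] 𝓢(V, ℂ)).continuous
  obtain ⟨s, C, -, h⟩ := Seminorm.bound_of_continuous (schwartz_withSeminorms ℂ V ℂ) q hq
  exact ⟨s, C, C.2, fun b => h b⟩

lemma k01_semi : ∃ (s : Finset (ℕ × ℕ)) (C : ℝ), 0 ≤ C ∧ ∀ b : 𝓢(V, ℂ), ∀ M, 0 ≤ M →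
    (∀ i ∈ s, SchwartzMap.seminorm ℂ i.1 i.2 b ≤ M) → k0 b ≤ C * M ∧ k1 b ≤ C * M := by
  classical
  set I := (volume : Measure V).integrablePower
  set J := (2 ^ I * ∫ x : V, (1 + ‖x‖) ^ (-(I : ℝ)))
  have hJ : 0 ≤ J := mul_nonneg (by positivity) (integral_nonneg fun x => by positivity)
  obtain ⟨s1, C1, hC1, h1⟩ := ker_semi (V := V) 0 0
  obtain ⟨s2, C2, hC2, h2⟩ := ker_semi (V := V) (0 + I) 0
  obtain ⟨s3, C3, hC3, h3⟩ := ker_semi (V := V) (1 + I) 0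
  refine ⟨s1 ∪ s2 ∪ s3, J * (C1 + (C2 + C3)), by positivity, fun b M hM h => ?_⟩
  have e1 := (h1 b).trans (mul_le_mul_of_nonneg_left (Seminorm.finset_sup_apply_le hM fun i hi => h i (by simp [hi])) hC1)
  have e2 := (h2 b).trans (mul_le_mul_of_nonneg_left (Seminorm.finset_sup_apply_le hM fun i hi => h i (by simp [hi])) hC2)
  have e3 := (h3 b).trans (mul_le_mul_of_nonneg_left (Seminorm.finset_sup_apply_le hM fun i hi => h i (by simp [hi])) hC3)
  have m2 : 0 ≤ C2 * M := by positivity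
  have m3 : 0 ≤ C3 * M := by positivity
  constructor
  · have := SchwartzMap.integral_pow_mul_iteratedFDeriv_le ℂ volume (ker b) 0 0
    simp only [pow_zero, one_mul, norm_iteratedFDeriv_zero] at this
    refine this.trans ?_
    rw [mul_assoc J]
    refine mul_le_mul_of_nonneg_left ?_ hJ
    linarith
  · have := SchwartzMap.integral_pow_mul_iteratedFDeriv_le ℂ volume (ker b) 1 0
    simp only [pow_one, norm_iteratedFDeriv_zero] at this
    refine this.trans ?_
    rw [mul_assoc J]
    refine mul_le_mul_of_nonneg_left ?_ hJ
    linarith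

lemma unif {P : Type*} [NormedAddCommGroup P] [NormedSpace ℝ P] (G : P × V → ℂ)
    (K : Set P) (hK : IsCompact K) (R : ℝ) (hG : ContDiff ℝ ((⊤ : ℕ∞) : WithTop ℕ∞) G)
    (hR : ∀ θ ξ, R ≤ ‖ξ‖ → G (θ, ξ) = 0) :
    ∃ A : ℝ, 0 < A ∧ ∀ θ ∈ K, ∃ b : 𝓢(V, ℂ), (∀ ξ, b ξ = G (θ, ξ)) ∧ k0 b ≤ A ∧ k1 b ≤ A := by
  obtain ⟨s, C, hC, h⟩ := k01_semi (V := V)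
  have hR' : R ≤ max R 0 := le_max_left _ _
  set R' := max R 0
  have hR0 : 0 ≤ R' := le_max_right _ _
  have hb : ∀ n : ℕ, ∃ D : ℝ, 0 ≤ D ∧ ∀ θ ∈ K, ∀ ξ : V, ‖ξ‖ ≤ R' → ‖iteratedFDeriv ℝ n G (θ, ξ)‖ ≤ D := by
    intro n
    have hc : IsCompact (K ×ˢ Metric.closedBall (0 : V) R') := hK.prod (isCompact_closedBall _ _)
    have hcont : Continuous (iteratedFDeriv ℝ n G) :=
      hG.continuous_iteratedFDeriv (by exact_mod_cast le_top)
    obtain ⟨D, hD⟩ := hc.exists_bound_of_continuousOn hcont.continuousOn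
    refine ⟨max D 0, le_max_right _ _, fun θ hθ ξ hξ => (hD (θ, ξ) ⟨hθ, by simpa using hξ⟩).trans (le_max_left _ _)⟩
  choose D hD0 hD using hb
  set inr := ContinuousLinearMap.inr ℝ P V
  set M := ∑ i ∈ s, R' ^ i.1 * (D i.2 * ‖inr‖ ^ i.2)
  have hM0 : 0 ≤ M := Finset.sum_nonneg fun i _ => by have := hD0 i.2; positivity
  refine ⟨C * M + 1, by positivity, fun θ hθ => ?_⟩
  have hcd : ContDiff ℝ ((⊤ : ℕ∞) : WithTop ℕ∞) (fun ξ : V => G (θ, ξ)) := hG.comp (by fun_prop)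
  have hcs : HasCompactSupport (fun ξ : V => G (θ, ξ)) := cpt_of_bdd R (hR θ)
  set b := hcs.toSchwartzMap hcd
  have hbf : ⇑b = fun ξ => G (θ, ξ) := rfl
  have := h b M hM0 (fun i hi => ?_)
  · exact ⟨b, fun ξ => rfl, by linarith [this.1], by linarith [this.2]⟩
  · refine SchwartzMap.seminorm_le_bound ℂ _ _ _ hM0 fun ξ => ?_
    refine le_trans ?_ (Finset.single_le_sum (f := fun i : ℕ × ℕ => R' ^ i.1 * (D i.2 * ‖inr‖ ^ i.2))
      (fun i _ => by have := hD0 i.2; positivity) hi)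
    by_cases hx : ‖ξ‖ ≤ R'
    · have : ‖iteratedFDeriv ℝ i.2 b ξ‖ ≤ D i.2 * ‖inr‖ ^ i.2 := by
        have e : ⇑b = (fun z => G (z + (θ, 0))) ∘ inr := by
          rw [hbf]; ext z; simp [inr]
        have hG' : ContDiff ℝ ((⊤ : ℕ∞) : WithTop ℕ∞) (fun z => G (z + (θ, 0))) := hG.comp (by fun_prop)
        rw [e, ContinuousLinearMap.iteratedFDeriv_comp_right inr hG' ξ (by exact_mod_cast le_top)]
        refine (ContinuousMultilinearMap.norm_compContinuousLinearMap_le _ _).trans ?_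
        rw [iteratedFDeriv_comp_add_right]
        simp only [Finset.prod_const, Finset.card_univ, Fintype.card_fin]
        gcongr
        have := hD i.2 θ hθ ξ hx
        simpa [inr] using this
      have := hD0 i.2
      gcongr
    · have : iteratedFDeriv ℝ i.2 b ξ = 0 := by
        push Not at hx
        have : ⇑b =ᶠ[𝓝 ξ] fun _ => 0 := by
          filter_upwards [(isOpen_lt continuous_const continuous_norm).mem_nhds hx] with z hz
          exact hR θ z (hR'.trans (le_of_lt hz))
        rw [(this.iteratedFDeriv ℝ i.2).eq_of_nhds]
        simp [Pi.zero_def]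
      rw [this]; simp; have := hD0 i.2; positivity

end unif
end CJ

namespace CJ
open Filter Topology

/-- entire series -/
def ser (c : ℕ → ℝ) (z : ℝ) : ℝ := ∑' n, c n * z ^ n

lemma ser_summable {c : ℕ → ℝ} (hc : ∀ n, |c n| ≤ 1 / n.factorial) (z : ℝ) :
    Summable fun n => c n * z ^ n := by
  refine (Real.summable_pow_div_factorial |z|).of_norm_bounded fun n => ?_
  rw [norm_mul, norm_pow, Real.norm_eq_abs, Real.norm_eq_abs]
  calc _ ≤ 1 / n.factorial * |z| ^ n := by gcongr; exact hc n
    _ = _ := by ring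

lemma ser_contDiff {c : ℕ → ℝ} (hc : ∀ n, |c n| ≤ 1 / n.factorial) {m : WithTop ℕ∞} :
    ContDiff ℝ m (ser c) := by
  set p := FormalMultilinearSeries.ofScalars ℝ c
  have hr : p.radius = ⊤ := by
    refine p.radius_eq_top_of_summable_norm fun r => ?_
    simp only [p, FormalMultilinearSeries.ofScalars_norm]
    refine (Real.summable_pow_div_factorial r).of_norm_bounded fun n => ?_
    rw [norm_mul, norm_norm, norm_pow, Real.norm_eq_abs, Real.norm_of_nonneg (NNReal.coe_nonneg r)]
    calc _ ≤ 1 / n.factorial * (r : ℝ) ^ n := by gcongr; exact hc n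
      _ = _ := by ring
  have h := p.hasFPowerSeriesOnBall (by rw [hr]; simp)
  have h2 : AnalyticOnNhd ℝ p.sum Set.univ := by
    have := h.analyticOnNhd
    rwa [hr, Metric.eball_top] at this
  have e : ser c = p.sum := by
    ext z
    have := FormalMultilinearSeries.ofScalars_sum_eq c z
    simp only [smul_eq_mul] at this
    rw [ser, ← this]; rfl
  rw [e]
  exact h2.contDiff

/-- coefficients -/
def cC (n : ℕ) : ℝ := 1 / (2 * n).factorial
def cS (n : ℕ) : ℝ := 1 / (2 * n + 1).factorial
def cT (n : ℕ) : ℝ := 1 / (2 * n + 2).factorial - 1 / (2 * n + 3).factorial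

lemma fac_le {a b : ℕ} (h : a ≤ b) : (1 : ℝ) / b.factorial ≤ 1 / a.factorial := by
  apply one_div_le_one_div_of_le (by exact_mod_cast a.factorial_pos)
  exact_mod_cast Nat.factorial_le h

lemma cC_le (n : ℕ) : |cC n| ≤ 1 / n.factorial := by
  rw [cC, abs_of_nonneg (by positivity)]; exact fac_le (by omega)
lemma cS_le (n : ℕ) : |cS n| ≤ 1 / n.factorial := by
  rw [cS, abs_of_nonneg (by positivity)]; exact fac_le (by omega)
lemma cT_le (n : ℕ) : |cT n| ≤ 1 / n.factorial := by
  have h1 : (1 : ℝ) / (2 * n + 3).factorial ≤ 1 / (2 * n + 2).factorial := fac_le (by omega)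
  have h2 : (1 : ℝ) / (2 * n + 2).factorial ≤ 1 / n.factorial := fac_le (by omega)
  have h3 : (0 : ℝ) ≤ 1 / (2 * n + 3).factorial := by positivity
  rw [cT, abs_of_nonneg (by linarith)]; linarith

/-- series functions -/
def Cs : ℝ → ℝ := ser cC
def Ss : ℝ → ℝ := ser cS
def Ts : ℝ → ℝ := ser cT

lemma Cs_sq (x : ℝ) : Cs (x ^ 2) = Real.cosh x := by
  rw [← (Real.hasSum_cosh x).tsum_eq, Cs, ser]
  congr 1; ext n; rw [cC, ← pow_mul]; ring
lemma Ss_sq (x : ℝ) : x * Ss (x ^ 2) = Real.sinh x := by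
  rw [← (Real.hasSum_sinh x).tsum_eq, Ss, ser, ← tsum_mul_left]
  congr 1; ext n; rw [cS, ← pow_mul, pow_succ]; ring

lemma ser_pos {c : ℕ → ℝ} (hc : ∀ n, |c n| ≤ 1 / n.factorial) (h0 : 0 < c 0) (hn : ∀ n, 0 ≤ c n) {z : ℝ}
    (hz : 0 ≤ z) : 0 < ser c z := by
  refine lt_of_lt_of_le ?_ ((ser_summable hc z).le_tsum 0 fun n _ => mul_nonneg (hn n) (by positivity))
  simpa using h0
lemma Cs_pos {z : ℝ} (hz : 0 ≤ z) : 0 < Cs z :=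
  ser_pos cC_le (by simp [cC]) (fun n => by unfold cC; positivity) hz
lemma Ss_pos {z : ℝ} (hz : 0 ≤ z) : 0 < Ss z :=
  ser_pos cS_le (by simp [cS]) (fun n => by unfold cS; positivity) hz

lemma Cs_sub (z : ℝ) : Cs z - Ss z = z * Ts z := by
  rw [Cs, Ss, Ts, ser, ser, ser, ← (ser_summable cC_le z).tsum_sub (ser_summable cS_le z)]
  have hs := (ser_summable cC_le z).sub (ser_summable cS_le z)
  rw [hs.tsum_eq_zero_add, ← tsum_mul_left]
  simp only [cC, cS, cT]
  simp
  congr 1; ext n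
  rw [show 2 * (n + 1) = 2 * n + 2 by ring, pow_succ]; ring

/-- the function x coth x as a function of x² and its root -/
def Hf (z : ℝ) : ℝ := √(Cs z / Ss z)
def H1 (z : ℝ) : ℝ := Ts z / (Ss z * (Hf z + 1))

lemma Hf_sub (z : ℝ) (hz : 0 ≤ z) : Hf z - 1 = z * H1 z := by
  have h1 := Cs_pos hz
  have h2 := Ss_pos hz
  have h3 : Hf z ^ 2 = Cs z / Ss z := Real.sq_sqrt (by positivity)
  have h4 : 0 ≤ Hf z := Real.sqrt_nonneg _
  rw [H1, ← mul_div_assoc, ← Cs_sub, eq_div_iff (by positivity)]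
  have : Hf z ^ 2 * Ss z = Cs z := by rw [h3]; field_simp
  linear_combination this

lemma Hf_cd {m : WithTop ℕ∞} {z : ℝ} (hz : 0 ≤ z) : ContDiffAt ℝ m Hf z := by
  have h1 := Cs_pos hz
  have h2 := Ss_pos hz
  exact ContDiffAt.sqrt (((ser_contDiff cC_le).contDiffAt).div ((ser_contDiff cS_le).contDiffAt) h2.ne')
    (by positivity)
lemma H1_cd {m : WithTop ℕ∞} {z : ℝ} (hz : 0 ≤ z) : ContDiffAt ℝ m H1 z := by
  have h2 := Ss_pos hz
  have h4 : 0 ≤ Hf z := Real.sqrt_nonneg _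
  exact ((ser_contDiff cT_le).contDiffAt).div
    (((ser_contDiff cS_le).contDiffAt).mul ((Hf_cd hz).add contDiffAt_const)) (by positivity)

lemma Tsymb_eq {μ r : ℝ} (hμ : 0 < μ) (hr : 0 ≤ r) : Tsymb μ r ^ (-(1 : ℝ) / 2) = Hf (μ * r ^ 2) := by
  unfold Tsymb
  have hx : μ * r ^ 2 = (√μ * r) ^ 2 := by rw [mul_pow, Real.sq_sqrt hμ.le]
  split_ifs with h
  · subst h
    have : Cs 0 = 1 := by simpa using Cs_sq 0
    have h2 : Ss 0 = 1 := by
      rw [Ss, ser, tsum_eq_single 0]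
      · simp [cS]
      · intro n hn; simp [hn]
    simp [Hf, this, h2]
  · have hr' : 0 < r := lt_of_le_of_ne hr (Ne.symm h)
    have hxp : 0 < √μ * r := by have := Real.sqrt_pos.2 hμ; positivity
    set x := √μ * r
    have hs := Ss_sq x
    have hc := Cs_sq x
    have hsp : 0 < Ss (x ^ 2) := Ss_pos (by positivity)
    have hcp : 0 < Cs (x ^ 2) := Cs_pos (by positivity)
    rw [hx, Hf, Real.tanh_eq_sinh_div_cosh, ← hs, ← hc, Real.sqrt_eq_rpow, neg_div, Real.rpow_neg (by positivity),
      ← Real.inv_rpow (by positivity)]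
    congr 1
    field_simp

/-- large-frequency form -/
def EE (ρ r : ℝ) : ℝ := expNegInvGlue (ρ / (2 * r))
def gl (ρ r : ℝ) : ℝ := √(r * ((1 + EE ρ r) / (1 - EE ρ r)))

lemma EE_nonneg (ρ r : ℝ) : 0 ≤ EE ρ r := expNegInvGlue.nonneg _
lemma EE_lt (ρ r : ℝ) : EE ρ r < 1 := by
  unfold EE expNegInvGlue
  split_ifs with h
  · norm_num
  · push Not at h
    rw [Real.exp_lt_one_iff]
    have := inv_pos.2 h; linarith

lemma Hf_large {l r : ℝ} (hl : 0 < l) (hr : 0 < r) : Hf (l ^ 2 * r ^ 2) = √l * gl l⁻¹ r := by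
  rw [Hf, gl, ← Real.sqrt_mul hl.le]
  congr 1
  rw [← mul_pow]
  set x := l * r
  have hx : 0 < x := by positivity
  have hE : EE l⁻¹ r = Real.exp (-(2 * x)) := by
    unfold EE expNegInvGlue
    rw [if_neg (by push Not; positivity)]
    congr 2; simp only [x]; field_simp
  have hs := Ss_sq x
  have hS : Ss (x ^ 2) = Real.sinh x / x := by rw [← hs]; field_simp
  rw [Cs_sq, hS, hE, Real.cosh_eq, Real.sinh_eq]
  have e2 : Real.exp (-(2 * x)) = Real.exp (-x) * Real.exp (-x) := by rw [← Real.exp_add]; ring_nf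
  have e1 : Real.exp x * Real.exp (-x) = 1 := by rw [← Real.exp_add]; simp
  rw [e2]
  have hlt : Real.exp (-x) < 1 := by rw [Real.exp_lt_one_iff]; linarith
  have hgt : 1 < Real.exp x := by rw [Real.one_lt_exp_iff]; exact hx
  have p := Real.exp_pos (-x)
  set u := Real.exp x
  set v := Real.exp (-x)
  have n1 : u - v ≠ 0 := by linarith
  have n2 : 1 - v * v ≠ 0 := by nlinarith
  have : l * r = x := rfl
  rw [← mul_assoc, this]
  have u1 : u + v = u * (1 + v * v) := by linear_combination (-v) * e1
  have u2 : u - v = u * (1 - v * v) := by linear_combination v * e1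
  have u0 : u ≠ 0 := by linarith
  rw [u1, u2]
  generalize 1 - v * v = a at *
  generalize 1 + v * v = b at *
  field_simp

lemma gl_cd {m : ℕ∞} {X : Type*} [NormedAddCommGroup X] [NormedSpace ℝ X] {f g : X → ℝ} {x : X}
    (hf : ContDiffAt ℝ m f x) (hg : ContDiffAt ℝ m g x) (h : 0 < g x) :
    ContDiffAt ℝ m (fun y => gl (f y) (g y)) x := by
  have hE : ContDiffAt ℝ m (fun y => EE (f y) (g y)) x := by
    unfold EE
    exact expNegInvGlue.contDiff.contDiffAt.comp x (hf.div (contDiffAt_const.mul hg) (by positivity))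
  have h1 := EE_nonneg (f x) (g x)
  have h2 := EE_lt (f x) (g x)
  unfold gl
  refine ContDiffAt.sqrt (hg.mul ((contDiffAt_const.add hE).div (contDiffAt_const.sub hE) (by linarith))) ?_
  have : 0 < 1 - EE (f x) (g x) := by linarith
  positivity

end CJ

namespace CJ
open Filter Topology

section kd
variable {V : Type*} [NormedAddCommGroup V] [InnerProductSpace ℝ V]
  [FiniteDimensional ℝ V] [MeasurableSpace V] [BorelSpace V]

lemma chk_apply (k : ℕ) (x : V) : chk V k x = chi V ((2 : ℝ)⁻¹ ^ k • x) := rfl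

/-- annular profile -/
def psT (V : Type*) [NormedAddCommGroup V] [InnerProductSpace ℝ V] [FiniteDimensional ℝ V]
    [MeasurableSpace V] [BorelSpace V] : 𝓢(V, ℂ) := dil (ut 1)⁻¹ (psi V 1)

lemma psT_apply (x : V) : psT V x = chi V x - chi V ((2 : ℝ) • x) := by
  rw [psT, dil_apply, psi_succ, sub_apply, chk_apply, chk_apply, smul_smul, smul_smul]
  simp [ut]

lemma psi_psT (k : ℕ) (x : V) : psi V (k + 1) x = psT V ((2 : ℝ)⁻¹ ^ (k + 1) • x) := by
  rw [psT_apply, psi_succ, sub_apply, chk_apply, chk_apply, smul_smul]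
  congr 3
  rw [pow_succ]; ring_nf

lemma psT_far {x : V} (h : 2 ≤ ‖x‖) : psT V x = 0 := by
  rw [psT_apply, chi_apply, chi_apply, chiB_zero h, chiB_zero (by rw [norm_smul]; norm_num; linarith)]; simp

lemma psT_near {x : V} (h : ‖x‖ ≤ 1 / 2) : psT V x = 0 := by
  rw [psT_apply, chi_apply, chi_apply, chiB_one (by linarith), chiB_one (by rw [norm_smul]; norm_num; linarith)]; simp

lemma psT_ev : ∀ᶠ x in 𝓝 (0 : V), psT V x = 0 := by
  filter_upwards [Metric.ball_mem_nhds (0 : V) (by norm_num : (0:ℝ) < 1/2)] with x hx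
  exact psT_near (by simpa using (Metric.mem_ball.1 hx).le)

lemma fam {P : Type*} [NormedAddCommGroup P] [NormedSpace ℝ P] (Ψ : 𝓢(V, ℂ)) (R : ℝ)
    (hΨ : ∀ x, R ≤ ‖x‖ → Ψ x = 0) (u : P × V → ℝ) (K : Set P) (hK : IsCompact K)
    (hu : ∀ θ ξ, ContDiffAt ℝ ((⊤ : ℕ∞) : WithTop ℕ∞) u (θ, ξ) ∨ ∀ᶠ η in 𝓝 ξ, Ψ η = 0) :
    ∃ A : ℝ, 0 < A ∧ ∀ θ ∈ K, ∃ b : 𝓢(V, ℂ), (∀ ξ, b ξ = ((u (θ, ξ) : ℝ) : ℂ) * Ψ ξ) ∧ k0 b ≤ A ∧ k1 b ≤ A := by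
  refine unif (fun p => ((u p : ℝ) : ℂ) * Ψ p.2) K hK R ?_ fun θ ξ h => by simp [hΨ ξ h]
  rw [contDiff_iff_contDiffAt]
  rintro ⟨θ, ξ⟩
  rcases hu θ ξ with h | h
  · have h1 : ContDiffAt ℝ ((⊤ : ℕ∞) : WithTop ℕ∞) (fun p => ((u p : ℝ) : ℂ)) (θ, ξ) :=
      Complex.ofRealCLM.contDiff.contDiffAt.comp (θ, ξ) h
    have h2 : ContDiffAt ℝ ((⊤ : ℕ∞) : WithTop ℕ∞) (fun p : P × V => Ψ p.2) (θ, ξ) :=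
      ((Ψ.smooth ⊤).comp contDiff_snd).contDiffAt
    exact h1.mul h2
  · refine (contDiffAt_const (c := (0 : ℂ))).congr_of_eventuallyEq ?_
    have : ∀ᶠ p : P × V in 𝓝 (θ, ξ), Ψ p.2 = 0 := (continuous_snd.tendsto (θ, ξ)).eventually h
    filter_upwards [this] with p hp
    simp [hp]

lemma scale (j : ℕ) (b0 : 𝓢(V, ℂ)) (c A W : ℝ) (hc : 0 ≤ c) (hA : 0 ≤ A) (hcW : c ≤ W) (h0 : k0 b0 ≤ A) (h1 : k1 b0 ≤ A) :
    ∃ b : 𝓢(V, ℂ), (∀ ξ, b ξ = (c : ℂ) * b0 ((2 : ℝ)⁻¹ ^ j • ξ)) ∧ k0 b ≤ A * W ∧ k1 b ≤ A * 2⁻¹ ^ j * W := by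
  refine ⟨(c : ℂ) • dil (ut j) b0, fun ξ => rfl, ?_, ?_⟩
  · rw [k0_smul, k0_dil, Complex.norm_real, Real.norm_of_nonneg hc, mul_comm A]
    have := k0_nonneg b0
    have hW := hc.trans hcW
    gcongr
  · rw [k1_smul, k1_dil, Complex.norm_real, Real.norm_of_nonneg hc, ut_val, abs_of_pos (by positivity),
      mul_comm A, mul_comm _ W, mul_comm _ A]
    have := k1_nonneg b0
    have hW := hc.trans hcW
    rw [mul_comm A]
    gcongr

lemma nsq_cd {P : Type*} [NormedAddCommGroup P] [NormedSpace ℝ P] (p : P × V) :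
    ContDiffAt ℝ ((⊤ : ℕ∞) : WithTop ℕ∞) (fun p : P × V => ‖p.2‖ ^ 2) p :=
  ((contDiff_norm_sq ℝ).comp contDiff_snd).contDiffAt

lemma nrm_cd {P : Type*} [NormedAddCommGroup P] [NormedSpace ℝ P] (p : P × V) (h : p.2 ≠ 0) :
    ContDiffAt ℝ ((⊤ : ℕ∞) : WithTop ℕ∞) (fun p : P × V => ‖p.2‖) p :=
  (contDiffAt_norm ℝ h).comp p contDiff_snd.contDiffAt

/-- parameter square -/
def KK : Set (ℝ × ℝ) := Set.Icc 0 1 ×ˢ Set.Icc 0 1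
lemma KK_cpt : IsCompact KK := isCompact_Icc.prod isCompact_Icc

lemma F1_b (V : Type*) [NormedAddCommGroup V] [InnerProductSpace ℝ V]
  [FiniteDimensional ℝ V] [MeasurableSpace V] [BorelSpace V] (s : ℝ) : ∃ A : ℝ, 0 < A ∧ ∀ θ ∈ KK, ∃ b : 𝓢(V, ℂ), (∀ ξ, b ξ =
    (((θ.1 ^ 2 + ‖ξ‖ ^ 2) ^ (s / 2) * Hf (θ.2 ^ 2 * ‖ξ‖ ^ 2) : ℝ) : ℂ) * psT V ξ) ∧ k0 b ≤ A ∧ k1 b ≤ A := by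
  refine fam (psT V) 2 (fun x h => psT_far h) (fun p : (ℝ × ℝ) × V => (p.1.1 ^ 2 + ‖p.2‖ ^ 2) ^ (s / 2) * Hf (p.1.2 ^ 2 * ‖p.2‖ ^ 2)) KK KK_cpt ?_
  intro θ ξ
  by_cases h : ξ = 0
  · right; rw [h]; exact psT_ev
  left
  have hn : 0 < ‖ξ‖ := norm_pos_iff.2 h
  refine ContDiffAt.mul (ContDiffAt.rpow_const_of_ne (ContDiffAt.add (by fun_prop) (nsq_cd _)) (by positivity)) ?_
  exact (Hf_cd (by positivity)).comp _ (ContDiffAt.mul (by fun_prop) (nsq_cd _))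

lemma F1'_b (V : Type*) [NormedAddCommGroup V] [InnerProductSpace ℝ V]
  [FiniteDimensional ℝ V] [MeasurableSpace V] [BorelSpace V] : ∃ A : ℝ, 0 < A ∧ ∀ θ ∈ KK, ∃ b : 𝓢(V, ℂ), (∀ ξ, b ξ =
    ((‖ξ‖ ^ 2 * H1 (θ.2 ^ 2 * ‖ξ‖ ^ 2) : ℝ) : ℂ) * psT V ξ) ∧ k0 b ≤ A ∧ k1 b ≤ A := by
  refine fam (psT V) 2 (fun x h => psT_far h) (fun p : (ℝ × ℝ) × V => ‖p.2‖ ^ 2 * H1 (p.1.2 ^ 2 * ‖p.2‖ ^ 2)) KK KK_cpt ?_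
  intro θ ξ
  left
  exact (nsq_cd _).mul ((H1_cd (by positivity)).comp _ (ContDiffAt.mul (by fun_prop) (nsq_cd _)))

lemma F0_b (V : Type*) [NormedAddCommGroup V] [InnerProductSpace ℝ V]
  [FiniteDimensional ℝ V] [MeasurableSpace V] [BorelSpace V] (s : ℝ) : ∃ A : ℝ, 0 < A ∧ ∀ θ ∈ KK, ∃ b : 𝓢(V, ℂ), (∀ ξ, b ξ =
    (((1 + ‖ξ‖ ^ 2) ^ (s / 2) * Hf (θ.2 ^ 2 * ‖ξ‖ ^ 2) : ℝ) : ℂ) * chk V 0 ξ) ∧ k0 b ≤ A ∧ k1 b ≤ A := by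
  refine fam (chk V 0) 2 (fun x h => chk_zero (by simpa using h)) (fun p : (ℝ × ℝ) × V => (1 + ‖p.2‖ ^ 2) ^ (s / 2) * Hf (p.1.2 ^ 2 * ‖p.2‖ ^ 2)) KK KK_cpt ?_
  intro θ ξ
  left
  refine ContDiffAt.mul (ContDiffAt.rpow_const_of_ne (ContDiffAt.add (by fun_prop) (nsq_cd _)) (by positivity)) ?_
  exact (Hf_cd (by positivity)).comp _ (ContDiffAt.mul (by fun_prop) (nsq_cd _))

lemma F0'_b (V : Type*) [NormedAddCommGroup V] [InnerProductSpace ℝ V]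
  [FiniteDimensional ℝ V] [MeasurableSpace V] [BorelSpace V] : ∃ A : ℝ, 0 < A ∧ ∀ θ ∈ KK, ∃ b : 𝓢(V, ℂ), (∀ ξ, b ξ =
    ((‖ξ‖ ^ 2 * H1 (θ.2 ^ 2 * ‖ξ‖ ^ 2) : ℝ) : ℂ) * chk V 0 ξ) ∧ k0 b ≤ A ∧ k1 b ≤ A := by
  refine fam (chk V 0) 2 (fun x h => chk_zero (by simpa using h)) (fun p : (ℝ × ℝ) × V => ‖p.2‖ ^ 2 * H1 (p.1.2 ^ 2 * ‖p.2‖ ^ 2)) KK KK_cpt ?_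
  intro θ ξ
  left
  exact (nsq_cd _).mul ((H1_cd (by positivity)).comp _ (ContDiffAt.mul (by fun_prop) (nsq_cd _)))

lemma F2_b (V : Type*) [NormedAddCommGroup V] [InnerProductSpace ℝ V]
  [FiniteDimensional ℝ V] [MeasurableSpace V] [BorelSpace V] (s : ℝ) : ∃ A : ℝ, 0 < A ∧ ∀ θ ∈ KK, ∃ b : 𝓢(V, ℂ), (∀ ξ, b ξ =
    (((θ.1 ^ 2 + ‖ξ‖ ^ 2) ^ (s / 2) * gl θ.2 ‖ξ‖ : ℝ) : ℂ) * psT V ξ) ∧ k0 b ≤ A ∧ k1 b ≤ A := by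
  refine fam (psT V) 2 (fun x h => psT_far h) (fun p : (ℝ × ℝ) × V => (p.1.1 ^ 2 + ‖p.2‖ ^ 2) ^ (s / 2) * gl p.1.2 ‖p.2‖) KK KK_cpt ?_
  intro θ ξ
  by_cases h : ξ = 0
  · right; rw [h]; exact psT_ev
  left
  have hn : 0 < ‖ξ‖ := norm_pos_iff.2 h
  refine ContDiffAt.mul (ContDiffAt.rpow_const_of_ne (ContDiffAt.add (by fun_prop) (nsq_cd _)) (by positivity)) ?_
  exact gl_cd (by fun_prop) (nrm_cd _ h) hn

lemma F2'_b (V : Type*) [NormedAddCommGroup V] [InnerProductSpace ℝ V]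
  [FiniteDimensional ℝ V] [MeasurableSpace V] [BorelSpace V] : ∃ A : ℝ, 0 < A ∧ ∀ θ ∈ KK, ∃ b : 𝓢(V, ℂ), (∀ ξ, b ξ =
    ((gl θ.2 ‖ξ‖ - θ.1 : ℝ) : ℂ) * psT V ξ) ∧ k0 b ≤ A ∧ k1 b ≤ A := by
  refine fam (psT V) 2 (fun x h => psT_far h) (fun p : (ℝ × ℝ) × V => gl p.1.2 ‖p.2‖ - p.1.1) KK KK_cpt ?_
  intro θ ξ
  by_cases h : ξ = 0
  · right; rw [h]; exact psT_ev
  left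
  have hn : 0 < ‖ξ‖ := norm_pos_iff.2 h
  exact (gl_cd (by fun_prop) (nrm_cd _ h) hn).sub (by fun_prop)

end kd
end CJ

namespace CJ
open Filter Topology

section ke
variable {V : Type*} [NormedAddCommGroup V] [InnerProductSpace ℝ V]
  [FiniteDimensional ℝ V] [MeasurableSpace V] [BorelSpace V]

/-- dyadic λ -/
def lam (μ : ℝ) (j : ℕ) : ℝ := √μ * 2 ^ j
lemma lam_pos {μ : ℝ} (h : 0 < μ) (j : ℕ) : 0 < lam μ j := by
  have := Real.sqrt_pos.2 h; unfold lam; positivity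
/-- weights -/
def W1 (s μ : ℝ) (j : ℕ) : ℝ := ((2 : ℝ) ^ j) ^ s * √(1 + lam μ j)
def W0 (μ : ℝ) (j : ℕ) : ℝ := lam μ j / √(1 + lam μ j)

lemma jap_s (x s : ℝ) : jap x ^ s = (1 + x ^ 2) ^ (s / 2) := by
  rw [jap, ← Real.rpow_mul (by positivity)]; congr 1; ring

lemma jap_scale (j : ℕ) (s : ℝ) (ξ : V) :
    jap ‖ξ‖ ^ s = ((2 : ℝ) ^ j) ^ s * ((2⁻¹ ^ j) ^ 2 + ‖(2 : ℝ)⁻¹ ^ j • ξ‖ ^ 2) ^ (s / 2) := by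
  have e : ((2 : ℝ) ^ j) ^ s = (((2 : ℝ) ^ j) ^ 2) ^ (s / 2) := by
    rw [← Real.rpow_natCast _ 2, ← Real.rpow_mul (by positivity)]; congr 1; push_cast; ring
  rw [jap_s, e, ← Real.mul_rpow (by positivity) (by positivity), norm_ut_smul]
  congr 1
  rw [inv_pow]; field_simp

lemma Hf_scale {μ : ℝ} (hμ : 0 < μ) (j : ℕ) (ξ : V) :
    μ * ‖ξ‖ ^ 2 = lam μ j ^ 2 * ‖(2 : ℝ)⁻¹ ^ j • ξ‖ ^ 2 := by
  rw [norm_ut_smul, lam, mul_pow, Real.sq_sqrt hμ.le]; field_simp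

lemma kern_pos (V : Type*) [NormedAddCommGroup V] [InnerProductSpace ℝ V]
    [FiniteDimensional ℝ V] [MeasurableSpace V] [BorelSpace V] (s : ℝ) :
    ∃ A : ℝ, 0 < A ∧ ∀ μ, 0 < μ → μ ≤ 1 → ∀ j, ∃ b : 𝓢(V, ℂ),
    (∀ ξ, b ξ = ((jap ‖ξ‖ ^ s * Hf (μ * ‖ξ‖ ^ 2) : ℝ) : ℂ) * psi V j ξ) ∧
    k0 b ≤ A * W1 s μ j ∧ k1 b ≤ A * 2⁻¹ ^ j * W1 s μ j := by
  obtain ⟨A0, hA0, h0⟩ := F0_b V s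
  obtain ⟨A1, hA1, h1⟩ := F1_b V s
  obtain ⟨A2, hA2, h2⟩ := F2_b V s
  refine ⟨A0 + A1 + A2, by positivity, fun μ hμ hμ1 j => ?_⟩
  have hl := lam_pos hμ j
  have hs1 : 1 ≤ √(1 + lam μ j) := Real.one_le_sqrt.2 (by linarith)
  have hs2 : √(lam μ j) ≤ √(1 + lam μ j) := Real.sqrt_le_sqrt (by linarith)
  have hp : 0 < ((2 : ℝ) ^ j) ^ s := by positivity
  have hc1 : ((2 : ℝ) ^ j) ^ s ≤ W1 s μ j := by unfold W1; nlinarith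
  rcases j with _ | k
  · have hlam : lam μ 0 = √μ := by simp [lam]
    obtain ⟨b, hb, e0, e1⟩ := h0 (0, √μ) ⟨by simp, by simpa using hμ1⟩
    obtain ⟨b', hb', f0, f1⟩ := scale 0 b 1 (A0 + A1 + A2) (W1 s μ 0) zero_le_one (by positivity)
      (by simpa using hc1) (by linarith) (by linarith)
    refine ⟨b', fun ξ => ?_, f0, f1⟩
    rw [hb', pow_zero, one_smul, hb, jap_s]
    simp only [Real.sq_sqrt hμ.le]
    simp [psi]
  · set j := k + 1
    have hε : (2⁻¹ : ℝ) ^ j ∈ Set.Icc (0 : ℝ) 1 := ⟨by positivity, pow_le_one₀ (by norm_num) (by norm_num)⟩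
    rcases le_total (lam μ j) 1 with hle | hge
    · obtain ⟨b, hb, e0, e1⟩ := h1 (2⁻¹ ^ j, lam μ j) ⟨hε, hl.le, hle⟩
      obtain ⟨b', hb', f0, f1⟩ := scale j b (((2 : ℝ) ^ j) ^ s) (A0 + A1 + A2) (W1 s μ j) hp.le (by positivity)
        hc1 (by linarith) (by linarith)
      refine ⟨b', fun ξ => ?_, f0, f1⟩
      rw [hb', hb, psi_psT, jap_scale j, Hf_scale hμ j]
      push_cast
      ring
    · obtain ⟨b, hb, e0, e1⟩ := h2 (2⁻¹ ^ j, (lam μ j)⁻¹) ⟨hε, by positivity, inv_le_one_of_one_le₀ hge⟩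
      obtain ⟨b', hb', f0, f1⟩ := scale j b (((2 : ℝ) ^ j) ^ s * √(lam μ j)) (A0 + A1 + A2) (W1 s μ j) (by positivity) (by positivity)
        (by unfold W1; gcongr) (by linarith) (by linarith)
      refine ⟨b', fun ξ => ?_, f0, f1⟩
      rw [hb', hb, psi_psT, jap_scale j, Hf_scale hμ j]
      rcases eq_or_ne ξ 0 with h | h
      · subst h
        rw [smul_zero, psT_near (by simp)]; simp
      · rw [Hf_large hl (norm_pos_iff.2 (smul_ne_zero (by positivity) h))]
        push_cast
        ring

lemma kern_zero (V : Type*) [NormedAddCommGroup V] [InnerProductSpace ℝ V]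
    [FiniteDimensional ℝ V] [MeasurableSpace V] [BorelSpace V] :
    ∃ A : ℝ, 0 < A ∧ ∀ μ, 0 < μ → μ ≤ 1 → ∀ j, ∃ b : 𝓢(V, ℂ),
    (∀ ξ, b ξ = ((Hf (μ * ‖ξ‖ ^ 2) - 1 : ℝ) : ℂ) * psi V j ξ) ∧
    k0 b ≤ A * W0 μ j ∧ k1 b ≤ A * 2⁻¹ ^ j * W0 μ j := by
  obtain ⟨A0, hA0, h0⟩ := F0'_b V
  obtain ⟨A1, hA1, h1⟩ := F1'_b V
  obtain ⟨A2, hA2, h2⟩ := F2'_b V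
  refine ⟨(A0 + A1 + A2) * 2, by positivity, fun μ hμ hμ1 j => ?_⟩
  rw [mul_assoc _ (2:ℝ), show (A0 + A1 + A2) * 2 * 2⁻¹ ^ j * W0 μ j = (A0 + A1 + A2) * 2⁻¹ ^ j * (2 * W0 μ j) by ring]
  have hl := lam_pos hμ j
  have hsp : 0 < √(1 + lam μ j) := Real.sqrt_pos.2 (by linarith)
  have hc1 : lam μ j ≤ 1 → lam μ j ^ 2 ≤ 2 * W0 μ j := by
    intro h
    have : √(1 + lam μ j) ≤ 2 := Real.sqrt_le_iff.2 ⟨by norm_num, by linarith⟩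
    rw [W0, ← mul_div_assoc, le_div_iff₀ hsp]
    calc _ ≤ lam μ j ^ 2 * 2 := by gcongr
      _ ≤ _ := by nlinarith
  have hc2 : 1 ≤ lam μ j → √(lam μ j) ≤ 2 * W0 μ j := by
    intro h
    have : √(1 + lam μ j) ≤ 2 * √(lam μ j) := Real.sqrt_le_iff.2 ⟨by positivity, by
      rw [mul_pow, Real.sq_sqrt hl.le]; linarith⟩
    rw [W0, ← mul_div_assoc, le_div_iff₀ hsp]
    calc _ ≤ √(lam μ j) * (2 * √(lam μ j)) := by gcongr
      _ = _ := by rw [mul_left_comm, Real.mul_self_sqrt hl.le]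
  rcases j with _ | k
  · have hlam : lam μ 0 = √μ := by simp [lam]
    have hle : lam μ 0 ≤ 1 := by rw [hlam]; simpa using hμ1
    obtain ⟨b, hb, e0, e1⟩ := h0 (0, lam μ 0) ⟨by simp, hl.le, hle⟩
    obtain ⟨b', hb', f0, f1⟩ := scale 0 b (lam μ 0 ^ 2) (A0 + A1 + A2) _ (by positivity) (by positivity)
      (hc1 hle) (by linarith) (by linarith)
    refine ⟨b', fun ξ => ?_, f0, f1⟩
    rw [hb', hb, Hf_sub _ (by positivity), Hf_scale hμ 0, pow_zero, one_smul]
    simp only [psi]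
    push_cast
    ring
  · set j := k + 1
    rcases le_total (lam μ j) 1 with hle | hge
    · obtain ⟨b, hb, e0, e1⟩ := h1 (0, lam μ j) ⟨by simp, hl.le, hle⟩
      obtain ⟨b', hb', f0, f1⟩ := scale j b (lam μ j ^ 2) (A0 + A1 + A2) _ (by positivity) (by positivity)
        (hc1 hle) (by linarith) (by linarith)
      refine ⟨b', fun ξ => ?_, f0, f1⟩
      rw [hb', hb, psi_psT, Hf_sub _ (by positivity), Hf_scale hμ j]
      push_cast
      ring
    · have hi : 0 ≤ √(lam μ j)⁻¹ := by positivity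
      obtain ⟨b, hb, e0, e1⟩ := h2 (√(lam μ j)⁻¹, (lam μ j)⁻¹) ⟨⟨hi, Real.sqrt_le_iff.2 ⟨zero_le_one, by rw [one_pow]; exact inv_le_one_of_one_le₀ hge⟩⟩, by positivity, inv_le_one_of_one_le₀ hge⟩
      obtain ⟨b', hb', f0, f1⟩ := scale j b (√(lam μ j)) (A0 + A1 + A2) _ (by positivity) (by positivity)
        (hc2 hge) (by linarith) (by linarith)
      refine ⟨b', fun ξ => ?_, f0, f1⟩
      rw [hb', hb, psi_psT, Hf_scale hμ j]
      rcases eq_or_ne ξ 0 with h | h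
      · subst h
        rw [smul_zero, psT_near (by simp)]; simp
      · have e : √(lam μ j) * √(lam μ j)⁻¹ = 1 := by
          rw [← Real.sqrt_mul hl.le, mul_inv_cancel₀ hl.ne', Real.sqrt_one]
        rw [Hf_large hl (norm_pos_iff.2 (smul_ne_zero (by positivity) h)), ← mul_assoc, ← Complex.ofReal_mul,
          mul_sub, e]

end ke
end CJ

namespace CJ
open Filter Topology

lemma lam_mul {μ : ℝ} {j k : ℕ} (h : j ≤ k) : lam μ j = 2⁻¹ ^ (k - j) * lam μ k := by
  obtain ⟨n, rfl⟩ := Nat.exists_eq_add_of_le h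
  simp only [lam, Nat.add_sub_cancel_left, pow_add, inv_pow]; field_simp

lemma lam_le {μ : ℝ} {j k : ℕ} (h : j ≤ k + 2) : lam μ j ≤ 4 * lam μ k := by
  have : (2 : ℝ) ^ j ≤ 2 ^ (k + 2) := pow_le_pow_right₀ (by norm_num) h
  have h0 := Real.sqrt_nonneg μ
  unfold lam
  calc _ ≤ √μ * 2 ^ (k + 2) := by gcongr
    _ = _ := by ring

lemma lam_mono {μ : ℝ} {j k : ℕ} (h : j ≤ k) : lam μ j ≤ lam μ k := by
  have h0 := Real.sqrt_nonneg μ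
  unfold lam
  gcongr; norm_num

lemma W1_pos {s μ : ℝ} (h : 0 < μ) (j : ℕ) : 0 < W1 s μ j := by
  have := lam_pos h j; unfold W1; positivity
lemma W0_pos {μ : ℝ} (h : 0 < μ) (j : ℕ) : 0 < W0 μ j := by
  have := lam_pos h j; unfold W0; positivity

lemma W1_G1 {s μ : ℝ} (hs : 0 ≤ s) (h : 0 < μ) {j k : ℕ} (hj : j ≤ k + 2) :
    W1 s μ j ≤ (2 * 4 ^ s) * W1 s μ k := by
  have h1 := lam_le (μ := μ) hj
  have h2 := lam_pos h k
  have h3 : √(1 + lam μ j) ≤ 2 * √(1 + lam μ k) := Real.sqrt_le_iff.2 ⟨by positivity, by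
    rw [mul_pow, Real.sq_sqrt (by positivity)]; linarith⟩
  have h4 : ((2 : ℝ) ^ j) ^ s ≤ 4 ^ s * ((2 : ℝ) ^ k) ^ s := by
    rw [← Real.mul_rpow (by norm_num) (by positivity)]
    refine Real.rpow_le_rpow (by positivity) ?_ hs
    calc (2 : ℝ) ^ j ≤ 2 ^ (k + 2) := pow_le_pow_right₀ (by norm_num) hj
      _ = _ := by ring
  unfold W1
  calc _ ≤ (4 ^ s * ((2 : ℝ) ^ k) ^ s) * (2 * √(1 + lam μ k)) := by gcongr
    _ = _ := by ring

lemma W1_G2 {s μ : ℝ} {j k : ℕ} (hj : j ≤ k) :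
    W1 s μ j ≤ ((2 : ℝ) ^ (-s)) ^ (k - j) * W1 s μ k := by
  have h3 : √(1 + lam μ j) ≤ √(1 + lam μ k) := Real.sqrt_le_sqrt (by linarith [lam_mono (μ := μ) hj])
  have h4 : ((2 : ℝ) ^ j) ^ s = ((2 : ℝ) ^ (-s)) ^ (k - j) * ((2 : ℝ) ^ k) ^ s := by
    obtain ⟨n, rfl⟩ := Nat.exists_eq_add_of_le hj
    rw [Nat.add_sub_cancel_left, ← Real.rpow_natCast, ← Real.rpow_natCast, ← Real.rpow_natCast,
      ← Real.rpow_mul (by norm_num), ← Real.rpow_mul (by norm_num), ← Real.rpow_mul (by norm_num),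
      ← Real.rpow_add (by norm_num)]
    congr 1; push_cast; ring
  unfold W1
  rw [h4, mul_assoc]
  gcongr

lemma W0_aux {x y c : ℝ} (hx : 0 ≤ x) (hy : 0 ≤ y) (hc : 0 ≤ c) (h : x ^ 2 * (1 + y) ≤ c ^ 2 * y ^ 2 * (1 + x)) :
    x / √(1 + x) ≤ c * (y / √(1 + y)) := by
  have h1 : 0 < √(1 + x) := Real.sqrt_pos.2 (by linarith)
  have h2 : 0 < √(1 + y) := Real.sqrt_pos.2 (by linarith)
  rw [← mul_div_assoc, div_le_div_iff₀ h1 h2]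
  refine le_of_sq_le_sq ?_ (by positivity)
  rw [mul_pow, mul_pow, mul_pow, Real.sq_sqrt (by linarith), Real.sq_sqrt (by linarith)]
  exact h

lemma W0_G1 {μ : ℝ} (h : 0 < μ) {j k : ℕ} (hj : j ≤ k + 2) : W0 μ j ≤ 4 * W0 μ k := by
  have h1 := lam_le (μ := μ) hj
  have h2 := lam_pos h k
  have h3 := lam_pos h j
  refine W0_aux h3.le h2.le (by norm_num) ?_
  nlinarith [mul_pos h2 h3, mul_le_mul h1 h1 h3.le (by positivity), mul_le_mul_of_nonneg_left h1 (mul_pos h2 h3).le]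

lemma W0_G2 {μ : ℝ} (h : 0 < μ) {j k : ℕ} (hj : j ≤ k) : W0 μ j ≤ √(2⁻¹) ^ (k - j) * W0 μ k := by
  have h1 := lam_mul (μ := μ) hj
  have h2 := lam_pos h k
  have h3 := lam_pos h j
  have hc : (√((2:ℝ)⁻¹) ^ (k - j)) ^ 2 = 2⁻¹ ^ (k - j) := by
    rw [← pow_mul, mul_comm, pow_mul, Real.sq_sqrt (by norm_num)]
  refine W0_aux h3.le h2.le (by positivity) ?_
  rw [hc, h1]
  have ht : (2:ℝ)⁻¹ ^ (k - j) ≤ 1 := pow_le_one₀ (by norm_num) (by norm_num)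
  have ht0 : 0 < (2:ℝ)⁻¹ ^ (k - j) := by positivity
  set t := (2:ℝ)⁻¹ ^ (k - j)
  set y := lam μ k
  have : t * y ^ 2 * (1 + t * y) - (t * y) ^ 2 * (1 + y) = t * y ^ 2 * (1 - t) := by ring
  have : 0 ≤ t * y ^ 2 * (1 - t) := mul_nonneg (by positivity) (by linarith)
  linarith

section
variable {V : Type*} [NormedAddCommGroup V] [InnerProductSpace ℝ V]
  [FiniteDimensional ℝ V] [MeasurableSpace V] [BorelSpace V]

lemma SH1 {s μ A : ℝ} (hs : 0 < s) (hμ : 0 < μ) (hA : 0 < A) {b : ℕ → 𝓢(V, ℂ)}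
    (h0 : ∀ j, k0 (b j) ≤ A * W1 s μ j) (h1 : ∀ j, k1 (b j) ≤ A * 2⁻¹ ^ j * W1 s μ j) :
    SH b (W1 s μ) A (2 * 4 ^ s) ((2 : ℝ) ^ (-s)) where
  A0 := hA
  B1 := by have := Real.one_le_rpow (by norm_num : (1:ℝ) ≤ 4) hs.le; linarith
  q0 := by positivity
  q1 := Real.rpow_lt_one_of_one_lt_of_neg (by norm_num) (by linarith)
  W0 := W1_pos hμ
  K0 := h0
  K1 := h1
  G1 := fun j k h => W1_G1 hs.le hμ h
  G2 := fun j k h => by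
    have := Real.one_le_rpow (by norm_num : (1:ℝ) ≤ 4) hs.le
    have h2 := W1_G2 (s := s) (μ := μ) h
    have h3 := W1_pos (s := s) hμ j
    rw [mul_assoc]
    nlinarith

lemma SH0 {μ A : ℝ} (hμ : 0 < μ) (hA : 0 < A) {b : ℕ → 𝓢(V, ℂ)}
    (h0 : ∀ j, k0 (b j) ≤ A * W0 μ j) (h1 : ∀ j, k1 (b j) ≤ A * 2⁻¹ ^ j * W0 μ j) :
    SH b (W0 μ) A 4 √(2⁻¹) where
  A0 := hA
  B1 := by norm_num
  q0 := by positivity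
  q1 := by rw [Real.sqrt_lt' one_pos]; norm_num
  W0 := W0_pos hμ
  K0 := h0
  K1 := h1
  G1 := fun j k h => W0_G1 hμ h
  G2 := fun j k h => by
    have h2 := W0_G2 hμ h
    have h3 := W0_pos hμ j
    rw [mul_assoc]
    linarith
end
end CJ

namespace CJ
open Filter Topology

lemma jap_one_le (x : ℝ) : 1 ≤ jap x := by
  unfold jap; exact Real.one_le_rpow (by nlinarith) (by norm_num)
lemma jap_sq (x : ℝ) : jap x ^ 2 = 1 + x ^ 2 := by
  rw [jap, ← Real.sqrt_eq_rpow, Real.sq_sqrt (by positivity)]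
lemma le_jap (x : ℝ) : x ≤ jap x := by
  have := jap_one_le x
  exact le_of_sq_le_sq (by rw [jap_sq]; linarith) (by linarith)

section
variable {V : Type*} [NormedAddCommGroup V] [InnerProductSpace ℝ V]
  [FiniteDimensional ℝ V] [MeasurableSpace V] [BorelSpace V]

lemma ov (N : ℕ) (ξ : V) : ∑ k ∈ Finset.range N, ‖psi V k ξ‖ ^ 2 ≤ annC 0 2 + 1 := by
  classical
  have h := ann_sum 0 2 N ξ
  have hle : ∑ k ∈ Finset.range N, ‖psi V k ξ‖ ^ 2 ≤ ∑ k ∈ Finset.range (N + 1), ‖psi V k ξ‖ ^ 2 :=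
    Finset.sum_le_sum_of_subset_of_nonneg (by simp) fun _ _ _ => by positivity
  refine hle.trans ?_
  rw [Finset.sum_range_succ']
  have h0 : ‖psi V 0 ξ‖ ^ 2 ≤ 1 := pow_le_one₀ (norm_nonneg _) (psi_norm _ _)
  refine add_le_add (le_trans (Finset.sum_le_sum fun k _ => ?_) h) h0
  split_ifs with hc
  · rw [one_pow]; exact pow_le_one₀ (norm_nonneg _) (psi_norm _ _)
  · have : psi V (k + 1) ξ = 0 := by
      by_contra hne
      exact hc (by simpa using psi_supp hne)
    simp [this]

lemma energy (h S : 𝓢(V, ℂ)) (ω : V → ℝ) (hω : ∀ ξ, 0 ≤ ω ξ) (hS : ∀ ξ, S ξ = ((ω ξ : ℝ) : ℂ) * 𝓕 h ξ) (c : ℕ → ℝ)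
    (hc0 : ∀ k, 0 ≤ c k) (M : ℝ) (hM : 0 ≤ M) (hc : ∀ k ξ, psi V k ξ ≠ 0 → c k ≤ M * ω ξ) (N : ℕ) :
    ∑ k ∈ Finset.range N, c k ^ 2 * n2 (op (psi V k) h) ≤ M ^ 2 * (annC 0 2 + 1) * n2 S := by
  have e : ∀ k, c k ^ 2 * n2 (op (psi V k) h) = ∫ ξ, c k ^ 2 * ‖𝓕 (op (psi V k) h) ξ‖ ^ 2 := by
    intro k; rw [integral_const_mul, ← n2_fourier]; rfl
  simp_rw [e]
  rw [← integral_finset_sum _ fun k _ => (integrable_sq _).const_mul _, n2, ← integral_const_mul]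
  refine integral_mono (integrable_finset_sum _ fun k _ => (integrable_sq _).const_mul _) ((integrable_sq _).const_mul _) fun ξ => ?_
  simp only
  calc _ ≤ ∑ k ∈ Finset.range N, (M ^ 2 * ‖S ξ‖ ^ 2) * ‖psi V k ξ‖ ^ 2 := by
        refine Finset.sum_le_sum fun k _ => ?_
        by_cases hp : psi V k ξ = 0
        · simp [fourier_op_apply, hp]
        rw [fourier_op_apply, hS, norm_mul, norm_mul, Complex.norm_real, Real.norm_of_nonneg (hω ξ), mul_pow, mul_pow]
        calc _ ≤ (M * ω ξ) ^ 2 * (‖psi V k ξ‖ ^ 2 * ‖𝓕 h ξ‖ ^ 2) := by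
              have := hc0 k; have := hc k ξ hp; gcongr
          _ = _ := by ring
    _ = (M ^ 2 * ‖S ξ‖ ^ 2) * ∑ k ∈ Finset.range N, ‖psi V k ξ‖ ^ 2 := by rw [Finset.mul_sum]
    _ ≤ (M ^ 2 * ‖S ξ‖ ^ 2) * (annC 0 2 + 1) := by gcongr; exact ov N ξ
    _ = _ := by ring

/-- weight symbol -/
def om (μ a : ℝ) (ξ : V) : ℝ := jap ‖ξ‖ ^ a * jap (√μ * ‖ξ‖) ^ ((1 : ℝ) / 2)

lemma om_nonneg (μ a : ℝ) (ξ : V) : 0 ≤ om μ a ξ := by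
  have := jap_one_le ‖ξ‖
  have := jap_one_le (√μ * ‖ξ‖)
  unfold om; positivity

lemma om_temp (μ a : ℝ) : (om μ a : V → ℝ).HasTemperateGrowth := by
  have e : (om μ a : V → ℝ) = fun ξ => (1 + ‖ξ‖ ^ 2) ^ (a / 2) * (1 + ‖√μ • ξ‖ ^ 2) ^ ((1 : ℝ) / 4) := by
    ext ξ
    rw [om, jap_s, jap_s, norm_smul, Real.norm_of_nonneg (Real.sqrt_nonneg _)]; norm_num
  rw [e]
  have h2 : (fun ξ : V => √μ • ξ).HasTemperateGrowth :=
    (√μ • ContinuousLinearMap.id ℝ V).hasTemperateGrowth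
  exact (Function.hasTemperateGrowth_one_add_norm_sq_rpow V (a / 2)).mul
    ((Function.hasTemperateGrowth_one_add_norm_sq_rpow V (1 / 4)).comp h2)

lemma om_S (μ a : ℝ) (h : 𝓢(V, ℂ)) : ∃ S : 𝓢(V, ℂ), (∀ ξ, S ξ = ((om μ a ξ : ℝ) : ℂ) * 𝓕 h ξ) ∧
    eLpNorm (𝓕⁻ (fun ξ => ((om μ a ξ : ℝ) : ℂ) * 𝓕 (⇑h) ξ)) 2 volume = ENNReal.ofReal √(n2 S) := by
  set S : 𝓢(V, ℂ) := smulLeftCLM ℂ (om μ a : V → ℝ) (𝓕 h)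
  have hS : ∀ ξ, S ξ = ((om μ a ξ : ℝ) : ℂ) * 𝓕 h ξ := by
    intro ξ
    rw [smulLeftCLM_apply_apply (om_temp μ a)]; simp
  refine ⟨S, hS, ?_⟩
  have : (fun ξ => ((om μ a ξ : ℝ) : ℂ) * 𝓕 (⇑h) ξ) = ⇑S := by
    ext ξ; rw [hS, ← fourier_coe]
  rw [this, ← fourierInv_coe, eLp_n2, ← n2_fourier (𝓕⁻ S), FourierTransform.fourier_fourierInv_eq]

lemma W1_om {μ : ℝ} (hμ1 : μ ≤ 1) (a : ℝ) (k : ℕ) (ξ : V) (h : psi V k ξ ≠ 0) :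
    W1 a μ k ≤ (2 * 4 ^ |a|) * om μ a ξ := by
  have j1 := jap_one_le ‖ξ‖
  have j2 := jap_one_le (√μ * ‖ξ‖)
  have j3 := le_jap (√μ * ‖ξ‖)
  have hs1 : √μ ≤ 1 := by simpa using hμ1
  have hs0 := Real.sqrt_nonneg μ
  have hlow : k = 0 ∨ (2 : ℝ) ^ k ≤ 2 * ‖ξ‖ := by
    rcases k with _ | k
    · left; rfl
    · right; rw [pow_succ]; linarith [(psi_supp h).1]
  have hlow1 : (2 : ℝ) ^ k ≤ 2 * jap ‖ξ‖ := by
    rcases hlow with h | h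
    · rw [h, pow_zero]; linarith
    · linarith [le_jap ‖ξ‖]
  have hp1 : (1 : ℝ) ≤ 2 ^ k := one_le_pow₀ (by norm_num)
  have hup : jap ‖ξ‖ ≤ 4 * 2 ^ k := by
    have h2 := psi_supp_high h
    rw [pow_succ] at h2
    refine le_of_sq_le_sq ?_ (by positivity)
    rw [jap_sq]
    have : ‖ξ‖ ^ 2 ≤ (2 ^ k * 2) ^ 2 := by gcongr
    nlinarith
  have hlam : 1 + lam μ k ≤ 4 * jap (√μ * ‖ξ‖) := by
    rcases hlow with h | h
    · simp only [h, lam, pow_zero]; linarith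
    · have : lam μ k ≤ √μ * (2 * ‖ξ‖) := by unfold lam; gcongr
      nlinarith
  have h2 : √(1 + lam μ k) ≤ 2 * jap (√μ * ‖ξ‖) ^ ((1 : ℝ) / 2) := by
    rw [← Real.sqrt_eq_rpow]
    refine Real.sqrt_le_iff.2 ⟨by positivity, ?_⟩
    rw [mul_pow, Real.sq_sqrt (by linarith)]; linarith
  have h1 : ((2 : ℝ) ^ k) ^ a ≤ 4 ^ |a| * jap ‖ξ‖ ^ a := by
    have hj : 0 < jap ‖ξ‖ := by linarith
    rcases le_total 0 a with ha | ha
    · rw [abs_of_nonneg ha, ← Real.mul_rpow (by norm_num) hj.le]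
      exact Real.rpow_le_rpow (by positivity) (by linarith) ha
    · have e : (4 : ℝ) ^ |a| = (4⁻¹) ^ a := by rw [abs_of_nonpos ha, Real.rpow_neg (by norm_num), Real.inv_rpow (by norm_num)]
      rw [e, ← Real.mul_rpow (by norm_num) hj.le]
      exact Real.rpow_le_rpow_of_nonpos (by positivity) (by linarith) ha
  unfold W1 om
  calc _ ≤ (4 ^ |a| * jap ‖ξ‖ ^ a) * (2 * jap (√μ * ‖ξ‖) ^ ((1 : ℝ) / 2)) := by gcongr
    _ = _ := by ring

lemma W0_le {μ : ℝ} (hμ : 0 < μ) (k : ℕ) : W0 μ k ≤ W1 0 μ k := by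
  have h := lam_pos hμ k
  unfold W0 W1
  rw [Real.rpow_zero, one_mul, div_le_iff₀ (by positivity), Real.mul_self_sqrt (by positivity)]
  linarith

lemma W1_sub (s μ : ℝ) (k : ℕ) : 2⁻¹ ^ k * W1 s μ k = W1 (s - 1) μ k := by
  unfold W1
  rw [Real.rpow_sub_one (by positivity), inv_pow]; field_simp

end
end CJ

namespace CJ
open Filter Topology

lemma Ts_le {z : ℝ} (hz : 0 ≤ z) : Ts z ≤ Ss z := by
  refine (ser_summable cT_le z).tsum_le_tsum (fun n => ?_) (ser_summable cS_le z)
  have h1 : (1 : ℝ) / (2 * n + 2).factorial ≤ 1 / (2 * n + 1).factorial := fac_le (by omega)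
  have h3 : (0 : ℝ) ≤ 1 / (2 * n + 3).factorial := by positivity
  have : cT n ≤ cS n := by unfold cT cS; linarith
  gcongr

lemma Hf_le {z : ℝ} (hz : 0 ≤ z) : Hf z ≤ 1 + z := by
  have h1 := Ss_pos hz
  have h2 := Cs_sub z
  have h3 := Ts_le hz
  refine Real.sqrt_le_iff.2 ⟨by linarith, ?_⟩
  rw [div_le_iff₀ h1]
  have : Cs z ≤ (1 + z) * Ss z := by nlinarith
  nlinarith [mul_nonneg hz h1.le, mul_nonneg (mul_nonneg hz hz) h1.le]

lemma Hf_nonneg (z : ℝ) : 0 ≤ Hf z := Real.sqrt_nonneg _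

section
variable {V : Type*} [NormedAddCommGroup V] [InnerProductSpace ℝ V]
  [FiniteDimensional ℝ V] [MeasurableSpace V] [BorelSpace V]

lemma Hf_gr {μ : ℝ} (hμ : 0 < μ) (hμ1 : μ ≤ 1) (ξ : V) : Hf (μ * ‖ξ‖ ^ 2) ≤ (1 + ‖ξ‖) ^ 2 := by
  refine (Hf_le (by positivity)).trans ?_
  nlinarith [norm_nonneg ξ, sq_nonneg ‖ξ‖]

lemma sym_gr {s μ : ℝ} (hs : 0 ≤ s) (hμ : 0 < μ) (hμ1 : μ ≤ 1) (ξ : V) :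
    ‖((jap ‖ξ‖ ^ s * Hf (μ * ‖ξ‖ ^ 2) : ℝ) : ℂ)‖ ≤ 1 * (1 + ‖ξ‖) ^ (⌈s⌉₊ + 2) := by
  have hn := norm_nonneg ξ
  have hj := jap_one_le ‖ξ‖
  have h0 := Hf_nonneg (μ * ‖ξ‖ ^ 2)
  have h1 := Hf_gr hμ hμ1 ξ
  have h2 : jap ‖ξ‖ ≤ 1 + ‖ξ‖ := by
    refine le_of_sq_le_sq ?_ (by positivity)
    rw [jap_sq]; nlinarith
  have h3 : jap ‖ξ‖ ^ s ≤ (1 + ‖ξ‖) ^ ⌈s⌉₊ := by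
    rw [← Real.rpow_natCast]
    calc _ ≤ (1 + ‖ξ‖) ^ s := Real.rpow_le_rpow (by linarith) h2 hs
      _ ≤ _ := Real.rpow_le_rpow_of_exponent_le (by linarith) (Nat.le_ceil s)
  rw [Complex.norm_real, Real.norm_of_nonneg (by positivity), one_mul, pow_add]
  gcongr

lemma sym0_gr {μ : ℝ} (hμ : 0 < μ) (hμ1 : μ ≤ 1) (ξ : V) :
    ‖((Hf (μ * ‖ξ‖ ^ 2) - 1 : ℝ) : ℂ)‖ ≤ 1 * (1 + ‖ξ‖) ^ 2 := by
  have hn := norm_nonneg ξ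
  have h0 := Hf_nonneg (μ * ‖ξ‖ ^ 2)
  have h1 := Hf_gr hμ hμ1 ξ
  rw [Complex.norm_real, Real.norm_eq_abs, one_mul, abs_le]
  constructor <;> nlinarith

/-- the core estimate for a symbol satisfying the hypotheses -/
lemma core_aux {b : ℕ → 𝓢(V, ℂ)} {W : ℕ → ℝ} {A B q s μ Cw : ℝ} {p : ℕ} {w : V → ℂ} (S : SH b W A B q)
    (hμ1 : μ ≤ 1) (hgr : ∀ ξ, ‖w ξ‖ ≤ Cw * (1 + ‖ξ‖) ^ p)
    (hb : ∀ j ξ, b j ξ = w ξ * psi V j ξ) (hW : ∀ k, W k ≤ W1 s μ k) (f g Sf Sg : 𝓢(V, ℂ))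
    (hSf : ∀ ξ, Sf ξ = ((om μ s ξ : ℝ) : ℂ) * 𝓕 f ξ) (hSg : ∀ ξ, Sg ξ = ((om μ (s - 1) ξ : ℝ) : ℂ) * 𝓕 g ξ)
    {U L : ℝ} (hU : 0 ≤ U) (hg : ∀ x, ‖g x‖ ≤ U) (hL : 0 ≤ L)
    (hf : ∀ x y, ‖f x - f y‖ ≤ L * ‖x - y‖) :
    eLpNorm (fun x => 𝓕⁻ (fun ξ => w ξ * 𝓕 (fun y => f y * g y) ξ) x -
        f x * 𝓕⁻ (fun ξ => w ξ * 𝓕 (⇑g) ξ) x) 2 volume ≤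
      ENNReal.ofReal √(|cAbs V (cA V A) B q| * (((2 * 4 ^ |s - 1|) ^ 2 + (2 * 4 ^ |s|) ^ 2) * (annC 0 2 + 1)) *
        (L ^ 2 * n2 Sg + U ^ 2 * n2 Sf)) := by
  have hEg := energy g Sg (om μ (s - 1)) (om_nonneg _ _) hSg (fun k => 2⁻¹ ^ k * W k)
    (fun k => by have := S.W0 k; positivity) (2 * 4 ^ |s - 1|) (by positivity) (fun k ξ h => by
      refine le_trans ?_ (W1_om hμ1 (s - 1) k ξ h)
      rw [← W1_sub]
      have := hW k
      gcongr)
  have hEf := energy f Sf (om μ s) (om_nonneg _ _) hSf W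
    (fun k => (S.W0 k).le) (2 * 4 ^ |s|) (by positivity) (fun k ξ h =>
      le_trans (hW k) (W1_om hμ1 s k ξ h))
  refine (lim_thm S hgr hb f g hU hg hL hf hEg hEf).trans ?_
  apply ENNReal.ofReal_le_ofReal
  apply Real.sqrt_le_sqrt
  have hn : 0 ≤ annC 0 2 + 1 := by unfold annC; positivity
  have n1 := n2_nonneg Sf
  have n3 := n2_nonneg Sg
  set a := (2 * (4:ℝ) ^ |s - 1|) ^ 2
  set c := (2 * (4:ℝ) ^ |s|) ^ 2
  have ha : 0 ≤ a := by positivity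
  have hc : 0 ≤ c := by positivity
  calc _ ≤ |cAbs V (cA V A) B q| * (L ^ 2 * (a * (annC 0 2 + 1) * n2 Sg) + U ^ 2 * (c * (annC 0 2 + 1) * n2 Sf)) := by
        gcongr; exact le_abs_self _
    _ ≤ |cAbs V (cA V A) B q| * (L ^ 2 * ((a + c) * (annC 0 2 + 1) * n2 Sg) + U ^ 2 * ((a + c) * (annC 0 2 + 1) * n2 Sf)) := by
        gcongr <;> linarith
    _ = _ := by ring

lemma finv_split {μ : ℝ} (hμ : 0 < μ) (hμ1 : μ ≤ 1) (h : 𝓢(V, ℂ)) (x : V) :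
    𝓕⁻ (fun ξ => ((Hf (μ * ‖ξ‖ ^ 2) : ℝ) : ℂ) * 𝓕 (⇑h) ξ) x =
      𝓕⁻ (fun ξ => ((Hf (μ * ‖ξ‖ ^ 2) - 1 : ℝ) : ℂ) * 𝓕 (⇑h) ξ) x + h x := by
  have hcH : Continuous (fun ξ : V => Hf (μ * ‖ξ‖ ^ 2)) := by
    rw [continuous_iff_continuousAt]
    intro ξ
    exact ContinuousAt.comp (f := fun ξ : V => μ * ‖ξ‖ ^ 2) (Hf_cd (m := 0) (by positivity)).continuousAt (by fun_prop)
  have hi : Integrable (fun ξ : V => ((Hf (μ * ‖ξ‖ ^ 2) - 1 : ℝ) : ℂ) * 𝓕 (⇑h) ξ) := by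
    have hF : Continuous (𝓕 (⇑h)) := by rw [← fourier_coe]; exact SchwartzMap.continuous _
    refine (int_poly 2 (𝓕 h)).mono' ?_ (ae_of_all _ fun ξ => ?_)
    · exact Continuous.aestronglyMeasurable (by fun_prop)
    · rw [norm_mul]
      have := sym0_gr hμ hμ1 ξ
      rw [one_mul] at this
      rw [← fourier_coe]
      gcongr
  have hi2 : Integrable (𝓕 (⇑h)) := by rw [← fourier_coe]; exact SchwartzMap.integrable _
  have e : (fun ξ : V => ((Hf (μ * ‖ξ‖ ^ 2) : ℝ) : ℂ) * 𝓕 (⇑h) ξ) =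
      (fun ξ => ((Hf (μ * ‖ξ‖ ^ 2) - 1 : ℝ) : ℂ) * 𝓕 (⇑h) ξ) + 𝓕 (⇑h) := by
    ext ξ; simp only [Pi.add_apply]; push_cast; ring
  have e2 : 𝓕⁻ (𝓕 (⇑h)) x = h x := by
    rw [← fourier_coe, ← fourierInv_coe, FourierTransform.fourierInv_fourier_eq]
  rw [← e2, e]
  simp only [Real.fourierInv_eq', Pi.add_apply, smul_add]
  have hb : ∀ (u : V → ℂ), Integrable u → Integrable (fun v => Complex.exp (↑(2 * Real.pi * inner ℝ v x) * Complex.I) • u v) := by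
    intro u hu
    refine (integrable_norm_iff ?_).1 ?_
    · have hc : Continuous (fun v : V => Complex.exp (↑(2 * Real.pi * inner ℝ v x) * Complex.I)) := by fun_prop
      exact hc.aestronglyMeasurable.smul hu.1
    · simp only [norm_smul, Complex.norm_exp_ofReal_mul_I, one_mul]
      exact hu.norm
  exact integral_add (hb _ hi) (hb _ hi2)

lemma core (V : Type*) [NormedAddCommGroup V] [InnerProductSpace ℝ V]
    [FiniteDimensional ℝ V] [MeasurableSpace V] [BorelSpace V] (s : ℝ) (hs : 0 ≤ s) : ∃ Q : ℝ, 0 ≤ Q ∧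
    ∀ μ, 0 < μ → μ ≤ 1 → ∀ f g Sf Sg : 𝓢(V, ℂ), 
    (∀ ξ, Sf ξ = ((om μ s ξ : ℝ) : ℂ) * 𝓕 f ξ) → (∀ ξ, Sg ξ = ((om μ (s - 1) ξ : ℝ) : ℂ) * 𝓕 g ξ) →
    ∀ U L : ℝ, 0 ≤ U → (∀ x, ‖g x‖ ≤ U) → 0 ≤ L → (∀ x y, ‖f x - f y‖ ≤ L * ‖x - y‖) →
    eLpNorm (fun x => 𝓕⁻ (fun ξ => ((jap ‖ξ‖ ^ s * Hf (μ * ‖ξ‖ ^ 2) : ℝ) : ℂ) * 𝓕 (fun y => f y * g y) ξ) x -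
        f x * 𝓕⁻ (fun ξ => ((jap ‖ξ‖ ^ s * Hf (μ * ‖ξ‖ ^ 2) : ℝ) : ℂ) * 𝓕 (⇑g) ξ) x) 2 volume ≤
      ENNReal.ofReal √(Q * (L ^ 2 * n2 Sg + U ^ 2 * n2 Sf)) := by
  have hn : 0 ≤ annC 0 2 + 1 := by unfold annC; positivity
  rcases hs.eq_or_lt with h0 | hpos
  · subst h0
    obtain ⟨A, hA, hk⟩ := kern_zero V
    refine ⟨|cAbs V (cA V A) 4 √(2⁻¹)| * (((2 * 4 ^ |(0:ℝ) - 1|) ^ 2 + (2 * 4 ^ |(0:ℝ)|) ^ 2) * (annC 0 2 + 1)), ?_,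
      fun μ hμ hμ1 f g Sf Sg hSf hSg U L hU hg hL hf => ?_⟩
    rotate_left
    · choose b hb h0 h1 using hk μ hμ hμ1
      refine le_trans (le_of_eq ?_) (core_aux (SH0 hμ hA h0 h1) hμ1 (sym0_gr hμ hμ1) hb (W0_le hμ) f g Sf Sg hSf hSg hU hg hL hf)
      congr 1
      ext x
      have e1 := finv_split hμ hμ1 (pm f g) x
      have e2 := finv_split hμ hμ1 g x
      have e3 : (fun y => f y * g y) = ⇑(pm f g) := rfl
      simp only [Real.rpow_zero, one_mul]
      rw [e3, e1, e2, pm_apply]; ring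
    · positivity
  · obtain ⟨A, hA, hk⟩ := kern_pos V s
    refine ⟨|cAbs V (cA V A) (2 * 4 ^ s) ((2 : ℝ) ^ (-s))| * (((2 * 4 ^ |s - 1|) ^ 2 + (2 * 4 ^ |s|) ^ 2) * (annC 0 2 + 1)), ?_,
      fun μ hμ hμ1 f g Sf Sg hSf hSg U L hU hg hL hf => ?_⟩
    rotate_left
    · choose b hb h0 h1 using hk μ hμ hμ1
      exact core_aux (SH1 hpos hμ hA h0 h1) hμ1 (sym_gr hs hμ hμ1) hb (fun _ => le_rfl) f g Sf Sg hSf hSg hU hg hL hf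
    · positivity

lemma sup_bd {E : Type*} [NormedAddCommGroup E] {u : V → E} (hu : Continuous u) (hm : MemLp u ⊤ volume) (x : V) :
    ‖u x‖ ≤ (eLpNorm u ⊤ volume).toReal := by
  set U := (eLpNorm u ⊤ volume).toReal
  have ho : IsOpen {x | U < ‖u x‖} := isOpen_lt continuous_const hu.norm
  have h0 : volume {x | U < ‖u x‖} = 0 := by
    have := ae_le_eLpNormEssSup (f := u) (μ := (volume : Measure V))
    have h2 : ∀ᵐ x, ¬ U < ‖u x‖ := by
      filter_upwards [this] with x hx
      rw [not_lt, ← toReal_enorm]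
      exact ENNReal.toReal_mono hm.eLpNorm_ne_top (by rwa [eLpNorm_exponent_top])
    simpa [ae_iff] using h2
  have := ho.eq_empty_of_measure_zero h0
  by_contra hc
  push Not at hc
  have : x ∈ ({x | U < ‖u x‖} : Set V) := hc
  simp_all

end

lemma sqrt_fin {Q L U a b : ℝ} (hQ : 0 ≤ Q) (hL : 0 ≤ L) (hU : 0 ≤ U) (ha : 0 ≤ a) (hb : 0 ≤ b) :
    √(Q * (L ^ 2 * a + U ^ 2 * b)) ≤ (√Q + 1) * (L * √a + √b * U) := by
  have h1 := Real.sq_sqrt ha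
  have h2 := Real.sq_sqrt hb
  have h3 := Real.sqrt_nonneg a
  have h4 := Real.sqrt_nonneg b
  have h5 := Real.sqrt_nonneg Q
  rw [Real.sqrt_mul hQ]
  have : √(L ^ 2 * a + U ^ 2 * b) ≤ L * √a + √b * U := by
    refine Real.sqrt_le_iff.2 ⟨by positivity, ?_⟩
    have : 0 ≤ (L * √a) * (√b * U) := by positivity
    calc _ = L ^ 2 * √a ^ 2 + U ^ 2 * √b ^ 2 := by rw [h1, h2]
      _ ≤ _ := by nlinarith
  gcongr
  linarith

end CJ

/-- Commutator estimate (Lemma 5.6): for `d ∈ {1,2}`, `s ≥ 0`, there is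
`C = C(s,d)`, independent of `μ ∈ (0,1]`, such that for Schwartz `f, g`,
`‖[J^s T_μ^{−1/2}(D), f] g‖_{L²} ≤ C (‖∇f‖_{L^∞} ‖J^{s−1} J_μ^{1/2} g‖_{L²}
+ ‖J^s J_μ^{1/2} f‖_{L²} ‖g‖_{L^∞})`. -/
theorem commutator_JTinv (d : ℕ) (hd : d = 1 ∨ d = 2) (s : ℝ) (hs : 0 ≤ s) :
    ∃ C : ℝ, 0 < C ∧
      ∀ μ : ℝ, 0 < μ → μ ≤ 1 →
        ∀ f g : 𝓢(EuclideanSpace ℝ (Fin d), ℂ),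
          eLpNorm
              (fun x => JTinv d μ s (fun y => f y * g y) x - f x * JTinv d μ s (⇑g) x)
              2 volume
            ≤ ENNReal.ofReal C *
              (eLpNorm (fun x => ‖fderiv ℝ (⇑f) x‖) ⊤ volume *
                  eLpNorm (JJmu d μ (s - 1) ((1 : ℝ) / 2) (⇑g)) 2 volume +
                eLpNorm (JJmu d μ s ((1 : ℝ) / 2) (⇑f)) 2 volume *
                  eLpNorm (⇑g) ⊤ volume) := by
  obtain ⟨Q, hQ, hcore⟩ := CJ.core (EuclideanSpace ℝ (Fin d)) s hs
  refine ⟨√Q + 1, by positivity, fun μ hμ hμ1 f g => ?_⟩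
  obtain ⟨Sf, hSf, eSf⟩ := CJ.om_S μ s f
  obtain ⟨Sg, hSg, eSg⟩ := CJ.om_S μ (s - 1) g
  have hgm : MemLp (⇑g) ⊤ volume := g.memLp_top
  have hfm : MemLp (fderiv ℝ (⇑f)) ⊤ volume := (SchwartzMap.fderivCLM ℝ _ ℂ f).memLp_top volume
  have hfc : Continuous (fderiv ℝ (⇑f)) := (SchwartzMap.fderivCLM ℝ _ ℂ f).continuous
  set U := (eLpNorm (⇑g) ⊤ volume).toReal with hUd
  set L := (eLpNorm (fderiv ℝ (⇑f)) ⊤ volume).toReal with hLd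
  have hL : 0 ≤ L := ENNReal.toReal_nonneg
  have hU : 0 ≤ U := ENNReal.toReal_nonneg
  have hg : ∀ x, ‖g x‖ ≤ U := CJ.sup_bd g.continuous hgm
  have hf' : ∀ x, ‖fderiv ℝ (⇑f) x‖ ≤ L := CJ.sup_bd hfc hfm
  have hf : ∀ x y, ‖f x - f y‖ ≤ L * ‖x - y‖ := fun x y =>
    Convex.norm_image_sub_le_of_norm_fderiv_le (s := Set.univ) (fun z _ => f.differentiableAt) (fun z _ => hf' z)
      convex_univ (Set.mem_univ _) (Set.mem_univ _)
  have h := hcore μ hμ hμ1 f g Sf Sg hSf hSg U L hU hg hL hf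
  have e : ∀ u, JTinv d μ s u = 𝓕⁻ (fun ξ => ((jap ‖ξ‖ ^ s * CJ.Hf (μ * ‖ξ‖ ^ 2) : ℝ) : ℂ) * 𝓕 u ξ) := by
    intro u
    unfold JTinv fmulD
    congr 1; ext ξ
    simp only []
    rw [CJ.Tsymb_eq hμ (norm_nonneg _)]
  rw [e, e]
  have eg : eLpNorm (JJmu d μ (s - 1) ((1 : ℝ) / 2) (⇑g)) 2 volume = ENNReal.ofReal √(CJ.n2 Sg) := eSg
  have ef : eLpNorm (JJmu d μ s ((1 : ℝ) / 2) (⇑f)) 2 volume = ENNReal.ofReal √(CJ.n2 Sf) := eSf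
  rw [eg, ef, eLpNorm_norm, ← ENNReal.ofReal_toReal hgm.eLpNorm_ne_top, ← ENNReal.ofReal_toReal hfm.eLpNorm_ne_top,
    ← hUd, ← hLd, ← ENNReal.ofReal_mul hL, ← ENNReal.ofReal_mul (Real.sqrt_nonneg _), ← ENNReal.ofReal_add (by positivity) (by positivity),
    ← ENNReal.ofReal_mul (by positivity)]
  exact h.trans (ENNReal.ofReal_le_ofReal (CJ.sqrt_fin hQ hL hU (CJ.n2_nonneg _) (CJ.n2_nonneg _)))
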